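/- Let D = (P,𝓑) be a symmetric 2-(v,k,λ) design with λ > 1, let G be a flag-transitive automorphism group of D, let n ≥ 3, and fix a point x ∈ P and a block B ∈ 𝓑. Then the following are equivalent: (a) G_x is isomorphic to the dihedral group D_{2n}; (b) G_B is isomorphic to D_{2n}; (c) the permutation group induced by G_x on the set D(x) of blocks through x is isomorphic to D_{2n}; (d) the permutation group G_B^B induced by G_B on B is isomorphic to D_{2n}; (e) there exist a point y and an orbit Δ of G_y on P on which G_y acts faithfully such that 𝓑 = {Δ^g : g ∈ G} and G_y ≅ D_{2n}. Moreover, if these conditions hold, then G_x and G_B are conjugate subgroups of G, the actions of G_x on D(x) and of G_B on B are faithful, and G acts imprimitively on the point set P and imprimitively on the block set 𝓑. -/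

import Mathlib

/-!
If `G_x` is dihedral, acting on the `k` blocks through `x`, then an element of `G_x` fixing three of
these blocks fixes all of them (`HF`), and an element fixing every block through a point is trivial
(`SymAct.kernel_trivial`). Hence the local actions are faithful as soon as one of the groups
`G_x`, `G_x^{D(x)}` is dihedral, which gives the equivalence between stabilizers and local actions
(`SymAct.local_iff`). A group acts on the points and on the blocks of a symmetric design with the
same numbers of fixed points (`SymAct.brauer`); together with the semiregularity of the rotation
subgroup of `G_x` on the blocks through `x` this shows that the block stabilizers are point
stabilizers (`SymAct.conj_thm`), and the remaining equivalences follow by duality.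

Suppose now that `G` is primitive on points. Sending a point to the block with the same
stabilizer turns incidence into a `G`-invariant irreflexive relation `R` on the point set, regular
of valency `k`, on which `G_x` is transitive in both directions (`RelConf`). By primitivity, the
normalizer of a nontrivial rotation subgroup of `G_x` is `G_x`. Either `k = n` or `k = 2n`, and
the possibilities are eliminated by counting involutions and their fixed points.

For `n` even, each `G_x` has a central involution `u x`. The points `y ≠ x` fixed by `u x`
form an orbit of `G_x` of size `n / 2`, and the counts leave only the parameters `(16, 6, 2)` with
`n = 6` (`RelConf.even_six`, `RelConf.even_false`).

For `n` odd, all involutions with fixed points are conjugate, and the orders of their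
centralizers and the numbers of their fixed points are tied to the parameters. The case
`k = n` is impossible (`RelConf.odd_one_false`). If `k = 2n`, then either the parameters are
`(16, 6, 2)` with `n = 3`, or `λ = 6` and the centralizers of these involutions are elementary
abelian `2`-groups (`SixConf`). In the latter case, counting the neighbours of a point that are
fixed by elements of such a centralizer gives an inequality (`SixConf.global_bound`) that is
incompatible with the equations between the parameters (`six_arith`).

For the parameters `(16, 6, 2)` the order of `G` is `3 * 2 ^ m`, so `G` has a regular normal
elementary abelian `2`-subgroup; the elements of it that move `x` into a `G_x`-orbit of length `3`
generate a subgroup of order at most `8` normalized by `G_x`, and the orbit of `x` under it is a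
nontrivial block of imprimitivity (`RelConf.no_sixteen`). Therefore
`G` is imprimitive on points, and on blocks by duality (`SymAct.not_prim`).
-/

open scoped Pointwise

/-- A group action is primitive if it is transitive and every block is trivial
(this is the usual notion of a primitive permutation group). -/
def IsPrimitiveAction (G X : Type*) [Group G] [MulAction G X] : Prop :=
  MulAction.IsPretransitive G X ∧
    ∀ B : Set X, MulAction.IsBlock G B → B.Subsingleton ∨ B = Set.univ

variable {P : Type*} [Fintype P] [DecidableEq P]

/-- `𝓑` is the block set of a (non-trivial) 2-design with parameters `(v, k, lam)`
on the point set `P`. -/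
structure IsDesign (𝓑 : Finset (Finset P)) (v k lam : ℕ) : Prop where
  card_points : Fintype.card P = v
  blocks_card : ∀ B ∈ 𝓑, B.card = k
  two_lt_k : 2 < k
  k_lt_v : k < v - 1
  lam_pos : 0 < lam
  pair_blocks : ∀ x y : P, x ≠ y → (𝓑.filter fun B => x ∈ B ∧ y ∈ B).card = lam

/-- `G` is an automorphism group of the design with block set `𝓑`:
every element of `G` maps blocks to blocks. -/
def IsAutGroup (G : Subgroup (Equiv.Perm P)) (𝓑 : Finset (Finset P)) : Prop :=
  ∀ g ∈ G, ∀ B ∈ 𝓑, g • B ∈ 𝓑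

/-- `G` acts transitively on the flags of the design with block set `𝓑`. -/
def IsFlagTransitive (G : Subgroup (Equiv.Perm P)) (𝓑 : Finset (Finset P)) : Prop :=
  ∀ B₁ ∈ 𝓑, ∀ B₂ ∈ 𝓑, ∀ x₁ ∈ B₁, ∀ x₂ ∈ B₂, ∃ g ∈ G, g • x₁ = x₂ ∧ g • B₁ = B₂

/-- `G` acts transitively on the blocks of the design with block set `𝓑`. -/
def IsBlockTransitive (G : Subgroup (Equiv.Perm P)) (𝓑 : Finset (Finset P)) : Prop :=
  ∀ B₁ ∈ 𝓑, ∀ B₂ ∈ 𝓑, ∃ g ∈ G, g • B₁ = B₂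

/-! ### Counting tools -/

section Tools
open Classical

theorem free_dvd {A α : Type*} [Group A] [Fintype A] [MulAction A α] (S : Finset α)
    (hS : ∀ a : A, ∀ s ∈ S, a • s ∈ S) (hfree : ∀ a : A, ∀ s ∈ S, a • s = s → a = 1) :
    Fintype.card A ∣ S.card := by
  induction S using Finset.strongInduction with
  | H S ih =>
    rcases S.eq_empty_or_nonempty with rfl | ⟨s, hs⟩
    · simp
    set T : Finset α := Finset.univ.image (fun a : A => a • s) with hT
    have hTS : T ⊆ S := by
      intro t ht
      obtain ⟨a, -, rfl⟩ := Finset.mem_image.1 ht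
      exact hS a s hs
    have hTc : T.card = Fintype.card A := by
      rw [hT, Finset.card_image_of_injective, Finset.card_univ]
      intro a b hab
      have : (b⁻¹ * a) • s = s := by
        rw [mul_smul]; simp only at hab; rw [hab, inv_smul_smul]
      have := hfree _ s hs this
      rw [inv_mul_eq_one] at this
      exact this.symm
    have hlt : S \ T ⊂ S := by
      refine Finset.sdiff_ssubset hTS ⟨s, Finset.mem_image.2 ⟨1, Finset.mem_univ _, one_smul _ _⟩⟩
    have h1 := ih (S \ T) hlt
      (by
        intro a t ht
        rw [Finset.mem_sdiff] at ht ⊢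
        refine ⟨hS a t ht.1, fun h => ht.2 ?_⟩
        obtain ⟨b, -, hb⟩ := Finset.mem_image.1 h
        refine Finset.mem_image.2 ⟨a⁻¹ * b, Finset.mem_univ _, ?_⟩
        rw [mul_smul, hb, inv_smul_smul])
      (fun a t ht => hfree a t (Finset.mem_sdiff.1 ht).1)
    have h2 := Finset.card_sdiff_add_card_eq_card hTS
    rw [← h2, hTc]
    exact Nat.dvd_add h1 dvd_rfl

/-- The version of `free_dvd` for a subgroup acting on a larger set. -/
theorem free_dvd_subgroup {G α : Type*} [Group G] [Finite G] [MulAction G α] (A : Subgroup G)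
    (S : Finset α)
    (hS : ∀ a ∈ A, ∀ s ∈ S, a • s ∈ S) (hfree : ∀ a ∈ A, ∀ s ∈ S, a • s = s → a = 1) :
    Nat.card A ∣ S.card := by
  have := Fintype.ofFinite A
  rw [Nat.card_eq_fintype_card]
  refine free_dvd S (fun a s hs => hS a a.2 s hs) (fun a s hs h => ?_)
  exact Subtype.ext (hfree a a.2 s hs h)

theorem card_mod_two_fixed {α : Type*} (S : Finset α) (τ : α → α) (hτ : ∀ s ∈ S, τ (τ s) = s)
    (hS : ∀ s ∈ S, τ s ∈ S) : S.card % 2 = (S.filter fun s => τ s = s).card % 2 := by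
  have h1 : ∑ s ∈ S.filter (fun s => τ s ≠ s), (1 : ZMod 2) = 0 := by
    refine Finset.sum_involution (fun a _ => τ a) ?_ ?_ ?_ ?_
    · intros; decide
    · intro a ha _; exact (Finset.mem_filter.1 ha).2
    · intro a ha
      rw [Finset.mem_filter] at ha ⊢
      exact ⟨hS a ha.1, fun h => ha.2 (by rw [hτ a ha.1] at h; exact h.symm)⟩
    · intro a ha
      exact hτ a (Finset.mem_filter.1 ha).1
  rw [Finset.sum_const, nsmul_eq_mul, mul_one, ZMod.natCast_eq_zero_iff] at h1
  have h2 := Finset.card_filter_add_card_filter_not (s := S) (fun s => τ s = s)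
  simp only [ne_eq] at h1
  omega

/-- Double counting: if every element of `S` is related to exactly `a` elements of `T`, and every
element of `T` to exactly `b` elements of `S`, then `|S| a = |T| b`. -/
theorem double_count {α β : Type*} (S : Finset α) (T : Finset β) (r : α → β → Prop) (a b : ℕ)
    (h1 : ∀ s ∈ S, (T.filter fun t => r s t).card = a)
    (h2 : ∀ t ∈ T, (S.filter fun s => r s t).card = b) : S.card * a = T.card * b := by
  have := Finset.sum_card_bipartiteAbove_eq_sum_card_bipartiteBelow (s := S) (t := T) r
  have e1 : ∑ s ∈ S, (T.bipartiteAbove r s).card = ∑ s ∈ S, a := Finset.sum_congr rfl h1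
  have e2 : ∑ t ∈ T, (S.bipartiteBelow r t).card = ∑ t ∈ T, b := Finset.sum_congr rfl h2
  rw [e1, e2] at this
  simpa using this

theorem double_count_sum {α β : Type*} (S : Finset α) (T : Finset β) (r : α → β → Prop) :
    ∑ s ∈ S, (T.filter fun t => r s t).card = ∑ t ∈ T, (S.filter fun s => r s t).card :=
  Finset.sum_card_bipartiteAbove_eq_sum_card_bipartiteBelow (s := S) (t := T) r

end Tools

section Tools2
open Classical

theorem trace_idem_nat {X : Type*} [Fintype X] (E : Matrix X X ℝ) (hE : E * E = E) :
    ∃ m : ℕ, E.trace = m := by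
  have h1 : IsIdempotentElem (Matrix.toLin' E) := by
    rw [IsIdempotentElem, Module.End.mul_eq_comp, ← Matrix.toLin'_mul, hE]
  have h2 := (LinearMap.IsIdempotentElem.isProj_range _ h1).trace
  rw [Matrix.trace_toLin'_eq] at h2
  exact ⟨_, h2⟩

/-- A `0/1`-type matrix with `A² = (k - l) I + l J` and constant row and column sums `k` has
eigenvalues `k` and `±√(k - l)`; the trace is therefore `k + d √(k - l)`, where the difference `d`
of two multiplicities adding up to `v - 1` has the parity of `v - 1`. -/
theorem trace_lemma {X : Type*} [Fintype X] (A : Matrix X X ℝ) (k l v τ : ℕ)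
    (hv : Fintype.card X = v) (hv0 : 0 < v) (hkl : l < k) (hkv : k * k + l = k + l * v)
    (hA : A * A = ((k : ℝ) - l) • (1 : Matrix X X ℝ) + (l : ℝ) • Matrix.of (fun _ _ => 1))
    (hr : ∀ x, ∑ y, A x y = k) (hc : ∀ y, ∑ x, A x y = k) (hτ : A.trace = τ) :
    ∃ d : ℤ, ((τ : ℤ) - k) ^ 2 = ((k : ℤ) - l) * d ^ 2 ∧ Even (d - (v - 1)) := by
  set J : Matrix X X ℝ := Matrix.of (fun _ _ => 1) with hJ
  have hAJ : A * J = (k : ℝ) • J := by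
    ext x y; simp [hJ, Matrix.mul_apply, hr]
  have hJA : J * A = (k : ℝ) • J := by
    ext x y; simp [hJ, Matrix.mul_apply, hc]
  have hJJ : J * J = (v : ℝ) • J := by
    ext x y; simp [hJ, Matrix.mul_apply, hv]
  have hJt : J.trace = v := by simp [hJ, Matrix.trace, hv]
  have hkl' : (0 : ℝ) < (k : ℝ) - l := by
    have : (l : ℝ) < k := by exact_mod_cast hkl
    linarith
  obtain ⟨s, hs0, hs⟩ : ∃ s : ℝ, 0 < s ∧ s * s = (k : ℝ) - l :=
    ⟨√((k : ℝ) - l), Real.sqrt_pos.2 hkl', Real.mul_self_sqrt hkl'.le⟩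
  have hv0' : (0 : ℝ) < v := by exact_mod_cast hv0
  have hkv' : (k : ℝ) * k + l = k + l * v := by exact_mod_cast hkv
  obtain ⟨c, hc'⟩ : ∃ c : ℝ, c * v = k - s := ⟨(k - s) / v, by field_simp⟩
  set B := A - c • J with hB
  have hBB : B * B = (s * s) • (1 : Matrix X X ℝ) := by
    have h0 : (l : ℝ) - 2 * c * k + c * c * v = 0 := by
      have : ((l : ℝ) - 2 * c * k + c * c * v) * v = 0 := by
        have e : ((l : ℝ) - 2 * c * k + c * c * v) * v = l * v - 2 * (c * v) * k + (c * v) * (c * v) := by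
          ring
        rw [e, hc']
        nlinarith
      rcases mul_eq_zero.1 this with h | h
      · exact h
      · exact absurd h hv0'.ne'
    have e : B * B = A * A - c • (A * J) - c • (J * A) + (c * c) • (J * J) := by
      rw [hB]
      simp only [sub_mul, mul_sub, smul_mul_assoc, mul_smul_comm]
      ext i j
      simp only [Matrix.add_apply, Matrix.sub_apply, Matrix.smul_apply, smul_eq_mul]
      ring
    rw [e, hA, hAJ, hJA, hJJ, hs]
    have e2 : ∀ M N : Matrix X X ℝ, M + (l : ℝ) • N - c • (k : ℝ) • N - c • (k : ℝ) • N
        + (c * c) • (v : ℝ) • N = M + ((l : ℝ) - 2 * c * k + c * c * v) • N := by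
      intro M N
      ext i j
      simp only [Matrix.add_apply, Matrix.sub_apply, Matrix.smul_apply, smul_eq_mul]
      ring
    rw [e2, h0, zero_smul, add_zero]
  have hBt : B.trace = τ - k + s := by
    rw [hB, Matrix.trace_sub, Matrix.trace_smul, hJt, hτ, smul_eq_mul, hc']; ring
  obtain ⟨m, hm⟩ := trace_idem_nat ((1 / 2 : ℝ) • (1 + s⁻¹ • B)) (by
    have e : ((1 / 2 : ℝ) • (1 + s⁻¹ • B)) * ((1 / 2 : ℝ) • (1 + s⁻¹ • B))
        = (1 / 4 : ℝ) • (1 + (2 * s⁻¹) • B + (s⁻¹ * s⁻¹) • (B * B)) := by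
      simp only [add_mul, mul_add, smul_mul_assoc, mul_smul_comm, smul_smul, one_mul, mul_one,
        smul_add]
      ext i j
      simp only [Matrix.add_apply, Matrix.smul_apply, smul_eq_mul]
      ring
    rw [e, hBB, smul_smul]
    have : s⁻¹ * s⁻¹ * (s * s) = 1 := by field_simp
    rw [this]
    ext i j
    simp only [Matrix.add_apply, Matrix.smul_apply, smul_eq_mul]
    ring)
  rw [Matrix.trace_smul, Matrix.trace_add, Matrix.trace_smul, Matrix.trace_one, hBt, hv] at hm
  simp only [smul_eq_mul] at hm
  have hd : (τ : ℝ) - k = s * (2 * m - v - 1) := by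
    field_simp at hm
    linarith
  refine ⟨2 * m - v - 1, ?_, ⟨m - v, by ring⟩⟩
  have : ((τ : ℝ) - k) ^ 2 = ((k : ℝ) - l) * (2 * m - v - 1) ^ 2 := by
    rw [hd, ← hs]; ring
  exact_mod_cast this

theorem subgroup_eq_top_of_card {Q : Type*} [Group Q] [Fintype Q] (H : Subgroup Q)
    (h : Fintype.card Q < 2 * Nat.card H) : H = ⊤ := by
  rw [← Subgroup.card_eq_iff_eq_top]
  obtain ⟨m, hm⟩ := Subgroup.card_subgroup_dvd_card H
  rw [Nat.card_eq_fintype_card (α := Q)] at hm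
  have : m = 1 := by
    have h0 : 0 < Fintype.card Q := Fintype.card_pos
    rcases m with _ | _ | m
    · omega
    · rfl
    · exfalso
      have : Fintype.card Q ≥ Nat.card H * 2 := by
        rw [hm]; exact Nat.mul_le_mul_left _ (by omega)
      omega
  rw [Nat.card_eq_fintype_card (α := Q), hm, this, mul_one]

/-- A finite group in which more than three quarters of the elements square to `1` is an
elementary abelian `2`-group. -/
theorem elemAb_of_three_quarters {Q : Type*} [Group Q] [Fintype Q]
    (h : 3 * Fintype.card Q < 4 * (Finset.univ.filter fun g : Q => g * g = 1).card) :
    ∀ g : Q, g * g = 1 := by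
  set S := Finset.univ.filter fun g : Q => g * g = 1 with hS
  have hcent : ∀ t ∈ S, ∀ g, t * g = g * t := by
    intro t ht
    have ht : t * t = 1 := (Finset.mem_filter.1 ht).2
    set T := S.image (fun g => t * g) with hT
    have hTc : T.card = S.card := Finset.card_image_of_injective _ (mul_right_injective t)
    have hu : (S ∪ T).card ≤ Fintype.card Q := Finset.card_le_univ _
    have hi := Finset.card_union_add_card_inter S T
    have hsub : (↑(S ∩ T) : Set Q) ⊆ (Subgroup.centralizer {t} : Set Q) := by
      intro g hg
      rw [Finset.mem_coe, Finset.mem_inter] at hg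
      obtain ⟨hg1, hg2⟩ := hg
      obtain ⟨a, ha, rfl⟩ := Finset.mem_image.1 hg2
      have ha := (Finset.mem_filter.1 ha).2
      have hg1 := (Finset.mem_filter.1 hg1).2
      rw [SetLike.mem_coe, Subgroup.mem_centralizer_singleton_iff]
      have e1 : (t * a)⁻¹ = t * a := inv_eq_of_mul_eq_one_left hg1
      have e2 : t⁻¹ = t := inv_eq_of_mul_eq_one_left ht
      have e3 : a⁻¹ = a := inv_eq_of_mul_eq_one_left ha
      rw [mul_inv_rev, e2, e3] at e1
      rw [← e1]
      rw [mul_assoc, ht, mul_one, e1, ← mul_assoc, ht, one_mul]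
    have hc : (S ∩ T).card ≤ Nat.card (Subgroup.centralizer ({t} : Set Q)) := by
      have := Set.ncard_le_ncard hsub (Set.toFinite _)
      rw [Set.ncard_coe_finset] at this
      exact this
    have htop := subgroup_eq_top_of_card (Subgroup.centralizer ({t} : Set Q)) (by omega)
    intro g
    have : g ∈ Subgroup.centralizer ({t} : Set Q) := htop ▸ Subgroup.mem_top g
    rw [Subgroup.mem_centralizer_singleton_iff] at this
    first | exact this | exact this.symm
  have hctop : Subgroup.center Q = ⊤ := by
    apply subgroup_eq_top_of_card
    have hsub : (↑S : Set Q) ⊆ (Subgroup.center Q : Set Q) := by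
      intro t ht
      rw [SetLike.mem_coe, Subgroup.mem_center_iff]
      intro g
      exact (hcent t ht g).symm
    have := Set.ncard_le_ncard hsub (Set.toFinite _)
    rw [Set.ncard_coe_finset] at this
    have h2 : S.card ≤ Nat.card (Subgroup.center Q) := this
    omega
  have hcomm : ∀ a b : Q, a * b = b * a := by
    intro a b
    have : a ∈ Subgroup.center Q := hctop ▸ Subgroup.mem_top a
    rw [Subgroup.mem_center_iff] at this
    exact (this b).symm
  let K : Subgroup Q :=
    { carrier := {g | g * g = 1}
      one_mem' := by simp
      mul_mem' := by
        intro a b ha hb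
        have ha : a * a = 1 := ha
        have hb : b * b = 1 := hb
        show a * b * (a * b) = 1
        calc a * b * (a * b) = a * (b * a) * b := by group
          _ = (a * a) * (b * b) := by rw [hcomm b a]; group
          _ = 1 := by rw [ha, hb, one_mul]
      inv_mem' := by
        intro a ha
        have ha : a * a = 1 := ha
        show a⁻¹ * a⁻¹ = 1
        rw [← mul_inv_rev, ha, inv_one] }
  have hK : K = ⊤ := by
    apply subgroup_eq_top_of_card
    have : Nat.card K = S.card := by
      rw [← Set.ncard_coe_finset]
      show Set.ncard (K : Set Q) = _
      congr 1
      ext g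
      simp [hS, K]
    omega
  intro g
  have : g ∈ K := hK ▸ Subgroup.mem_top g
  exact this

end Tools2

/-! ### Dihedral groups through their rotation subgroup -/

/-- `H` is a group with a cyclic subgroup `C` of index at most two outside which every element
squares to `1`. This property is inherited by homomorphic images of dihedral groups. -/
structure IsWDih {G : Type*} [Group G] (H C : Subgroup G) : Prop where
  le : C ≤ H
  cyc : IsCyclic C
  inv : ∀ s ∈ H, s ∉ C → s * s = 1
  mul : ∀ s ∈ H, s ∉ C → ∀ t ∈ H, t ∉ C → s * t ∈ C

/-- `H` is a dihedral group of order `2n` with rotation subgroup `C`. -/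
structure IsDih {G : Type*} [Group G] (H C : Subgroup G) (n : ℕ) : Prop extends IsWDih H C where
  cardC : Nat.card C = n
  cardH : Nat.card H = 2 * n

namespace IsWDih

variable {G : Type*} [Group G] {H C : Subgroup G}

theorem comm (h : IsWDih H C) {a b : G} (ha : a ∈ C) (hb : b ∈ C) : a * b = b * a := by
  have := h.cyc
  let _ := IsCyclic.commGroup (α := C)
  have := mul_comm (⟨a, ha⟩ : C) ⟨b, hb⟩
  exact congrArg Subtype.val this

theorem not_mem_mul (_ : IsWDih H C) {s a : G} (hs : s ∉ C) (ha : a ∈ C) : s * a ∉ C :=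
  fun h => hs ((Subgroup.mul_mem_cancel_right C ha).1 h)

theorem mul_inv_mem (h : IsWDih H C) {s t : G} (hs : s ∈ H) (hs' : s ∉ C) (ht : t ∈ H)
    (ht' : t ∉ C) : s⁻¹ * t ∈ C :=
  h.mul _ (H.inv_mem hs) (fun h => hs' ((C.inv_mem_iff).1 h)) _ ht ht'

theorem conj (h : IsWDih H C) {s a : G} (hs : s ∈ H) (hs' : s ∉ C) (ha : a ∈ C) :
    s * a * s⁻¹ = a⁻¹ := by
  have h1 := h.inv s hs hs'
  have h2 := h.inv (s * a) (H.mul_mem hs (h.le ha)) (h.not_mem_mul hs' ha)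
  have h3 : s⁻¹ = s := inv_eq_of_mul_eq_one_left h1
  rw [h3]
  apply eq_inv_of_mul_eq_one_left
  rw [← h2]; group

theorem conj_or (h : IsWDih H C) {s a : G} (hs : s ∈ H) (ha : a ∈ C) :
    s * a * s⁻¹ = a ∨ s * a * s⁻¹ = a⁻¹ := by
  by_cases hs' : s ∈ C
  · left; rw [h.comm hs' ha]; group
  · right; exact h.conj hs hs' ha

/-- A cyclic group has at most one involution. -/
theorem invol_unique [Finite G] (h : IsWDih H C) {a b : G} (ha : a ∈ C) (hb : b ∈ C) (ha2 : a * a = 1)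
    (hb2 : b * b = 1) (ha1 : a ≠ 1) (hb1 : b ≠ 1) : a = b := by
  classical
  by_contra hab
  have := h.cyc
  have := Fintype.ofFinite C
  have h1 := IsCyclic.card_pow_eq_one_le (α := C) (n := 2) (by norm_num)
  have h2 : ({1, ⟨a, ha⟩, ⟨b, hb⟩} : Finset C) ⊆ Finset.univ.filter fun a : C => a ^ 2 = 1 := by
    intro x hx
    simp only [Finset.mem_insert, Finset.mem_singleton] at hx
    rw [Finset.mem_filter]
    refine ⟨Finset.mem_univ _, ?_⟩
    rcases hx with rfl | rfl | rfl
    · simp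
    · exact Subtype.ext (by simp [pow_two, ha2])
    · exact Subtype.ext (by simp [pow_two, hb2])
  have h3 := Finset.card_le_card h2
  rw [Finset.card_eq_three.2 ⟨1, ⟨a, ha⟩, ⟨b, hb⟩, fun e => ha1 (congrArg Subtype.val e).symm,
    fun e => hb1 (congrArg Subtype.val e).symm, fun e => hab (congrArg Subtype.val e), rfl⟩] at h3
  omega

theorem map {G' : Type*} [Group G'] (f : G →* G') (h : IsWDih H C) :
    IsWDih (H.map f) (C.map f) where
  le := Subgroup.map_mono h.le
  cyc := by
    have := h.cyc
    exact isCyclic_of_surjective (f.subgroupMap C) (f.subgroupMap_surjective C)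
  inv := by
    rintro _ ⟨s, hs, rfl⟩ hs'
    have : s ∉ C := fun e => hs' ⟨s, e, rfl⟩
    rw [← map_mul, h.inv s hs this, map_one]
  mul := by
    rintro _ ⟨s, hs, rfl⟩ hs' _ ⟨t, ht, rfl⟩ ht'
    have h1 : s ∉ C := fun e => hs' ⟨s, e, rfl⟩
    have h2 : t ∉ C := fun e => ht' ⟨t, e, rfl⟩
    exact ⟨s * t, h.mul s hs h1 t ht h2, map_mul _ _ _⟩

/-- In a transitive permutation group of dihedral type, rotations with a fixed point are trivial
and reflections fix at most two points. -/
theorem fix_three {Ω : Type*} [Finite Ω] {E C : Subgroup (Equiv.Perm Ω)} (h : IsWDih E C)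
    (htr : ∀ p q, ∃ g ∈ E, g p = q) {g : Equiv.Perm Ω} (hg : g ∈ E) {p q r : Ω} (hpq : p ≠ q)
    (hpr : p ≠ r) (hqr : q ≠ r) (hp : g p = p) (hq : g q = q) (hr : g r = r) : g = 1 := by
  have hrot : ∀ c ∈ C, ∀ p, c p = p → c = 1 := by
    intro c hc p hp
    ext q
    obtain ⟨k, hk, rfl⟩ := htr p q
    have hcp : c⁻¹ p = p := by rw [Equiv.Perm.inv_eq_iff_eq]; exact hp.symm
    rcases h.conj_or (E.inv_mem hk) hc with e | e
    · have : c * k = k * c := by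
        rw [inv_inv] at e
        calc c * k = k * (k⁻¹ * c * k) := by group
          _ = k * c := by rw [e]
      have := congrArg (fun f => f p) this
      simp only [Equiv.Perm.mul_apply, hp] at this
      exact this
    · have : c * k = k * c⁻¹ := by
        rw [inv_inv] at e
        calc c * k = k * (k⁻¹ * c * k) := by group
          _ = k * c⁻¹ := by rw [e]
      have := congrArg (fun f => f p) this
      simp only [Equiv.Perm.mul_apply, hcp] at this
      exact this
  by_cases hgC : g ∈ C
  · exact hrot g hgC p hp
  exfalso
  have key : ∀ q, g q = q → q ≠ p → ∃ c ∈ C, c p = q ∧ c * c = 1 ∧ c ≠ 1 := by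
    intro q hq hqp
    have : ∃ c ∈ C, c p = q := by
      obtain ⟨k, hk, hkp⟩ := htr p q
      by_cases hkC : k ∈ C
      · exact ⟨k, hkC, hkp⟩
      · exact ⟨k * g, h.mul k hk hkC g hg hgC, by rw [Equiv.Perm.mul_apply, hp, hkp]⟩
    obtain ⟨c, hc, hcp⟩ := this
    refine ⟨c, hc, hcp, ?_, ?_⟩
    · apply hrot _ (C.mul_mem hc hc) p
      have e := h.conj hg hgC hc
      have e2 : c * g * c = g := by
        have : g * c = c⁻¹ * g := by rw [← e]; group
        rw [mul_assoc, this]; group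
      have e3 := congrArg (fun f => f p) e2
      simp only [Equiv.Perm.mul_apply] at e3
      rw [hcp, hq, hp, ← hcp] at e3
      exact e3
    · rintro rfl
      exact hqp hcp.symm
  obtain ⟨c, hc, hcp, hc2, hc1⟩ := key q hq hpq.symm
  obtain ⟨d, hd, hdp, hd2, hd1⟩ := key r hr hpr.symm
  have := h.invol_unique hc hd hc2 hd2 hc1 hd1
  exact hqr (by rw [← hcp, ← hdp, this])

end IsWDih

/-- The subgroup generated by the elements of `H` that do not square to `1`; for a dihedral group
of order at least `6` this is the rotation subgroup, which makes that subgroup canonical. -/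
def rot {G : Type*} [Group G] (H : Subgroup G) : Subgroup G :=
  Subgroup.closure {g | g ∈ H ∧ g * g ≠ 1}

namespace IsDih

variable {G : Type*} [Group G] {H C : Subgroup G} {n : ℕ}

theorem eq_rot (h : IsDih H C n) (hn : 3 ≤ n) : C = rot H := by
  apply le_antisymm
  · have := h.cyc
    obtain ⟨c, hc⟩ := IsCyclic.exists_generator (α := C)
    have ho : orderOf c = n := by
      rw [← h.cardC]; exact orderOf_eq_card_of_forall_mem_zpowers hc
    have hcr : (c : G) ∈ rot H := by
      apply Subgroup.subset_closure
      refine ⟨h.le c.2, fun e => ?_⟩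
      have : c ^ 2 = 1 := Subtype.ext (by rw [pow_two]; exact e)
      have := orderOf_le_of_pow_eq_one (by norm_num) this
      omega
    intro g hg
    obtain ⟨m, hm⟩ := hc ⟨g, hg⟩
    have : (c : G) ^ m = g := by
      have := congrArg Subtype.val hm
      simpa using this
    rw [← this]
    exact Subgroup.zpow_mem _ hcr m
  · rw [rot, Subgroup.closure_le]
    rintro g ⟨hg, hg2⟩
    by_contra hgC
    exact hg2 (h.inv g hg hgC)

theorem map {G' : Type*} [Group G'] (f : G →* G') (hf : Function.Injective f) (h : IsDih H C n) :
    IsDih (H.map f) (C.map f) n where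
  toIsWDih := h.toIsWDih.map f
  cardC := by rw [← h.cardC]; exact Subgroup.card_map_of_injective hf
  cardH := by rw [← h.cardH]; exact Subgroup.card_map_of_injective hf

theorem of_equiv (hn : 3 ≤ n) (e : H ≃* DihedralGroup n) : IsDih H (rot H) n := by
  have : NeZero n := ⟨by omega⟩
  suffices hh : ∃ C, IsDih H C n by
    obtain ⟨C, hC⟩ := hh
    have := hC.eq_rot hn
    rwa [← this]
  let R : Subgroup (DihedralGroup n) := Subgroup.zpowers (DihedralGroup.r 1)
  have hR : ∀ i, DihedralGroup.r i ∈ R := by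
    intro i
    refine ⟨(i.val : ℤ), ?_⟩
    simp
  have hR' : ∀ i, DihedralGroup.sr i ∉ R := by
    rintro i ⟨m, hm⟩
    simp at hm
  have h0 : IsDih (⊤ : Subgroup (DihedralGroup n)) R n :=
    { le := le_top
      cyc := inferInstance
      inv := by
        rintro (i | i) - hs
        · exact absurd (hR i) hs
        · exact DihedralGroup.sr_mul_self i
      mul := by
        rintro (i | i) - hs (j | j) - ht
        · exact absurd (hR i) hs
        · exact absurd (hR i) hs
        · exact absurd (hR j) ht
        · rw [DihedralGroup.sr_mul_sr]; exact hR _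
      cardC := by
        rw [Nat.card_zpowers, DihedralGroup.orderOf_r_one]
      cardH := by
        rw [Subgroup.card_top, DihedralGroup.nat_card] }
  have h1 := h0.map (H.subtype.comp e.symm.toMonoidHom)
    (by
      intro a b hab
      exact e.symm.injective (Subtype.ext hab))
  have h2 : (⊤ : Subgroup (DihedralGroup n)).map (H.subtype.comp e.symm.toMonoidHom) = H := by
    rw [← MonoidHom.range_eq_map]
    ext g
    constructor
    · rintro ⟨a, rfl⟩; exact (e.symm a).2
    · intro hg; exact ⟨e ⟨g, hg⟩, by simp⟩
  rw [h2] at h1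
  exact ⟨_, h1⟩

theorem exists_invol (h : IsDih H C n) (hn : Even n) [Finite G] :
    ∃ u ∈ C, u * u = 1 ∧ u ≠ 1 := by
  have : Fact (Nat.Prime 2) := ⟨Nat.prime_two⟩
  obtain ⟨x, hx⟩ := exists_prime_orderOf_dvd_card' (G := C) 2 (by rw [h.cardC]; exact hn.two_dvd)
  refine ⟨x, x.2, ?_, ?_⟩
  · have := pow_orderOf_eq_one x
    rw [hx, pow_two] at this
    exact congrArg Subtype.val this
  · intro e
    have : x = 1 := Subtype.ext e
    rw [this, orderOf_one] at hx
    omega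

theorem no_invol (h : IsDih H C n) (hn : Odd n) {u : G} (hu : u ∈ C) (hu2 : u * u = 1) :
    u = 1 := by
  have h1 : (⟨u, hu⟩ : C) ^ 2 = 1 := Subtype.ext (by rw [pow_two]; exact hu2)
  have h2 := orderOf_dvd_of_pow_eq_one h1
  have h3 := orderOf_dvd_natCard (⟨u, hu⟩ : C)
  rw [h.cardC] at h3
  have h4 : Nat.Coprime 2 n := Nat.coprime_two_left.2 hn
  have h5 := Nat.eq_one_of_dvd_coprimes h4 h2 h3
  rw [orderOf_eq_one_iff] at h5
  exact congrArg Subtype.val h5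

theorem exists_refl (h : IsDih H C n) (hn : 0 < n) : ∃ s ∈ H, s ∉ C := by
  by_contra hh
  push Not at hh
  have : C = H := le_antisymm h.le hh
  have h1 := h.cardC
  rw [this, h.cardH] at h1
  omega

end IsDih

/-! ### Symmetric designs with a flag-transitive group -/

section Sym
open Classical

/-- The data of a symmetric `2-(v,k,l)` design with point set `X`, block set `Y` and incidence
relation `I`, together with a flag-transitive action of `G` which is faithful on points and on
blocks. All axioms are invariant under exchanging points and blocks. -/
structure SymAct (G X Y : Type*) [Group G] [MulAction G X] [MulAction G Y] [Fintype X] [Fintype Y]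
    (I : X → Y → Prop) (k l : ℕ) : Prop where
  inv : ∀ (g : G) x y, I x y → I (g • x) (g • y)
  card_eq : Fintype.card X = Fintype.card Y
  deg : ∀ x, (Finset.univ.filter fun y => I x y).card = k
  deg' : ∀ y, (Finset.univ.filter fun x => I x y).card = k
  pair : ∀ x x', x ≠ x' → (Finset.univ.filter fun y => I x y ∧ I x' y).card = l
  pair' : ∀ y y', y ≠ y' → (Finset.univ.filter fun x => I x y ∧ I x y').card = l
  flag : ∀ x y x' y', I x y → I x' y' → ∃ g : G, g • x = x' ∧ g • y = y'
  faith : ∀ g : G, (∀ x : X, g • x = x) → g = 1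
  faith' : ∀ g : G, (∀ y : Y, g • y = y) → g = 1
  two_lt : 2 < k
  k_lt : k + 1 < Fintype.card X
  l_gt : 1 < l
  eqn : k * k + l = k + l * Fintype.card X

/-- The incidence matrix of a symmetric design is invertible, and the inverse shows that
the dual of a symmetric design is again a symmetric design. -/
theorem incidence_inverse {X Y : Type*} [Fintype X] [Fintype Y] (I : X → Y → Prop) (k l : ℕ)
    (hc : Fintype.card X = Fintype.card Y)
    (deg : ∀ x, (Finset.univ.filter fun y => I x y).card = k)
    (pair : ∀ x x', x ≠ x' → (Finset.univ.filter fun y => I x y ∧ I x' y).card = l)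
    (hk : 0 < k) (hkl : l < k) :
    ∃ M : Matrix Y X ℚ, (Matrix.of fun x y => if I x y then (1 : ℚ) else 0) * M = 1 ∧
      M * (Matrix.of fun x y => if I x y then (1 : ℚ) else 0) = 1 ∧
      ∀ y x, M y x = (if I x y then 1 else 0) * (1 / ((k : ℚ) - l)) - l / (k * ((k : ℚ) - l)) := by
  have h1 : (k : ℚ) - l ≠ 0 := by
    have : (l : ℚ) < k := by exact_mod_cast hkl
    linarith
  have h2 : (k : ℚ) ≠ 0 := by exact_mod_cast hk.ne'
  refine ⟨Matrix.of fun y x => (if I x y then 1 else 0) * (1 / ((k : ℚ) - l)) -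
    l / (k * ((k : ℚ) - l)), ?_, ?_, fun _ _ => rfl⟩
  swap
  rw [Matrix.mul_eq_one_comm_of_card_eq _ _ _ hc.symm]
  all_goals
    ext x x'
    rw [Matrix.mul_apply]
    simp only [Matrix.of_apply, mul_sub, Finset.sum_sub_distrib, ← mul_assoc, ← Finset.sum_mul]
    have e1 : ∑ y, (if I x y then (1 : ℚ) else 0) = k := by
      rw [Finset.sum_boole, deg]
    rw [e1]
    by_cases hx : x = x'
    · subst hx
      have e2 : ∑ y, (if I x y then (1 : ℚ) else 0) * (if I x y then (1 : ℚ) else 0) = k := by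
        rw [← e1]; refine Finset.sum_congr rfl fun y _ => ?_
        split_ifs <;> simp
      rw [e2, Matrix.one_apply_eq]
      field_simp
    · have e2 : ∑ y, (if I x y then (1 : ℚ) else 0) * (if I x' y then (1 : ℚ) else 0) = l := by
        rw [← pair x x' hx, ← Finset.sum_boole]; refine Finset.sum_congr rfl fun y _ => ?_
        by_cases a : I x y <;> by_cases b : I x' y <;> simp [a, b]
      rw [e2, Matrix.one_apply_ne hx]
      field_simp
      ring

theorem dual_pair {X Y : Type*} [Fintype X] [Fintype Y] (I : X → Y → Prop) (k l : ℕ)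
    (hc : Fintype.card X = Fintype.card Y)
    (deg : ∀ x, (Finset.univ.filter fun y => I x y).card = k)
    (deg' : ∀ y, (Finset.univ.filter fun x => I x y).card = k)
    (pair : ∀ x x', x ≠ x' → (Finset.univ.filter fun y => I x y ∧ I x' y).card = l)
    (hk : 0 < k) (hkl : l < k) (y y' : Y) (hy : y ≠ y') :
    (Finset.univ.filter fun x => I x y ∧ I x y').card = l := by
  obtain ⟨M, -, hM, hM'⟩ := incidence_inverse I k l hc deg pair hk hkl
  have h1 : (k : ℚ) - l ≠ 0 := by
    have : (l : ℚ) < k := by exact_mod_cast hkl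
    linarith
  have h2 : (k : ℚ) ≠ 0 := by exact_mod_cast hk.ne'
  have h := congrFun (congrFun hM y) y'
  rw [Matrix.mul_apply, Matrix.one_apply_ne hy] at h
  simp only [hM', Matrix.of_apply, sub_mul, Finset.sum_sub_distrib, ← Finset.mul_sum] at h
  have e1 : ∑ x, (if I x y' then (1 : ℚ) else 0) = k := by
    rw [Finset.sum_boole, deg']
  have e2 : ∑ x, (if I x y then (1 : ℚ) else 0) * (1 / ((k : ℚ) - l)) * (if I x y' then 1 else 0)
      = (Finset.univ.filter fun x => I x y ∧ I x y').card * (1 / ((k : ℚ) - l)) := by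
    rw [← Finset.sum_boole, Finset.sum_mul]; refine Finset.sum_congr rfl fun x _ => ?_
    by_cases a : I x y <;> by_cases b : I x y' <;> simp [a, b]
  rw [e1, e2] at h
  field_simp at h
  have : ((Finset.univ.filter fun x => I x y ∧ I x y').card : ℚ) = l := by linarith
  exact_mod_cast this

theorem index_two {G : Type*} [Group G] [Finite G] {H C : Subgroup G} (hle : C ≤ H)
    (hc : Nat.card H = 2 * Nat.card C) :
    (∀ s ∈ H, s ∉ C → ∀ t ∈ H, t ∉ C → s * t ∈ C) ∧ ∀ s ∈ H, ∀ a ∈ C, s * a * s⁻¹ ∈ C := by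
  have hi : (C.subgroupOf H).index = 2 := by
    have h1 := Subgroup.card_mul_index (C.subgroupOf H)
    rw [Nat.card_congr (Subgroup.subgroupOfEquivOfLe hle).toEquiv, hc, mul_comm 2] at h1
    exact Nat.eq_of_mul_eq_mul_left Nat.card_pos h1
  constructor
  · intro s hs hs' t ht ht'
    have := Subgroup.mul_mem_iff_of_index_two hi (a := ⟨s, hs⟩) (b := ⟨t, ht⟩)
    simp only [Subgroup.mem_subgroupOf] at this
    exact this.2 ⟨fun h => absurd h hs', fun h => absurd h ht'⟩
  · intro s hs a ha
    have := Subgroup.normal_of_index_eq_two hi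
    have := this.conj_mem ⟨a, hle ha⟩ ha ⟨s, hs⟩
    exact this

theorem rot_conj {G X : Type*} [Group G] [MulAction G X] (g : G) (x : X) {a : G}
    (ha : a ∈ rot (MulAction.stabilizer G x)) :
    g * a * g⁻¹ ∈ rot (MulAction.stabilizer G (g • x)) := by
  have h1 : rot (MulAction.stabilizer G x) ≤
      (rot (MulAction.stabilizer G (g • x))).comap (MulAut.conj g).toMonoidHom := by
    conv_lhs => rw [rot]
    rw [Subgroup.closure_le]
    rintro b ⟨hb, hb2⟩
    apply Subgroup.subset_closure
    refine ⟨?_, ?_⟩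
    · have hb : b • x = x := hb
      show (g * b * g⁻¹) • g • x = g • x
      rw [mul_smul, inv_smul_smul, mul_smul, hb]
    · intro e
      apply hb2
      have e : g * b * g⁻¹ * (g * b * g⁻¹) = 1 := e
      have : g * (b * b) * g⁻¹ = 1 := by rw [← e]; group
      rwa [conj_eq_one_iff] at this
  exact h1 ha

namespace SymAct

variable {G X Y : Type*} [Group G] [MulAction G X] [MulAction G Y] [Fintype X] [Fintype Y]
  {I : X → Y → Prop} {k l : ℕ}

theorem dual (S : SymAct G X Y I k l) : SymAct G Y X (fun y x => I x y) k l where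
  inv g y x h := S.inv g x y h
  card_eq := S.card_eq.symm
  deg := S.deg'
  deg' := S.deg
  pair := S.pair'
  pair' := S.pair
  flag y x y' x' h h' := by
    obtain ⟨g, h1, h2⟩ := S.flag x y x' y' h h'
    exact ⟨g, h2, h1⟩
  faith := S.faith'
  faith' := S.faith
  two_lt := S.two_lt
  k_lt := S.card_eq ▸ S.k_lt
  l_gt := S.l_gt
  eqn := S.card_eq ▸ S.eqn

theorem l_lt (S : SymAct G X Y I k l) : l < k := by
  have h1 := S.eqn
  have h2 := S.k_lt
  have h3 := S.l_gt
  have h4 := S.two_lt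
  by_contra h
  push Not at h
  nlinarith

theorem inv_iff (S : SymAct G X Y I k l) (g : G) (x : X) (y : Y) : I (g • x) (g • y) ↔ I x y :=
  ⟨fun h => by simpa using S.inv g⁻¹ _ _ h, S.inv g x y⟩

theorem exists_block (S : SymAct G X Y I k l) (x : X) : ∃ y, I x y := by
  have h := S.deg x
  have h2 := S.two_lt
  obtain ⟨y, hy⟩ := Finset.card_pos.1 (by omega : 0 < (Finset.univ.filter fun y => I x y).card)
  exact ⟨y, (Finset.mem_filter.1 hy).2⟩

theorem trans (S : SymAct G X Y I k l) (x x' : X) : ∃ g : G, g • x = x' := by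
  obtain ⟨y, hy⟩ := S.exists_block x
  obtain ⟨y', hy'⟩ := S.exists_block x'
  obtain ⟨g, h, -⟩ := S.flag x y x' y' hy hy'
  exact ⟨g, h⟩

/-- An automorphism of a symmetric design fixes equally many points and blocks. -/
theorem brauer (S : SymAct G X Y I k l) (g : G) :
    (Finset.univ.filter fun x : X => g • x = x).card =
      (Finset.univ.filter fun y : Y => g • y = y).card := by
  obtain ⟨M, hM, hM', -⟩ := incidence_inverse I k l S.card_eq S.deg S.pair
    (by have := S.two_lt; omega) S.l_lt
  set N : Matrix X Y ℚ := Matrix.of fun x y => if I x y then (1 : ℚ) else 0 with hN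
  have e1 : ∑ x : X, (N * M) (g • x) x = (Finset.univ.filter fun x : X => g • x = x).card := by
    rw [hM, ← Finset.sum_boole]
    exact Finset.sum_congr rfl fun x _ => Matrix.one_apply
  have e2 : ∑ y : Y, (M * N) (g • y) y = (Finset.univ.filter fun y : Y => g • y = y).card := by
    rw [hM', ← Finset.sum_boole]
    exact Finset.sum_congr rfl fun x _ => Matrix.one_apply
  have e3 : ∑ x : X, (N * M) (g • x) x = ∑ y : Y, (M * N) (g • y) y := by
    simp only [Matrix.mul_apply]
    rw [Finset.sum_comm]
    rw [← Equiv.sum_comp (MulAction.toPerm g)]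
    refine Finset.sum_congr rfl fun y _ => Finset.sum_congr rfl fun x _ => ?_
    rw [mul_comm]
    congr 1
    simp only [hN, Matrix.of_apply, MulAction.toPerm_apply, S.inv_iff]
  have : ((Finset.univ.filter fun x : X => g • x = x).card : ℚ) =
      (Finset.univ.filter fun y : Y => g • y = y).card := by rw [← e1, ← e2, e3]
  exact_mod_cast this

/-- Local condition at `x`: an element of `G_x` fixing three blocks through `x` fixes all of
them. -/
def HF (G : Type*) {X Y : Type*} [Group G] [MulAction G X] [MulAction G Y] (I : X → Y → Prop)
    (x : X) : Prop :=
  ∀ g : G, g • x = x → ∀ a b c : Y, a ≠ b → a ≠ c → b ≠ c → I x a → I x b → I x c →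
    g • a = a → g • b = b → g • c = c → ∀ y, I x y → g • y = y

theorem HF_all (S : SymAct G X Y I k l) {x : X} (h : HF G I x) (x' : X) : HF G I x' := by
  obtain ⟨t, rfl⟩ := S.trans x x'
  intro g hg a b c hab hac hbc ha hb hc ga gb gc y hy
  have tr : ∀ {α : Type _} [MulAction G α] (z : α), g • z = z →
      (t⁻¹ * g * t) • t⁻¹ • z = t⁻¹ • z := by
    intro α _ z hz
    rw [mul_smul, smul_inv_smul, mul_smul, hz]
  have ti : ∀ z, I (t • x) z → I x (t⁻¹ • z) := by
    intro z hz
    simpa using S.inv t⁻¹ _ _ hz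
  have := h (t⁻¹ * g * t) (by simpa using tr _ hg) (t⁻¹ • a) (t⁻¹ • b) (t⁻¹ • c)
    (by simpa using hab) (by simpa using hac) (by simpa using hbc) (ti _ ha) (ti _ hb) (ti _ hc)
    (by rw [mul_smul, smul_inv_smul, mul_smul, ga]) (by rw [mul_smul, smul_inv_smul, mul_smul, gb])
    (by rw [mul_smul, smul_inv_smul, mul_smul, gc]) (t⁻¹ • y) (ti _ hy)
  rw [mul_smul, smul_inv_smul, mul_smul] at this
  exact smul_left_cancel _ this

theorem HF_of_range (S : SymAct G X Y I k l) {x : X}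
    (φ : MulAction.stabilizer G x →* Equiv.Perm {y // I x y})
    (hφ : ∀ h y, (φ h y : Y) = (h : G) • (y : Y)) {C : Subgroup (Equiv.Perm {y // I x y})}
    (hC : IsWDih φ.range C) : HF G I x := by
  intro g hg a b c hab hac hbc ha hb hc ga gb gc y hy
  have hfix : ∀ z (hz : I x z), g • z = z → φ ⟨g, hg⟩ ⟨z, hz⟩ = ⟨z, hz⟩ := by
    intro z hz h
    exact Subtype.ext (by rw [hφ]; exact h)
  have := hC.fix_three (fun p q => by
    obtain ⟨t, h1, h2⟩ := S.flag x p x q p.2 q.2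
    exact ⟨φ ⟨t, h1⟩, ⟨_, rfl⟩, Subtype.ext (by rw [hφ]; exact h2)⟩)
    (g := φ ⟨g, hg⟩) ⟨_, rfl⟩ (p := ⟨a, ha⟩) (q := ⟨b, hb⟩) (r := ⟨c, hc⟩)
    (fun e => hab (congrArg Subtype.val e)) (fun e => hac (congrArg Subtype.val e))
    (fun e => hbc (congrArg Subtype.val e)) (hfix a ha ga) (hfix b hb gb) (hfix c hc gc)
  have h2 := hφ ⟨g, hg⟩ ⟨y, hy⟩
  rw [this] at h2
  exact h2.symm

/-- The permutation representation of `G_x` on the blocks through `x`. -/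
def locRep (S : SymAct G X Y I k l) (x : X) :
    MulAction.stabilizer G x →* Equiv.Perm {y // I x y} where
  toFun h :=
    { toFun := fun y => ⟨(h : G) • (y : Y), by
        have := S.inv h x y y.2
        rwa [show (h : G) • x = x from h.2] at this⟩
      invFun := fun y => ⟨(h : G)⁻¹ • (y : Y), by
        have := S.inv (h : G)⁻¹ x y y.2
        rwa [show (h : G)⁻¹ • x = x from (h⁻¹).2] at this⟩
      left_inv := fun y => Subtype.ext (by simp)
      right_inv := fun y => Subtype.ext (by simp) }
  map_one' := by ext y; simp
  map_mul' a b := by ext y; simp [mul_smul]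

theorem locRep_apply (S : SymAct G X Y I k l) (x : X) (h : MulAction.stabilizer G x)
    (y : {y // I x y}) : (S.locRep x h y : Y) = (h : G) • (y : Y) := rfl

theorem HF_of_dih (S : SymAct G X Y I k l) {n : ℕ} (hn : 3 ≤ n) {x : X}
    (e : MulAction.stabilizer G x ≃* DihedralGroup n) : HF G I x := by
  have h1 := IsDih.of_equiv (H := (⊤ : Subgroup (MulAction.stabilizer G x))) hn
    (Subgroup.topEquiv.trans e)
  have h2 := h1.toIsWDih.map (S.locRep x)
  rw [← MonoidHom.range_eq_map] at h2
  exact S.HF_of_range _ (S.locRep_apply x) h2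

/-- The kernel of the action of `G_x` on the blocks through `x` is trivial. For `l = 2` the two
blocks on `x` and `z` meet in `{x, z}`. For `l ≥ 3` the local condition propagates from `x` to every
fixed point, so all blocks through fixed points are fixed; counting flags, every fixed block
consists of fixed points. -/
theorem kernel_trivial (S : SymAct G X Y I k l) (hHF : ∀ x, HF G I x) (x : X) (g : G)
    (hg : g • x = x) (hb : ∀ y, I x y → g • y = y) : g = 1 := by
  apply S.faith
  intro z
  by_cases hz : x = z
  · rw [← hz, hg]
  have hp := S.pair x z hz
  by_cases h2 : l = 2
  · subst h2
    obtain ⟨y, y', hy, he⟩ := Finset.card_eq_two.1 hp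
    have h1 : I x y ∧ I z y := by
      have : y ∈ (Finset.univ.filter fun y => I x y ∧ I z y) := by rw [he]; simp
      exact (Finset.mem_filter.1 this).2
    have h1' : I x y' ∧ I z y' := by
      have : y' ∈ (Finset.univ.filter fun y => I x y ∧ I z y) := by rw [he]; simp
      exact (Finset.mem_filter.1 this).2
    have hq := S.pair' y y' hy
    by_contra hne
    have hgz : I (g • z) y ∧ I (g • z) y' := by
      constructor
      · have := S.inv g _ _ h1.2
        rwa [hb y h1.1] at this
      · have := S.inv g _ _ h1'.2
        rwa [hb y' h1'.1] at this
    have hx : g • z ≠ x := by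
      intro e
      exact hz (smul_left_cancel g (by rw [hg, e]))
    have hsub : ({x, z, g • z} : Finset X) ⊆ Finset.univ.filter fun x => I x y ∧ I x y' := by
      intro w hw
      simp only [Finset.mem_insert, Finset.mem_singleton] at hw
      rw [Finset.mem_filter]
      refine ⟨Finset.mem_univ _, ?_⟩
      rcases hw with rfl | rfl | rfl
      · exact ⟨h1.1, h1'.1⟩
      · exact ⟨h1.2, h1'.2⟩
      · exact hgz
    have h3 := Finset.card_le_card hsub
    rw [hq, Finset.card_eq_three.2 ⟨x, z, g • z, hz, hx.symm, fun e => hne e.symm, rfl⟩] at h3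
    omega
  · have hl : 3 ≤ l := by have := S.l_gt; omega
    have hall : ∀ w, g • w = w → ∀ y, I w y → g • y = y := by
      intro w hw
      by_cases hxw : x = w
      · subst hxw; exact hb
      obtain ⟨a, b, c, ha, hb', hc, hab, hac, hbc⟩ := Finset.two_lt_card_iff.1
        (by rw [S.pair x w hxw]; omega : 2 < (Finset.univ.filter fun y => I x y ∧ I w y).card)
      have ha := (Finset.mem_filter.1 ha).2
      have hb' := (Finset.mem_filter.1 hb').2
      have hc := (Finset.mem_filter.1 hc).2
      exact hHF w g hw a b c hab hac hbc ha.2 hb'.2 hc.2 (hb a ha.1) (hb b hb'.1) (hb c hc.1)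
    set F := Finset.univ.filter fun x : X => g • x = x with hF
    set F' := Finset.univ.filter fun y : Y => g • y = y with hF'
    have hFF : F.card = F'.card := S.brauer g
    have hd := double_count_sum F F' I
    have e1 : ∑ s ∈ F, (F'.filter fun y => I s y).card = F.card * k := by
      rw [Finset.sum_const_nat]
      intro s hs
      rw [← S.deg s]
      congr 1
      ext y
      simp only [hF', Finset.mem_filter, Finset.mem_univ, true_and]
      exact ⟨fun h => h.2, fun h => ⟨hall s (Finset.mem_filter.1 hs).2 y h, h⟩⟩
    have hle : ∀ y ∈ F', (F.filter fun x => I x y).card ≤ k := by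
      intro y _
      rw [← S.deg' y]
      exact Finset.card_le_card (Finset.filter_subset_filter _ (Finset.subset_univ _))
    have heq : ∀ y ∈ F', (F.filter fun x => I x y).card = k := by
      rw [← Finset.sum_eq_sum_iff_of_le hle, ← hd, e1, Finset.sum_const, smul_eq_mul, hFF]
    obtain ⟨y, hy⟩ := Finset.card_pos.1
      (by rw [hp]; omega : 0 < (Finset.univ.filter fun y => I x y ∧ I z y).card)
    have hy := (Finset.mem_filter.1 hy).2
    have hyF : y ∈ F' := Finset.mem_filter.2 ⟨Finset.mem_univ _, hb y hy.1⟩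
    have h4 : F.filter (fun x => I x y) = Finset.univ.filter fun x => I x y :=
      Finset.eq_of_subset_of_card_le (Finset.filter_subset_filter _ (Finset.subset_univ _))
        (by rw [heq y hyF, S.deg'])
    have h5 : z ∈ F.filter (fun x => I x y) := by
      rw [h4]; exact Finset.mem_filter.2 ⟨Finset.mem_univ _, hy.2⟩
    exact (Finset.mem_filter.1 (Finset.mem_filter.1 h5).1).2

end SymAct
end Sym

section Sym2
open Classical MulAction

namespace SymAct

variable {G X Y : Type*} [Group G] [MulAction G X] [MulAction G Y] [Fintype X] [Fintype Y]
  {I : X → Y → Prop} {k l : ℕ}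

theorem orbit_card {G X : Type*} [Group G] [Finite G] [MulAction G X] [Fintype X]
    (htr : ∀ x x' : X, ∃ g : G, g • x = x') (x : X) :
    Fintype.card X * Nat.card (stabilizer G x) = Nat.card G := by
  have h1 := Subgroup.card_mul_index (stabilizer G x)
  rw [MulAction.index_stabilizer] at h1
  have h2 : orbit G x = Set.univ := Set.eq_univ_of_forall fun y => htr x y
  rw [h2, Set.ncard_univ, Nat.card_eq_fintype_card (α := X)] at h1
  rw [mul_comm]; exact h1

/-- A non-trivial rotation at `x` fixes no block through `x`. -/
theorem rot_free (S : SymAct G X Y I k l) {n : ℕ}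
    (hd : ∀ x : X, IsDih (stabilizer G x) (rot (stabilizer G x)) n) (hHF : ∀ x, HF G I x)
    {x : X} {a : G} (ha : a ∈ rot (stabilizer G x)) {y : Y} (hy : I x y) (hay : a • y = y) :
    a = 1 := by
  apply S.kernel_trivial hHF x a ((hd x).le ha)
  intro z hz
  obtain ⟨g, hg, hgz⟩ := S.flag x y x z hy hz
  have hay' : a⁻¹ • y = y := by rw [inv_smul_eq_iff]; exact hay.symm
  rcases (hd x).conj_or (s := g⁻¹) (inv_mem (show g ∈ stabilizer G x from hg)) ha with e | e
  · rw [inv_inv] at e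
    calc a • z = a • g • y := by rw [hgz]
      _ = g • (g⁻¹ * a * g) • y := by simp only [mul_smul, smul_inv_smul]
      _ = z := by rw [e, hay, hgz]
  · rw [inv_inv] at e
    calc a • z = a • g • y := by rw [hgz]
      _ = g • (g⁻¹ * a * g) • y := by simp only [mul_smul, smul_inv_smul]
      _ = z := by rw [e, hay', hgz]

/-- If all point stabilizers are dihedral, then every block stabilizer is a point stabilizer. The
fixed blocks of the rotation group `C` of a point stabilizer are as numerous as its fixed points,
and the number of fixed points turns out to be odd. A stabilizer `G_y` of such a block normalizes
`C`, so an element of `G_y` outside `C` has a fixed point among the fixed points of `C`. -/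
theorem conj_thm (S : SymAct G X Y I k l) [Finite G] {n : ℕ} (hn : 3 ≤ n)
    (hd : ∀ x : X, IsDih (stabilizer G x) (rot (stabilizer G x)) n) (hHF : ∀ x, HF G I x) (x : X) :
    ∀ y : Y, ∃ z : X, stabilizer G y = stabilizer G z := by
  set C := rot (stabilizer G x) with hC
  have hfree : ∀ {x : X} {a : G}, a ∈ rot (stabilizer G x) → ∀ {y : Y}, I x y → a • y = y →
      a = 1 := fun ha _ hy hay => S.rot_free hd hHF ha hy hay
  have hcardX := orbit_card S.trans x
  have hcardY : ∀ y : Y, Nat.card (stabilizer G y) = 2 * n := by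
    intro y
    have := orbit_card S.dual.trans y
    rw [← S.card_eq, ← hcardX, (hd x).cardH] at this
    exact Nat.eq_of_mul_eq_mul_left (by have := S.k_lt; omega) this
  -- a generator of the rotation group
  obtain ⟨c, hcC, hgen⟩ : ∃ c ∈ C, ∀ a ∈ C, ∃ m : ℤ, c ^ m = a := by
    have := (hd x).cyc
    obtain ⟨c, hc⟩ := IsCyclic.exists_generator (α := rot (stabilizer G x))
    refine ⟨c, c.2, fun a ha => ?_⟩
    obtain ⟨m, hm⟩ := hc ⟨a, ha⟩
    exact ⟨m, by have := congrArg Subtype.val hm; simpa using this⟩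
  have hfixgen' : ∀ z : X, c • z = z → C ≤ stabilizer G z := fun z hz a ha => by
    obtain ⟨m, rfl⟩ := hgen a ha
    exact Subgroup.zpow_mem _ (show c ∈ stabilizer G z from hz) m
  have hfixgenY : ∀ z : Y, c • z = z → C ≤ stabilizer G z := fun z hz a ha => by
    obtain ⟨m, rfl⟩ := hgen a ha
    exact Subgroup.zpow_mem _ (show c ∈ stabilizer G z from hz) m
  have hcc : c * c ≠ 1 := by
    intro e
    have h1 : Nat.card C ≤ 2 := by
      have : C = Subgroup.zpowers c := by
        apply le_antisymm
        · intro a ha; exact hgen a ha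
        · rwa [Subgroup.zpowers_le]
      rw [this, Nat.card_zpowers]
      exact orderOf_le_of_pow_eq_one (by norm_num) (by rw [pow_two, e])
    have h2 : Nat.card C = n := (hd x).cardC
    omega
  have hrotF : ∀ z : X, c • z = z → rot (stabilizer G z) = C := by
    intro z hz
    have h1 : C ≤ rot (stabilizer G z) := by
      intro a ha
      obtain ⟨m, rfl⟩ := hgen a ha
      exact Subgroup.zpow_mem _ (Subgroup.subset_closure
        (show c ∈ {g | g ∈ stabilizer G z ∧ g * g ≠ 1} from ⟨hz, hcc⟩)) m
    refine (Subgroup.eq_of_le_of_card_ge h1 ?_).symm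
    rw [(hd z).cardC]; exact (hd x).cardC.ge
  have hCcard : Nat.card C = n := (hd x).cardC
  set F := Finset.univ.filter fun x : X => c • x = x with hF
  set F' := Finset.univ.filter fun y : Y => c • y = y with hF'
  have hFF : F.card = F'.card := S.brauer c
  have hxF : x ∈ F := Finset.mem_filter.2 ⟨Finset.mem_univ _, (hd x).le hcC⟩
  have hFpos : 0 < F.card := Finset.card_pos.2 ⟨x, hxF⟩
  obtain ⟨y0, hy0⟩ := Finset.card_pos.1 (hFF ▸ hFpos)
  have hCy : ∀ y ∈ F', C ≤ stabilizer G y := fun y hy => hfixgenY y (Finset.mem_filter.1 hy).2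
  have hidx : ∀ y ∈ F', (∀ s ∈ stabilizer G y, s ∉ C → ∀ t ∈ stabilizer G y, t ∉ C → s * t ∈ C) ∧
      ∀ s ∈ stabilizer G y, ∀ a ∈ C, s * a * s⁻¹ ∈ C := fun y hy =>
    index_two (hCy y hy) (by rw [hcardY, hCcard])
  have hodd : Odd F.card := by
    by_cases h1 : F'.card ≤ 1
    · have : F.card = 1 := by omega
      rw [this]; exact odd_one
    -- with two fixed blocks, `C` is semiregular on the points of each of them
    have hsemi : ∀ y ∈ F', ∀ z, I z y → ∀ a ∈ C, a • z = z → a = 1 := by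
      intro y hy z hz a ha haz
      by_contra ha1
      have hay : a • y = y := hCy y hy ha
      have hanr : ∀ w, I w y → a • w = w → a ∉ rot (stabilizer G w) :=
        fun w hw _ h => ha1 (hfree h hw hay)
      have ha2 : a * a = 1 := (hd z).inv a haz (hanr z hz haz)
      have hall : ∀ w, I w y → a • w = w := by
        intro w hw
        obtain ⟨b, hbz, hby⟩ := S.flag z y w y hz hw
        have h2 := (hidx y hy).2 b hby a ha
        have h3 : b * a * b⁻¹ = a := by
          refine (hd x).invol_unique h2 ha ?_ ha2 ?_ ha1
          · calc b * a * b⁻¹ * (b * a * b⁻¹) = b * (a * a) * b⁻¹ := by group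
              _ = 1 := by rw [ha2]; group
          · intro e; rw [conj_eq_one_iff] at e; exact ha1 e
        calc a • w = (b * a * b⁻¹) • b • z := by rw [h3, hbz]
          _ = b • a • z := by simp only [mul_smul, inv_smul_smul]
          _ = w := by rw [haz, hbz]
      set P := Finset.univ.filter fun x : X => a • x = x with hP
      set P' := Finset.univ.filter fun y : Y => a • y = y with hP'
      have hPP : P.card = P'.card := S.brauer a
      have hyP : y ∈ P' := Finset.mem_filter.2 ⟨Finset.mem_univ _, hay⟩
      have hdc := double_count_sum P P' I
      have hup : ∀ w ∈ P, (P'.filter fun y => I w y).card ≤ 2 := by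
        intro w hw
        by_contra h
        push Not at h
        obtain ⟨p, q, r, hp, hq, hr, hpq, hpr, hqr⟩ := Finset.two_lt_card_iff.1 h
        simp only [hP', Finset.mem_filter, Finset.mem_univ, true_and] at hp hq hr
        have haw := (Finset.mem_filter.1 hw).2
        exact ha1 (S.kernel_trivial hHF w a haw
          (hHF w a haw p q r hpq hpr hqr hp.2 hq.2 hr.2 hp.1 hq.1 hr.1))
      have hlow : ∀ y' ∈ P'.erase y, 2 ≤ (P.filter fun w => I w y').card := by
        intro y' hy'
        have hne := Finset.ne_of_mem_erase hy'
        have h4 := S.pair' y y' hne.symm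
        have h5 := S.l_gt
        have : (Finset.univ.filter fun w => I w y ∧ I w y') ⊆ P.filter fun w => I w y' := by
          intro w hw
          simp only [hP, Finset.mem_filter, Finset.mem_univ, true_and] at hw ⊢
          exact ⟨hall w hw.1, hw.2⟩
        have := Finset.card_le_card this
        omega
      have hyk : (P.filter fun w => I w y).card = k := by
        rw [← S.deg' y]
        congr 1
        ext w
        simp only [hP, Finset.mem_filter, Finset.mem_univ, true_and]
        exact ⟨fun h => h.2, fun h => ⟨hall w h, h⟩⟩
      have e1 := Finset.sum_le_card_nsmul P _ 2 hup
      rw [hdc, ← Finset.add_sum_erase _ _ hyP, hyk] at e1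
      have e2 := Finset.card_nsmul_le_sum (P'.erase y) _ 2 hlow
      rw [Finset.card_erase_of_mem hyP] at e2
      have := S.two_lt
      have : 0 < P'.card := Finset.card_pos.2 ⟨y, hyP⟩
      simp only [smul_eq_mul] at e1 e2
      omega
    obtain ⟨y, hy, y', hy', hyy'⟩ := Finset.one_lt_card.1 (by omega : 1 < F'.card)
    have hinvC : ∀ y ∈ F', ∀ a ∈ C, ∀ w, I w y → I (a • w) y := by
      intro y hy a ha w hw
      have := S.inv a w y hw
      rwa [show a • y = y from hCy y hy ha] at this
    have hnl : n ∣ l := by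
      rw [← hCcard, ← S.pair' y y' hyy']
      apply free_dvd_subgroup
      · intro a ha s hs
        simp only [Finset.mem_filter, Finset.mem_univ, true_and] at hs ⊢
        exact ⟨hinvC y hy a ha s hs.1, hinvC y' hy' a ha s hs.2⟩
      · intro a ha s hs hs'
        simp only [Finset.mem_filter, Finset.mem_univ, true_and] at hs
        exact hsemi y hy s hs.1 a ha hs'
    have hnk : n ∣ k := by
      rw [← hCcard, ← S.deg' y]
      apply free_dvd_subgroup
      · intro a ha s hs
        simp only [Finset.mem_filter, Finset.mem_univ, true_and] at hs ⊢
        exact hinvC y hy a ha s hs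
      · intro a ha s hs hs'
        simp only [Finset.mem_filter, Finset.mem_univ, true_and] at hs
        exact hsemi y hy s hs a ha hs'
    have hk2 : k ∣ 2 * n := by
      rw [← hcardY y]
      obtain ⟨z, hz⟩ := S.dual.exists_block y
      have h1 := Subgroup.card_mul_index (stabilizer (stabilizer G y) z)
      rw [MulAction.index_stabilizer] at h1
      have h2 : orbit (stabilizer G y) z = ↑(Finset.univ.filter fun w => I w y) := by
        ext w
        rw [Finset.mem_coe, Finset.mem_filter, MulAction.mem_orbit_iff]
        constructor
        · rintro ⟨⟨g, hg⟩, rfl⟩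
          refine ⟨Finset.mem_univ _, ?_⟩
          have := S.inv g z y hz
          rwa [show g • y = y from hg] at this
        · rintro ⟨-, hw⟩
          obtain ⟨g, hg1, hg2⟩ := S.flag z y w y hz hw
          exact ⟨⟨g, hg2⟩, hg1⟩
      rw [h2, Set.ncard_coe_finset, S.deg'] at h1
      exact ⟨_, by rw [← h1, mul_comm]⟩
    have hll := S.l_lt
    have hl0 := S.l_gt
    obtain ⟨a, ha⟩ := hnk
    obtain ⟨b, hb⟩ := hnl
    obtain ⟨d, hdd⟩ := hk2
    have hb1 : 1 ≤ b := by
      rcases Nat.eq_zero_or_pos b with h | h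
      · subst h; omega
      · exact h
    have hab : b < a := by
      by_contra h
      push Not at h
      have := Nat.mul_le_mul_left n h
      omega
    have hd1 : d = 1 := by
      have h0 : 0 < d := by
        rcases Nat.eq_zero_or_pos d with h | h
        · subst h; omega
        · exact h
      by_contra h
      have h1 : 2 ≤ d := by omega
      have h2 : 2 ≤ a := by omega
      have : n * 2 * 2 ≤ n * a * d := Nat.mul_le_mul (Nat.mul_le_mul_left n h2) h1
      rw [← ha, ← hdd] at this
      omega
    subst hd1
    have ha2 : a = 2 := by
      have : n * a = n * 2 := by omega
      exact Nat.eq_of_mul_eq_mul_left (by omega) this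
    subst ha2
    have hb2 : b = 1 := by omega
    subst hb2
    have hv : Fintype.card X + 1 = 4 * n := by
      have := S.eqn
      rw [ha, hb, mul_one] at this
      have h2 : n * (4 * n + 1) = n * (Fintype.card X + 2) := by linarith
      have := Nat.eq_of_mul_eq_mul_left (by omega) h2
      omega
    have hdvd : F.card ∣ Fintype.card X := by
      have h1 := Finset.card_eq_sum_card_image (fun z : X => rot (stabilizer G z)) Finset.univ
      rw [Finset.card_univ] at h1
      rw [h1]
      apply Finset.dvd_sum
      intro D hD
      obtain ⟨z, -, rfl⟩ := Finset.mem_image.1 hD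
      obtain ⟨g, rfl⟩ := S.trans x z
      have : (Finset.univ.filter fun w : X => rot (stabilizer G w) = rot (stabilizer G (g • x)))
          = F.image (fun w => g • w) := by
        have h2 : ∀ w : X, ∀ h : G, rot (stabilizer G (h • w)) =
            (rot (stabilizer G w)).map (MulAut.conj h).toMonoidHom := by
          intro w h
          symm
          apply Subgroup.eq_of_le_of_card_ge
          · rintro _ ⟨a, ha, rfl⟩
            exact rot_conj h w ha
          · rw [Subgroup.card_map_of_injective (MulAut.conj h).injective, (hd _).cardC, (hd _).cardC]
        have h3 : ∀ w : X, rot (stabilizer G w) = C ↔ w ∈ F := by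
          intro w
          constructor
          · intro h
            refine Finset.mem_filter.2 ⟨Finset.mem_univ _, ?_⟩
            exact (hd w).le (h ▸ hcC)
          · intro h; exact hrotF w (Finset.mem_filter.1 h).2
        ext w
        rw [Finset.mem_image]
        constructor
        · intro hw
          have hw := (Finset.mem_filter.1 hw).2
          refine ⟨g⁻¹ • w, (h3 _).1 ?_, smul_inv_smul _ _⟩
          rw [h2, hw, h2, Subgroup.map_map]
          ext a; constructor
          · rintro ⟨b, hb, rfl⟩
            have e : g⁻¹ * (g * b * g⁻¹) * g = b := by group
            simpa [e] using hb
          · intro ha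
            have e : g⁻¹ * (g * a * g⁻¹) * g = a := by group
            exact ⟨a, ha, by simpa using e⟩
        · rintro ⟨w', hw', rfl⟩
          refine Finset.mem_filter.2 ⟨Finset.mem_univ _, ?_⟩
          rw [h2, h2, (h3 w').2 hw']
      rw [this, Finset.card_image_of_injective _ (MulAction.injective g)]
    have : Odd (Fintype.card X) := by rw [Nat.odd_iff]; omega
    exact this.of_dvd_nat hdvd
  have hmain : ∃ z : X, stabilizer G y0 = stabilizer G z := by
    have : ∃ b ∈ stabilizer G y0, b ∉ C := by
      by_contra h
      push Not at h
      have h1 : stabilizer G y0 = C := le_antisymm h (hCy y0 hy0)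
      have h2 := hcardY y0
      rw [h1, hCcard] at h2
      omega
    obtain ⟨b, hb, hbC⟩ := this
    have hbF : ∀ s ∈ F, b • s ∈ F := by
      intro s hs
      have h1 := (hidx y0 hy0).2 b⁻¹ (inv_mem hb) c hcC
      have h2 : (b⁻¹ * c * b⁻¹⁻¹) • s = s := hfixgen' s (Finset.mem_filter.1 hs).2 h1
      refine Finset.mem_filter.2 ⟨Finset.mem_univ _, ?_⟩
      rw [inv_inv, mul_smul, mul_smul, inv_smul_eq_iff] at h2
      exact h2
    have hbb : ∀ s ∈ F, b • b • s = s := by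
      intro s hs
      have h1 := (hidx y0 hy0).1 b hb hbC b hb hbC
      rw [← mul_smul]
      exact hfixgen' s (Finset.mem_filter.1 hs).2 h1
    have h1 := card_mod_two_fixed F (fun s => b • s) hbb hbF
    rw [Nat.odd_iff] at hodd
    obtain ⟨z, hz⟩ := Finset.card_pos.1
      (by omega : 0 < (F.filter fun s => b • s = s).card)
    obtain ⟨hz1, hz2⟩ := Finset.mem_filter.1 hz
    refine ⟨z, ?_⟩
    have hCz := hfixgen' z (Finset.mem_filter.1 hz1).2
    apply Subgroup.eq_of_le_of_card_ge
    · intro g hg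
      by_cases hgC : g ∈ C
      · exact hCz hgC
      · have h2 := (hidx y0 hy0).1 b⁻¹ (inv_mem hb) (fun h => hbC (inv_mem_iff.1 h)) g hg hgC
        have h3 : b * (b⁻¹ * g) ∈ stabilizer G z :=
          mul_mem (show b ∈ stabilizer G z from hz2) (hCz h2)
        simpa using h3
    · rw [hcardY, (hd z).cardH]
  obtain ⟨z, hz⟩ := hmain
  intro y
  obtain ⟨g, rfl⟩ := S.dual.trans y0 y
  refine ⟨g • z, ?_⟩
  rw [MulAction.stabilizer_smul_eq_stabilizer_map_conj,
    MulAction.stabilizer_smul_eq_stabilizer_map_conj, hz]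

end SymAct
end Sym2

/-! ### The primitive case: an invariant relation on points -/

section Rel
open Classical MulAction

/-- The situation obtained from a point-primitive counterexample: identifying the block `B` with the
unique point whose stabilizer is `G_B` turns incidence into a `G`-invariant relation `R` on `X`,
where `R x y` means that `y` is incident with the block attached to `x`. -/
structure RelConf (G X : Type*) [Group G] [MulAction G X] [Fintype X] (R : X → X → Prop)
    (k l n : ℕ) : Prop where
  inv : ∀ (g : G) x y, R x y → R (g • x) (g • y)
  irrefl : ∀ x, ¬ R x x
  out : ∀ x, (Finset.univ.filter fun y => R x y).card = k
  inn : ∀ y, (Finset.univ.filter fun x => R x y).card = k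
  cout : ∀ x x', x ≠ x' → (Finset.univ.filter fun y => R x y ∧ R x' y).card = l
  cin : ∀ y y', y ≠ y' → (Finset.univ.filter fun x => R x y ∧ R x y').card = l
  tr_out : ∀ x y y', R x y → R x y' → ∃ g ∈ stabilizer G x, g • y = y'
  tr_in : ∀ x y y', R y x → R y' x → ∃ g ∈ stabilizer G x, g • y = y'
  trans : ∀ x y : X, ∃ g : G, g • x = y
  faith : ∀ g : G, (∀ x : X, g • x = x) → g = 1
  dih : ∀ x : X, IsDih (stabilizer G x) (rot (stabilizer G x)) n
  semi : ∀ x, ∀ a ∈ rot (stabilizer G x), ∀ y, R x y → a • y = y → a = 1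
  semi' : ∀ x, ∀ a ∈ rot (stabilizer G x), ∀ y, R y x → a • y = y → a = 1
  two_lt : 2 < k
  k_lt : k + 1 < Fintype.card X
  l_gt : 1 < l
  eqn : k * k + l = k + l * Fintype.card X
  n_ge : 3 ≤ n
  max : ∀ x : X, ∀ H : Subgroup G, stabilizer G x ≤ H → ∀ g ∈ H, g • x ≠ x → H = ⊤

/-- The orbit of `y` under the subgroup `H`, as a finset. -/
noncomputable def orbF {G X : Type*} [Group G] [MulAction G X] [Fintype X] (H : Subgroup G) (y : X) :
    Finset X :=
  Finset.univ.filter fun z => ∃ g ∈ H, g • y = z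

theorem mem_orbF {G X : Type*} [Group G] [MulAction G X] [Fintype X] {H : Subgroup G} {y z : X} :
    z ∈ orbF H y ↔ ∃ g ∈ H, g • y = z := by simp [orbF]

theorem orbF_card {G X : Type*} [Group G] [MulAction G X] [Fintype X] [Finite G] (H : Subgroup G)
    (y : X) : (orbF H y).card * Nat.card (H ⊓ stabilizer G y : Subgroup G) = Nat.card H := by
  have h1 := Subgroup.card_mul_index (stabilizer H y)
  rw [MulAction.index_stabilizer] at h1
  have h2 : orbit H y = ↑(orbF H y) := by
    ext w
    rw [Finset.mem_coe, mem_orbF, MulAction.mem_orbit_iff]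
    constructor
    · rintro ⟨⟨g, hg⟩, rfl⟩; exact ⟨g, hg, rfl⟩
    · rintro ⟨g, hg, rfl⟩; exact ⟨⟨g, hg⟩, rfl⟩
  rw [h2, Set.ncard_coe_finset] at h1
  have h3 : Nat.card (stabilizer H y) = Nat.card (H ⊓ stabilizer G y : Subgroup G) := by
    apply Nat.card_congr
    exact
      { toFun := fun g => ⟨g.1.1, g.1.2, g.2⟩
        invFun := fun g => ⟨⟨g.1, g.2.1⟩, g.2.2⟩
        left_inv := fun _ => rfl
        right_inv := fun _ => rfl }
  rw [← h3, mul_comm]; exact h1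

theorem conj_fix {G X : Type*} [Group G] [MulAction G X] {g : G} {x : X} {h : G} : (g * h * g⁻¹) • (g • x) = g • x ↔ h • x = x := by
  rw [mul_smul, inv_smul_smul, mul_smul]
  exact ⟨fun e => smul_left_cancel g e, fun e => by rw [e]⟩

namespace RelConf

variable {G X : Type*} [Group G] [MulAction G X] [Fintype X] {R : X → X → Prop} {k l n : ℕ}

theorem inv_iff (T : RelConf G X R k l n) (g : G) (x y : X) : R (g • x) (g • y) ↔ R x y :=
  ⟨fun h => by simpa using T.inv g⁻¹ _ _ h, T.inv g x y⟩

theorem ne (T : RelConf G X R k l n) {x y : X} (h : R x y) : x ≠ y :=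
  fun e => T.irrefl x (by rw [← e] at h; exact h)

theorem l_lt (T : RelConf G X R k l n) : l < k := by
  have h1 := T.eqn
  have h2 := T.k_lt
  have h3 := T.l_gt
  have h4 := T.two_lt
  by_contra h
  push Not at h
  nlinarith

theorem exists_out (T : RelConf G X R k l n) (x : X) : ∃ y, R x y := by
  have h := T.out x
  have h2 := T.two_lt
  obtain ⟨y, hy⟩ := Finset.card_pos.1 (by omega : 0 < (Finset.univ.filter fun y => R x y).card)
  exact ⟨y, (Finset.mem_filter.1 hy).2⟩

theorem exists_inn (T : RelConf G X R k l n) (x : X) : ∃ y, R y x := by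
  have h := T.inn x
  have h2 := T.two_lt
  obtain ⟨y, hy⟩ := Finset.card_pos.1 (by omega : 0 < (Finset.univ.filter fun y => R y x).card)
  exact ⟨y, (Finset.mem_filter.1 hy).2⟩

/-- Maximality of `G_x` in terms of invariant sets. -/
theorem max_set (T : RelConf G X R k l n) (x : X) (S : Set X) (hx : x ∈ S)
    (hS : ∀ h ∈ stabilizer G x, ∀ s ∈ S, h • s ∈ S) (g : G) (hgx : g • x ≠ x)
    (hg : ∀ s, g • s ∈ S ↔ s ∈ S) : S = Set.univ := by
  let H : Subgroup G :=
    { carrier := {g | ∀ s, g • s ∈ S ↔ s ∈ S}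
      one_mem' := by simp
      mul_mem' := by
        intro a b ha hb s
        rw [mul_smul, ha, hb]
      inv_mem' := by
        intro a ha s
        rw [← ha, smul_inv_smul] }
  have hH : H = ⊤ := by
    apply T.max x H _ g hg hgx
    intro h hh s
    refine ⟨fun hs => ?_, hS h hh s⟩
    have := hS h⁻¹ (inv_mem hh) _ hs
    rwa [inv_smul_smul] at this
  apply Set.eq_univ_of_forall
  intro z
  obtain ⟨t, rfl⟩ := T.trans x z
  have : t ∈ H := hH ▸ Subgroup.mem_top t
  exact (this x).2 hx

/-- A non-trivial rotation subgroup of `G_x` has normalizer `G_x`. -/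
theorem star (T : RelConf G X R k l n) {x : X} {a g : G} (ha : a ∈ rot (stabilizer G x))
    (ha1 : a ≠ 1) (hg : g * a * g⁻¹ = a ∨ g * a * g⁻¹ = a⁻¹) : g • x = x := by
  by_contra hgx
  let H : Subgroup G :=
    { carrier := {g | g * a * g⁻¹ = a ∨ g * a * g⁻¹ = a⁻¹}
      one_mem' := by simp
      mul_mem' := by
        intro p q hp hq
        have e : p * q * a * (p * q)⁻¹ = p * (q * a * q⁻¹) * p⁻¹ := by group
        have e2 : p * a⁻¹ * p⁻¹ = (p * a * p⁻¹)⁻¹ := by group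
        show _ ∨ _
        rw [e]
        rcases hq with h | h <;> rw [h]
        · exact hp
        · rw [e2]
          rcases hp with h' | h' <;> rw [h']
          · exact Or.inr rfl
          · left; exact inv_inv a
      inv_mem' := by
        intro p hp
        show _ ∨ _
        rcases hp with h | h
        · left
          conv_lhs => rw [← h]
          group
        · right
          have h2 : a = p * a⁻¹ * p⁻¹ := by
            have : p * a⁻¹ * p⁻¹ = (p * a * p⁻¹)⁻¹ := by group
            rw [this, h, inv_inv]
          conv_lhs => rw [h2]
          group }
  have hH : H = ⊤ := T.max x H (fun h hh => (T.dih x).conj_or hh ha) g hg hgx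
  apply ha1
  apply T.faith
  intro z
  obtain ⟨t, rfl⟩ := T.trans x z
  have hax : a • x = x := (T.dih x).le ha
  have hax' : a⁻¹ • x = x := by rw [inv_smul_eq_iff]; exact hax.symm
  have : t⁻¹ ∈ H := hH ▸ Subgroup.mem_top _
  have e : a • t • x = t • (t⁻¹ * a * t⁻¹⁻¹) • x := by
    rw [← mul_smul, ← mul_smul]; congr 1; group
  rcases this with h | h
  · rw [e, h, hax]
  · rw [e, h, hax']

theorem stab_inj (T : RelConf G X R k l n) {x y : X} (h : stabilizer G x = stabilizer G y) :
    x = y := by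
  by_contra hxy
  obtain ⟨g, rfl⟩ := T.trans x y
  obtain ⟨s, hs, hsC⟩ := (T.dih x).exists_refl (by have := T.n_ge; omega)
  have hH : Subgroup.normalizer (stabilizer G x : Set G) = ⊤ := by
    apply T.max x _ Subgroup.le_normalizer g _ (fun e => hxy e.symm)
    rw [Subgroup.mem_normalizer_iff]
    intro a
    conv_rhs => rw [h]
    exact conj_fix.symm
  have hs1 : s = 1 := by
    apply T.faith
    intro z
    obtain ⟨t, rfl⟩ := T.trans x z
    have : t⁻¹ ∈ Subgroup.normalizer (stabilizer G x : Set G) := hH ▸ Subgroup.mem_top _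
    rw [Subgroup.mem_normalizer_iff] at this
    have h2 := (this s).1 hs
    rw [inv_inv] at h2
    have h2 : (t⁻¹ * s * t) • x = x := h2
    rw [mul_smul, mul_smul, inv_smul_eq_iff] at h2
    exact h2
  exact hsC (hs1 ▸ one_mem _)

theorem rot_inj (T : RelConf G X R k l n) [Finite G] {x y : X} {a : G}
    (hx : a ∈ rot (stabilizer G x)) (hy : a ∈ rot (stabilizer G y)) (ha : a ≠ 1) : x = y := by
  apply T.stab_inj
  symm
  apply Subgroup.eq_of_le_of_card_ge
  · intro g hg
    exact T.star hx ha ((T.dih y).conj_or hg hy)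
  · rw [(T.dih x).cardH, (T.dih y).cardH]

theorem rot_sq (T : RelConf G X R k l n) [Finite G] {x y : X} {a : G}
    (hx : a ∈ rot (stabilizer G x)) (hy : a • y = y) (hxy : x ≠ y) : a * a = 1 := by
  by_contra h
  refine hxy (T.rot_inj hx (Subgroup.subset_closure ⟨hy, h⟩) ?_)
  rintro rfl
  exact h (one_mul 1)

theorem two_fix_sq (T : RelConf G X R k l n) [Finite G] {x y : X} {a : G}
    (hx : a • x = x) (hy : a • y = y) (hxy : x ≠ y) : a * a = 1 := by
  by_cases h : a ∈ rot (stabilizer G x)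
  · exact T.rot_sq h hy hxy
  · exact (T.dih x).inv a hx h

/-- An involution has no unique fixed point: if `x` were the only one, the parity of the number of
common in-neighbours of `y` and `t y` would decide whether `R x y`. -/
theorem invol_fix (T : RelConf G X R k l n) {x : X} {t : G} (ht : t * t = 1)
    (hx : t • x = x) : ∃ z, z ≠ x ∧ t • z = z := by
  by_contra hh
  push Not at hh
  have htt : ∀ z : X, t • t • z = z := fun z => by rw [← mul_smul, ht, one_smul]
  have key : ∀ y, y ≠ x → l % 2 = if R x y then 1 else 0 := by
    intro y hy
    have h1 := T.cin y (t • y) (fun e => hh y hy e.symm)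
    have h2 := card_mod_two_fixed (Finset.univ.filter fun z => R z y ∧ R z (t • y))
      (fun z => t • z) (fun z _ => htt z) (by
        intro z hz
        simp only [Finset.mem_filter, Finset.mem_univ, true_and] at hz ⊢
        refine ⟨?_, (T.inv_iff _ _ _).2 hz.1⟩
        have := T.inv t _ _ hz.2
        rwa [htt] at this)
    rw [h1] at h2
    rw [h2]
    have h3 : ((Finset.univ.filter fun z => R z y ∧ R z (t • y)).filter fun z => t • z = z) =
        if R x y then {x} else ∅ := by
      ext z
      simp only [Finset.mem_filter, Finset.mem_univ, true_and]
      constructor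
      · rintro ⟨⟨h4, -⟩, h5⟩
        have : z = x := by
          by_contra h6; exact hh z h6 h5
        subst this
        simp [h4]
      · intro h
        split_ifs at h with h4
        · rw [Finset.mem_singleton] at h
          subst h
          refine ⟨⟨h4, ?_⟩, hx⟩
          have := T.inv t _ _ h4
          rwa [hx] at this
        · simp at h
    rw [h3]
    split_ifs <;> rfl
  obtain ⟨y, hy⟩ := T.exists_out x
  have h1 := key y (T.ne hy).symm
  obtain ⟨z, hz⟩ : ∃ z, z ∉ insert x (Finset.univ.filter fun y => R x y) := by
    by_contra h
    push Not at h
    have h2 : (Finset.univ : Finset X) ⊆ insert x (Finset.univ.filter fun y => R x y) :=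
      fun z _ => h z
    have h3 := Finset.card_le_card h2
    have h4 := Finset.card_insert_le x (Finset.univ.filter fun y => R x y)
    rw [T.out] at h4
    rw [Finset.card_univ] at h3
    have := T.k_lt
    omega
  rw [Finset.mem_insert, Finset.mem_filter] at hz
  push Not at hz
  have h2 := key z hz.1
  rw [if_neg (hz.2 (Finset.mem_univ _))] at h2
  rw [if_pos hy] at h1
  omega

/-- Counting pairs `(z, w)` with `z ∈ D`, `R w x` and `R w z`. -/
theorem k_dvd (T : RelConf G X R k l n) {x : X} (D : Finset X) (hx : x ∉ D)
    (hD : ∀ h ∈ stabilizer G x, ∀ z ∈ D, h • z ∈ D) : k ∣ D.card * l := by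
  obtain ⟨w0, hw0⟩ := T.exists_inn x
  have := double_count D (Finset.univ.filter fun w => R w x) (fun z w => R w z) l
    (D.filter fun z => R w0 z).card
    (by
      intro z hz
      rw [Finset.filter_filter]
      exact T.cin x z (fun e => hx (e ▸ hz)))
    (by
      intro w hw
      have hw := (Finset.mem_filter.1 hw).2
      obtain ⟨g, hg, rfl⟩ := T.tr_in x w0 w hw0 hw
      have e : (D.filter fun z => R (g • w0) z) =
          (D.filter fun z => R w0 z).image (fun z => g • z) := by
        ext z
        rw [Finset.mem_image, Finset.mem_filter]
        constructor
        · rintro ⟨h1, h2⟩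
          refine ⟨g⁻¹ • z, ?_, smul_inv_smul _ _⟩
          rw [Finset.mem_filter]
          refine ⟨hD _ (inv_mem hg) _ h1, ?_⟩
          rw [← T.inv_iff g, smul_inv_smul]; exact h2
        · rintro ⟨z, hz, rfl⟩
          rw [Finset.mem_filter] at hz
          exact ⟨hD g hg z hz.1, (T.inv_iff _ _ _).2 hz.2⟩
      rw [e, Finset.card_image_of_injective _ (MulAction.injective g)])
  rw [T.inn] at this
  exact ⟨_, this⟩

theorem orb_out (T : RelConf G X R k l n) {x y : X} (h : R x y) :
    orbF (stabilizer G x) y = Finset.univ.filter fun z => R x z := by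
  ext z
  rw [mem_orbF, Finset.mem_filter]
  constructor
  · rintro ⟨g, hg, rfl⟩
    have := T.inv g _ _ h
    rw [show g • x = x from hg] at this
    exact ⟨Finset.mem_univ _, this⟩
  · rintro ⟨-, hz⟩
    exact T.tr_out x y z h hz

theorem orb_inn (T : RelConf G X R k l n) {x y : X} (h : R y x) :
    orbF (stabilizer G x) y = Finset.univ.filter fun z => R z x := by
  ext z
  rw [mem_orbF, Finset.mem_filter]
  constructor
  · rintro ⟨g, hg, rfl⟩
    have := T.inv g _ _ h
    rw [show g • x = x from hg] at this
    exact ⟨Finset.mem_univ _, this⟩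
  · rintro ⟨-, hz⟩
    exact T.tr_in x y z h hz

theorem k_cases (T : RelConf G X R k l n) [Finite G] (x : X) : k = n ∨ k = 2 * n := by
  obtain ⟨y, hy⟩ := T.exists_out x
  have h1 := orbF_card (stabilizer G x) y
  rw [T.orb_out hy, T.out, (T.dih x).cardH] at h1
  have h2 : n ∣ k := by
    rw [← (T.dih x).cardC, ← T.out x]
    apply free_dvd_subgroup
    · intro a ha s hs
      simp only [Finset.mem_filter, Finset.mem_univ, true_and] at hs ⊢
      have := T.inv a _ _ hs
      rwa [show a • x = x from (T.dih x).le ha] at this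
    · intro a ha s hs h
      simp only [Finset.mem_filter, Finset.mem_univ, true_and] at hs
      exact T.semi x a ha s hs h
  obtain ⟨a, rfl⟩ := h2
  have h3 : a * Nat.card (stabilizer G x ⊓ stabilizer G y : Subgroup G) = 2 := by
    apply Nat.eq_of_mul_eq_mul_left (show 0 < n by have := T.n_ge; omega)
    linarith
  have h4 : a ∣ 2 := ⟨_, h3.symm⟩
  rcases (Nat.dvd_prime Nat.prime_two).1 h4 with rfl | rfl
  · left; omega
  · right; omega

theorem reg_out (T : RelConf G X R k l n) [Finite G] (hk : k = 2 * n) {x y : X} (h : R x y) {g : G}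
    (hgx : g • x = x) (hgy : g • y = y) : g = 1 := by
  have h1 := orbF_card (stabilizer G x) y
  rw [T.orb_out h, T.out, (T.dih x).cardH, ← hk] at h1
  have h2 : Nat.card (stabilizer G x ⊓ stabilizer G y : Subgroup G) = 1 := by
    apply Nat.eq_of_mul_eq_mul_left (show 0 < k by have := T.two_lt; omega)
    rw [h1, mul_one]
  rw [Subgroup.card_eq_one] at h2
  have : g ∈ stabilizer G x ⊓ stabilizer G y := ⟨hgx, hgy⟩
  rw [h2] at this
  exact Subgroup.mem_bot.1 this

theorem eqn' (T : RelConf G X R k l n) : l * (Fintype.card X - 1) = k * (k - 1) := by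
  have h1 := T.eqn
  have h2 := T.k_lt
  have h3 := T.two_lt
  obtain ⟨a, ha⟩ : ∃ a, Fintype.card X = a + 1 := ⟨Fintype.card X - 1, by omega⟩
  obtain ⟨b, hb⟩ : ∃ b, k = b + 1 := ⟨k - 1, by omega⟩
  rw [ha, hb] at h1
  rw [ha, hb]
  simp only [Nat.add_sub_cancel]
  nlinarith

theorem cardG (T : RelConf G X R k l n) [Finite G] (x : X) :
    Fintype.card X * (2 * n) = Nat.card G := by
  rw [← (T.dih x).cardH]
  exact SymAct.orbit_card T.trans x

end RelConf
end Rel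

/-! ### The primitive case with `n` even: central involutions -/

section Even
open Classical MulAction

/-- `u` assigns to each point `x` the involution of the rotation subgroup of `G_x`. -/
structure IsU {G X : Type*} [Group G] [MulAction G X] (u : X → G) : Prop where
  mem : ∀ x, u x ∈ rot (stabilizer G x)
  sq : ∀ x, u x * u x = 1
  ne : ∀ x, u x ≠ 1

/-- The points other than `x` fixed by `u x`. -/
noncomputable def Kset {G X : Type*} [Group G] [MulAction G X] [Fintype X] (u : X → G) (x : X) :
    Finset X :=
  Finset.univ.filter fun y => y ≠ x ∧ u x • y = y

theorem mem_Kset {G X : Type*} [Group G] [MulAction G X] [Fintype X] {u : X → G} {x y : X} :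
    y ∈ Kset u x ↔ y ≠ x ∧ u x • y = y := by simp [Kset]

theorem u_inv {G X : Type*} [Group G] [MulAction G X] {u : X → G} (U : IsU u) (x : X) :
    (u x)⁻¹ = u x := inv_eq_of_mul_eq_one_left (U.sq x)

namespace RelConf

variable {G X : Type*} [Group G] [MulAction G X] [Fintype X] {R : X → X → Prop} {k l n : ℕ}

theorem exists_u (T : RelConf G X R k l n) [Finite G] (hn : Even n) :
    ∃ u : X → G, IsU u := by
  have := fun x => (T.dih x).exists_invol hn
  choose u h1 h2 h3 using this
  exact ⟨u, h1, h2, h3⟩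

variable {u : X → G}

theorem u_fix (T : RelConf G X R k l n) (U : IsU u) (x : X) : u x • x = x :=
  (T.dih x).le (U.mem x)

theorem u_eq (T : RelConf G X R k l n) [Finite G] (U : IsU u) {x : X} {a : G}
    (ha : a ∈ rot (stabilizer G x)) (ha2 : a * a = 1) (ha1 : a ≠ 1) : a = u x :=
  (T.dih x).invol_unique ha (U.mem x) ha2 (U.sq x) ha1 (U.ne x)

theorem conj_u (T : RelConf G X R k l n) [Finite G] (U : IsU u) (g : G) (x : X) :
    g * u x * g⁻¹ = u (g • x) := by
  apply T.u_eq U (rot_conj g x (U.mem x))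
  · have : g * u x * g⁻¹ * (g * u x * g⁻¹) = g * (u x * u x) * g⁻¹ := by group
    rw [this, U.sq]; group
  · intro h
    apply U.ne x
    have := congrArg (fun z => g⁻¹ * z * g) h
    simpa [mul_assoc] using this

theorem u_inj (T : RelConf G X R k l n) [Finite G] (U : IsU u) {x y : X} (h : u x = u y) : x = y :=
  T.rot_inj (U.mem x) (h ▸ U.mem y) (U.ne x)

/-- `G_y` is the centralizer of `u y`. -/
theorem comm_iff (T : RelConf G X R k l n) [Finite G] (U : IsU u) {g : G} {y : X} :
    g * u y = u y * g ↔ g • y = y := by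
  constructor
  · intro h
    apply T.star (U.mem y) (U.ne y)
    left; rw [h]; group
  · intro h
    have := T.conj_u U g y
    rw [h] at this
    exact mul_inv_eq_iff_eq_mul.1 this

theorem u_symm (T : RelConf G X R k l n) [Finite G] (U : IsU u) {x y : X} (h : u x • y = y) :
    u y • x = x :=
  (T.comm_iff U).1 ((T.comm_iff U).2 h).symm

theorem K_symm (T : RelConf G X R k l n) [Finite G] (U : IsU u) {x y : X} (h : y ∈ Kset u x) :
    x ∈ Kset u y := by
  rw [mem_Kset] at *
  exact ⟨h.1.symm, T.u_symm U h.2⟩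

theorem u_notMem (T : RelConf G X R k l n) [Finite G] (U : IsU u) {x y : X} (h : y ≠ x) :
    u y ∉ rot (stabilizer G x) := fun h' => h (T.rot_inj (U.mem y) h' (U.ne y))

theorem rot_cases (T : RelConf G X R k l n) [Finite G] (U : IsU u) {x y : X} {a : G}
    (ha : a ∈ rot (stabilizer G x)) (hy : a • y = y) (hxy : x ≠ y) : a = 1 ∨ a = u x := by
  by_cases h : a = 1
  · exact Or.inl h
  · exact Or.inr (T.u_eq U ha (T.rot_sq ha hy hxy) h)

theorem K_stab (T : RelConf G X R k l n) [Finite G] (U : IsU u) {x y : X} (h : y ∈ Kset u x)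
    {g : G} (hx : g • x = x) (hy : g • y = y) :
    g = 1 ∨ g = u x ∨ g = u y ∨ g = u x * u y := by
  have h' := mem_Kset.1 (T.K_symm U h)
  rw [mem_Kset] at h
  by_cases hg : g ∈ rot (stabilizer G x)
  · rcases T.rot_cases U hg hy h.1.symm with e | e
    · exact Or.inl e
    · exact Or.inr (Or.inl e)
  · have h1 : g * u y ∈ rot (stabilizer G x) :=
      (T.dih x).mul g hx hg (u y) h'.2 (T.u_notMem U h.1)
    have h2 : (g * u y) • y = y := by rw [mul_smul, T.u_fix U, hy]
    have h3 : g = g * u y * u y := by rw [mul_assoc, U.sq, mul_one]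
    rcases T.rot_cases U h1 h2 h.1.symm with e | e
    · rw [e] at h3; right; right; left; simpa using h3
    · rw [e] at h3; exact Or.inr (Or.inr (Or.inr h3))

theorem K_stab_card (T : RelConf G X R k l n) [Finite G] (U : IsU u) {x y : X}
    (h : y ∈ Kset u x) : Nat.card (stabilizer G x ⊓ stabilizer G y : Subgroup G) = 4 := by
  have h' := mem_Kset.1 (T.K_symm U h)
  have h0 := mem_Kset.1 h
  have hxy : u x ≠ u y := fun e => h0.1 (T.u_inj U e).symm
  have hS : ((stabilizer G x ⊓ stabilizer G y : Subgroup G) : Set G) =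
      (({1, u x, u y, u x * u y} : Finset G) : Set G) := by
    ext g
    simp only [SetLike.mem_coe, Finset.coe_insert, Finset.coe_singleton, Set.mem_insert_iff,
      Set.mem_singleton_iff, Subgroup.mem_inf, mem_stabilizer_iff]
    constructor
    · rintro ⟨h1, h2⟩; exact T.K_stab U h h1 h2
    · rintro (rfl | rfl | rfl | rfl)
      · simp
      · exact ⟨T.u_fix U x, h0.2⟩
      · exact ⟨h'.2, T.u_fix U y⟩
      · rw [mul_smul, mul_smul, h'.2, T.u_fix U y, T.u_fix U x, h0.2]; simp
  have : Nat.card (stabilizer G x ⊓ stabilizer G y : Subgroup G) =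
      Set.ncard ((stabilizer G x ⊓ stabilizer G y : Subgroup G) : Set G) := rfl
  rw [this, hS, Set.ncard_coe_finset]
  rw [Finset.card_insert_of_notMem, Finset.card_insert_of_notMem, Finset.card_insert_of_notMem,
    Finset.card_singleton]
  · rw [Finset.mem_singleton]
    intro e
    exact U.ne x (mul_eq_right.1 e.symm)
  · rw [Finset.mem_insert, Finset.mem_singleton]
    rintro (e | e)
    · exact hxy e
    · exact U.ne y (mul_eq_left.1 e.symm)
  · simp only [Finset.mem_insert, Finset.mem_singleton]
    rintro (e | e | e)
    · exact U.ne x e.symm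
    · exact U.ne y e.symm
    · apply hxy
      have := eq_inv_of_mul_eq_one_left e.symm
      rw [this, u_inv U]

theorem K_smul (T : RelConf G X R k l n) [Finite G] (U : IsU u) {x y : X} (g : G) :
    g • y ∈ Kset u (g • x) ↔ y ∈ Kset u x := by
  rw [mem_Kset, mem_Kset, ← T.conj_u U g x, conj_fix, ne_eq, smul_left_cancel_iff]

theorem K_card (T : RelConf G X R k l n) [Finite G] (U : IsU u) (x y : X) :
    (Kset u x).card = (Kset u y).card := by
  obtain ⟨g, rfl⟩ := T.trans x y
  rw [← Finset.card_image_of_injective (Kset u x) (MulAction.injective g)]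
  congr 1
  ext z
  rw [Finset.mem_image]
  constructor
  · rintro ⟨w, hw, rfl⟩; exact (T.K_smul U g).2 hw
  · intro hz
    refine ⟨g⁻¹ • z, ?_, smul_inv_smul _ _⟩
    rw [← T.K_smul U g, smul_inv_smul]; exact hz

theorem K_nonempty (T : RelConf G X R k l n) (U : IsU u) (x : X) : ∃ y, y ∈ Kset u x := by
  obtain ⟨z, h1, h2⟩ := T.invol_fix (U.sq x) (T.u_fix U x)
  exact ⟨z, mem_Kset.2 ⟨h1, h2⟩⟩

theorem K_orb (T : RelConf G X R k l n) [Finite G] (U : IsU u) {x y : X} (h : y ∈ Kset u x) :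
    orbF (stabilizer G x) y ⊆ Kset u x ∧ 2 * (orbF (stabilizer G x) y).card = n := by
  constructor
  · intro z hz
    rw [mem_orbF] at hz
    obtain ⟨g, hg, rfl⟩ := hz
    have := (T.K_smul U g).2 h
    rwa [show g • x = x from hg] at this
  · have := orbF_card (stabilizer G x) y
    rw [T.K_stab_card U h, (T.dih x).cardH] at this
    omega

/-- The number of elements of `G_x` outside the rotation subgroup is `n`. -/
theorem refl_card (T : RelConf G X R k l n) [Fintype G] (x : X) :
    (Finset.univ.filter fun g : G => g • x = x ∧ g ∉ rot (stabilizer G x)).card = n := by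
  have h1 : (Finset.univ.filter fun g : G => g ∈ stabilizer G x).card = 2 * n := by
    rw [← (T.dih x).cardH, ← Fintype.card_subtype, Nat.card_eq_fintype_card]
  have h2 : (Finset.univ.filter fun g : G => g ∈ rot (stabilizer G x)).card = n := by
    rw [← (T.dih x).cardC, ← Fintype.card_subtype, Nat.card_eq_fintype_card]
  have h3 := Finset.card_filter_add_card_filter_not
    (s := Finset.univ.filter fun g : G => g ∈ stabilizer G x) (fun g => g ∈ rot (stabilizer G x))
  rw [Finset.filter_filter, Finset.filter_filter, h1] at h3
  have h4 : (Finset.univ.filter fun g : G => g ∈ stabilizer G x ∧ g ∈ rot (stabilizer G x)) =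
      Finset.univ.filter fun g : G => g ∈ rot (stabilizer G x) := by
    ext g
    simp only [Finset.mem_filter, Finset.mem_univ, true_and, and_iff_right_iff_imp]
    exact fun h => (T.dih x).le h
  rw [h4, h2] at h3
  have h5 : (Finset.univ.filter fun g : G => g • x = x ∧ g ∉ rot (stabilizer G x)) =
      Finset.univ.filter fun g : G => g ∈ stabilizer G x ∧ g ∉ rot (stabilizer G x) := by
    ext g; simp
  rw [h5]
  omega

theorem K_le (T : RelConf G X R k l n) [Finite G] (U : IsU u) (x : X) : (Kset u x).card ≤ n := by
  have := Fintype.ofFinite G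
  rw [← T.refl_card x]
  apply Finset.card_le_card_of_injOn u
  · intro y hy
    have h' := mem_Kset.1 (T.K_symm U hy)
    have h0 := mem_Kset.1 hy
    simp only [Finset.coe_filter, Finset.mem_univ, true_and, Set.mem_ofPred_eq]
    exact ⟨h'.2, T.u_notMem U h0.1⟩
  · intro y _ z _ h
    exact T.u_inj U h

theorem K_dich (T : RelConf G X R k l n) [Finite G] (U : IsU u) (x : X) :
    2 * (Kset u x).card = n ∨ (Kset u x).card = n := by
  obtain ⟨y, hy⟩ := T.K_nonempty U x
  obtain ⟨h1, h2⟩ := T.K_orb U hy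
  by_cases h : orbF (stabilizer G x) y = Kset u x
  · left; rw [← h]; exact h2
  · right
    apply le_antisymm (T.K_le U x)
    obtain ⟨z, hz, hz'⟩ := Finset.exists_of_ssubset (Finset.ssubset_iff_subset_ne.2 ⟨h1, h⟩)
    obtain ⟨h3, h4⟩ := T.K_orb U hz
    have h5 : Disjoint (orbF (stabilizer G x) y) (orbF (stabilizer G x) z) := by
      rw [Finset.disjoint_left]
      intro w hw hw'
      rw [mem_orbF] at hw hw'
      obtain ⟨g, hg, rfl⟩ := hw
      obtain ⟨g', hg', e⟩ := hw'
      apply hz'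
      rw [mem_orbF]
      refine ⟨g'⁻¹ * g, mul_mem (inv_mem hg') hg, ?_⟩
      rw [mul_smul, ← e, inv_smul_smul]
    have h6 := Finset.card_le_card (Finset.union_subset h1 h3)
    rw [Finset.card_union_of_disjoint h5] at h6
    omega

/-- The points `z ≠ x` with `G_x ∩ G_z` non-trivial. -/
noncomputable def NR (G : Type*) {X : Type*} [Group G] [MulAction G X] [Fintype X] (x : X) :
    Finset X :=
  Finset.univ.filter fun z => z ≠ x ∧ ∃ g : G, g ≠ 1 ∧ g • x = x ∧ g • z = z

theorem NR_ge (T : RelConf G X R k l n) [Finite G] (U : IsU u) (x : X) :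
    (Kset u x).card * ((Kset u x).card - 1) ≤ (NR G x).card := by
  set S := (Kset u x).biUnion fun y => (Kset u y).filter fun s => s ≠ x ∧ s ∉ Kset u x with hS
  have hdisj : ((Kset u x : Finset X) : Set X).PairwiseDisjoint
      (fun y => (Kset u y).filter fun s => s ≠ x ∧ s ∉ Kset u x) := by
    intro y hy y' hy' hne
    show Disjoint _ _
    rw [Finset.disjoint_left]
    intro s hs hs'
    rw [Finset.mem_filter] at hs hs'
    have h1 := mem_Kset.1 (T.K_symm U hy)
    have h2 := mem_Kset.1 (T.K_symm U hy')
    have h3 := mem_Kset.1 hy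
    have h4 := mem_Kset.1 hy'
    have h5 : u y * u y' ∈ rot (stabilizer G x) :=
      (T.dih x).mul _ h1.2 (T.u_notMem U h3.1) _ h2.2 (T.u_notMem U h4.1)
    have h6 : (u y * u y') • s = s := by
      rw [mul_smul, (mem_Kset.1 hs'.1).2, (mem_Kset.1 hs.1).2]
    rcases T.rot_cases U h5 h6 (Ne.symm hs.2.1) with e | e
    · apply hne
      apply T.u_inj U
      rw [eq_inv_of_mul_eq_one_left e, u_inv U]
    · rw [e] at h6
      exact hs.2.2 (mem_Kset.2 ⟨hs.2.1, h6⟩)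
  have h1 : S.card = ∑ y ∈ Kset u x, ((Kset u y).filter fun s => s ≠ x ∧ s ∉ Kset u x).card :=
    Finset.card_biUnion hdisj
  have h2 : (Kset u x).card * ((Kset u x).card - 2) ≤ S.card := by
    rw [h1, ← smul_eq_mul]
    apply Finset.card_nsmul_le_sum
    intro y hy
    have h3 := Finset.card_filter_add_card_filter_not (s := Kset u y)
      (fun s => s ≠ x ∧ s ∉ Kset u x)
    have h4 : ((Kset u y).filter fun s => ¬ (s ≠ x ∧ s ∉ Kset u x)) ⊆
        insert x ((Kset u y).filter fun s => s ∈ Kset u x) := by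
      intro s hs
      rw [Finset.mem_filter] at hs
      rw [Finset.mem_insert, Finset.mem_filter]
      by_cases e : s = x
      · exact Or.inl e
      · right
        refine ⟨hs.1, ?_⟩
        by_contra h; exact hs.2 ⟨e, h⟩
    have h5 : ((Kset u y).filter fun s => s ∈ Kset u x).card ≤ 1 := by
      have key : ∀ z ∈ (Kset u y).filter fun s => s ∈ Kset u x, u z = u x * u y := by
        intro z hz
        rw [Finset.mem_filter] at hz
        have h6 := mem_Kset.1 (T.K_symm U hz.1)
        have h7 := mem_Kset.1 (T.K_symm U hz.2)
        rcases T.K_stab U hy h7.2 h6.2 with e | e | e | e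
        · exact absurd e (U.ne z)
        · exact absurd (T.u_inj U e).symm h7.1
        · exact absurd (T.u_inj U e).symm h6.1
        · exact e
      rw [Finset.card_le_one]
      intro a ha b hb
      apply T.u_inj U
      rw [key a ha, key b hb]
    have h6 := Finset.card_le_card h4
    have h7 := Finset.card_insert_le x ((Kset u y).filter fun s => s ∈ Kset u x)
    rw [T.K_card U y x] at h3
    omega
  have h3 : Disjoint (Kset u x) S := by
    rw [Finset.disjoint_right]
    intro s hs
    rw [hS, Finset.mem_biUnion] at hs
    obtain ⟨y, _, hs⟩ := hs
    exact (Finset.mem_filter.1 hs).2.2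
  have h4 : Kset u x ∪ S ⊆ NR G x := by
    intro s hs
    rw [NR, Finset.mem_filter]
    refine ⟨Finset.mem_univ _, ?_⟩
    rw [Finset.mem_union] at hs
    rcases hs with hs | hs
    · exact ⟨(mem_Kset.1 hs).1, u x, U.ne x, T.u_fix U x, (mem_Kset.1 hs).2⟩
    · rw [hS, Finset.mem_biUnion] at hs
      obtain ⟨y, hy, hs⟩ := hs
      rw [Finset.mem_filter] at hs
      exact ⟨hs.2.1, u y, U.ne y, (mem_Kset.1 (T.K_symm U hy)).2, (mem_Kset.1 hs.1).2⟩
  have h5 := Finset.card_le_card h4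
  rw [Finset.card_union_of_disjoint h3] at h5
  refine le_trans ?_ h5
  refine le_trans ?_ (Nat.add_le_add_left h2 _)
  rcases (Kset u x).card with _ | _ | m
  · simp
  · simp
  · simp only [Nat.add_sub_cancel]
    have : m + 1 + 1 - 2 = m := by omega
    rw [this]
    nlinarith

theorem NR_lt (x : X) : (NR G x).card + 1 ≤ Fintype.card X := by
  have : insert x (NR G x) ⊆ Finset.univ := Finset.subset_univ _
  have := Finset.card_le_card this
  rw [Finset.card_insert_of_notMem (by simp [NR])] at this
  exact this

/-- When `k = 2n` the out-neighbours of `x` are regular. -/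
theorem NR_lt' (T : RelConf G X R k l n) [Finite G] (hk : k = 2 * n) (x : X) :
    (NR G x).card + 2 * n + 1 ≤ Fintype.card X := by
  have h1 : Disjoint (NR G x) (Finset.univ.filter fun y => R x y) := by
    rw [Finset.disjoint_left]
    intro z hz hz'
    simp only [NR, Finset.mem_filter, Finset.mem_univ, true_and] at hz hz'
    obtain ⟨-, g, hg, h1, h2⟩ := hz
    exact hg (T.reg_out hk hz' h1 h2)
  have h2 : x ∉ NR G x ∪ Finset.univ.filter fun y => R x y := by
    simp [NR, T.irrefl]
  have : insert x (NR G x ∪ Finset.univ.filter fun y => R x y) ⊆ Finset.univ :=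
    Finset.subset_univ _
  have := Finset.card_le_card this
  rw [Finset.card_insert_of_notMem h2, Finset.card_union_of_disjoint h1, T.out, hk] at this
  exact this

theorem K_free (T : RelConf G X R k l n) [Finite G] (U : IsU u) (x : X) :
    ∃ a, Fintype.card X = 1 + (Kset u x).card + n * a := by
  have h1 : n ∣ (insert x (Kset u x))ᶜ.card := by
    rw [← (T.dih x).cardC]
    apply free_dvd_subgroup
    · intro a ha s hs
      have hax : a • x = x := (T.dih x).le ha
      rw [Finset.mem_compl, Finset.mem_insert, not_or] at hs ⊢
      refine ⟨fun e => hs.1 ?_, fun e => hs.2 ?_⟩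
      · rw [← smul_left_cancel_iff a, e, hax]
      · rw [← T.K_smul U a, hax]; exact e
    · intro a ha s hs h
      rw [Finset.mem_compl, Finset.mem_insert, not_or] at hs
      rcases T.rot_cases U ha h (Ne.symm hs.1) with e | e
      · exact e
      · rw [e] at h; exact absurd (mem_Kset.2 ⟨hs.1, h⟩) hs.2
  obtain ⟨a, ha⟩ := h1
  refine ⟨a, ?_⟩
  have h2 := Finset.card_add_card_compl (insert x (Kset u x))
  rw [Finset.card_insert_of_notMem (by simp [mem_Kset]), ha] at h2
  omega

end RelConf
end Even

section Even2
open Classical MulAction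

namespace RelConf

variable {G X : Type*} [Group G] [MulAction G X] [Fintype X] {R : X → X → Prop} {k l n : ℕ}
variable {u : X → G}

theorem l_dvd (T : RelConf G X R k l n) [Finite G] (U : IsU u) (x : X) : 2 * k ∣ n * l := by
  obtain ⟨y, hy⟩ := T.K_nonempty U x
  obtain ⟨h1, h2⟩ := T.K_orb U hy
  have h3 := T.k_dvd (orbF (stabilizer G x) y) (fun h => (mem_Kset.1 (h1 h)).1 rfl) (by
    intro h hh z hz
    rw [mem_orbF] at hz ⊢
    obtain ⟨g, hg, rfl⟩ := hz
    exact ⟨h * g, mul_mem hh hg, mul_smul _ _ _⟩)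
  rw [← h2, mul_assoc]
  exact Nat.mul_dvd_mul_left 2 h3

theorem K_half (T : RelConf G X R k l n) [Finite G] (U : IsU u) (x : X) :
    2 * (Kset u x).card = n := by
  rcases T.K_dich U x with h | h
  · exact h
  exfalso
  have h1 := T.NR_ge U x
  have h2 := T.eqn'
  have h3 := T.n_ge
  have h4 := T.l_gt
  rw [h] at h1
  rcases T.k_cases x with hk | hk
  · have h5 := NR_lt (G := G) x
    obtain ⟨v, hv⟩ : ∃ v, Fintype.card X = v + 1 := ⟨Fintype.card X - 1, by omega⟩
    rw [hk, hv, Nat.add_sub_cancel] at h2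
    have h6 : n * (n - 1) ≤ v := by omega
    have h7 : 0 < n * (n - 1) := Nat.mul_pos (by omega) (by omega)
    nlinarith
  · have h5 := T.NR_lt' hk x
    obtain ⟨m, hm⟩ := T.l_dvd U x
    have h8 : 4 ≤ l := by
      have : l = 4 * m := by
        apply Nat.eq_of_mul_eq_mul_left (show 0 < n by omega)
        rw [hm, hk]; ring
      omega
    obtain ⟨v, hv⟩ : ∃ v, Fintype.card X = v + 1 := ⟨Fintype.card X - 1, by omega⟩
    obtain ⟨p, rfl⟩ : ∃ p, n = p + 1 := ⟨n - 1, by omega⟩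
    rw [hk, hv, Nat.add_sub_cancel] at h2
    rw [hv] at h5
    rw [Nat.add_sub_cancel] at h1
    have h6 : (p + 1) * p + 2 * (p + 1) ≤ v := by omega
    have h7 : 2 * (p + 1) - 1 = 2 * p + 1 := by omega
    rw [h7] at h2
    nlinarith

/-- For `n` even and `k = n` the design is a biplane. -/
theorem even_param (T : RelConf G X R k l n) [Finite G] (U : IsU u) (x : X) (hk : k = n) :
    l = 2 ∧ Fintype.card X = 1 + (Kset u x).card * (n - 1) := by
  have h0 := T.K_half U x
  have h1 := T.NR_ge U x
  have h2 := T.eqn'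
  have h3 := T.n_ge
  have h4 := T.l_gt
  have h5 := NR_lt (G := G) x
  have hkv := T.k_lt
  obtain ⟨a, ha⟩ := T.K_free U x
  obtain ⟨m, hm⟩ := T.l_dvd U x
  have hl : l = 2 * m := by
    apply Nat.eq_of_mul_eq_mul_left (show 0 < n by omega)
    rw [hm, hk]; ring
  obtain ⟨q, hq⟩ : ∃ q, (Kset u x).card = q + 2 := ⟨(Kset u x).card - 2, by omega⟩
  rw [hq] at h0 h1 ha ⊢
  have hn : n = 2 * q + 4 := by omega
  subst hn
  subst hk
  subst hl
  have e0 : Fintype.card X = (q + 2) * (1 + 2 * a) + 1 := by rw [ha]; ring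
  have e1 : Fintype.card X - 1 = (q + 2) * (1 + 2 * a) := by omega
  rw [e1, show 2 * q + 4 - 1 = 2 * q + 3 by omega] at h2
  have e2 : m * (1 + 2 * a) = 2 * q + 3 := by
    apply Nat.eq_of_mul_eq_mul_left (show 0 < 2 * (q + 2) by omega)
    linarith
  rw [show q + 2 - 1 = q + 1 by omega] at h1
  have e3 : q + 1 ≤ 1 + 2 * a := by
    apply Nat.le_of_mul_le_mul_left (c := q + 2) _ (by omega)
    rw [← e1]; omega
  have hm1 : m = 1 := by
    by_contra hne
    have hm2 : m ≠ 2 := by rintro rfl; omega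
    have hm3 : 3 ≤ m := by omega
    have : 3 * (q + 1) ≤ 2 * q + 3 := by nlinarith
    have hq0 : q = 0 := by omega
    subst hq0
    have : a = 0 := by
      by_contra h
      have : 1 ≤ a := by omega
      nlinarith
    subst this
    omega
  subst hm1
  refine ⟨rfl, ?_⟩
  rw [show 2 * q + 4 - 1 = 2 * q + 3 by omega]
  rw [← e2, ha]
  ring

/-- In a biplane, the points `z' ≠ z` fixed by an involution `t ∈ G_z` correspond to the
`t`-invariant pairs of out-neighbours of `z`; here `t` fixes at most two out-neighbours. -/
theorem biplane_fix (T : RelConf G X R k l n) (hl : l = 2) {z : X} {t : G} (ht : t * t = 1)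
    (hz : t • z = z)
    (h3 : ∀ p q q', R z p → R z q → R z q' → t • p = p → t • q = q → t • q' = q' →
      q ≠ p → q' ≠ p → q = q') :
    2 * (Finset.univ.filter fun w => w ≠ z ∧ t • w = w).card =
      (Finset.univ.filter fun p => R z p ∧
        ∃ q, q ≠ p ∧ R z q ∧ (t • p = q ∨ (t • p = p ∧ t • q = q))).card := by
  have htt : ∀ w : X, t • t • w = w := fun w => by rw [← mul_smul, ht, one_smul]
  have hRz : ∀ {p}, R z p → R z (t • p) := by
    intro p hp
    have := T.inv t _ _ hp
    rwa [hz] at this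
  -- both neighbours of a point fixed by `t` are mates of each other
  have mate : ∀ w p, w ≠ z → t • w = w → R w p → R z p →
      ∃ q, q ≠ p ∧ R z q ∧ R w q ∧ (t • p = q ∨ (t • p = p ∧ t • q = q)) := by
    intro w p hw htw hwp hzp
    have hc := T.cout z w (Ne.symm hw)
    rw [hl, Finset.card_eq_two] at hc
    obtain ⟨b, c, hbc, hS⟩ := hc
    have hm : ∀ r, (R z r ∧ R w r) ↔ r = b ∨ r = c := by
      intro r
      have : r ∈ (Finset.univ.filter fun y => R z y ∧ R w y) ↔ r ∈ ({b, c} : Finset X) := by rw [hS]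
      simpa using this
    have hinv : ∀ r, (R z r ∧ R w r) → (R z (t • r) ∧ R w (t • r)) := by
      rintro r ⟨h1, h2⟩
      refine ⟨hRz h1, ?_⟩
      have := T.inv t _ _ h2
      rwa [htw] at this
    obtain ⟨q, hqp, hq⟩ : ∃ q, q ≠ p ∧ ∀ r, (R z r ∧ R w r) ↔ r = p ∨ r = q := by
      rcases (hm p).1 ⟨hzp, hwp⟩ with rfl | rfl
      · exact ⟨c, hbc.symm, hm⟩
      · exact ⟨b, hbc, fun r => by rw [hm r, or_comm]⟩
    have hq1 := (hq q).2 (Or.inr rfl)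
    refine ⟨q, hqp, hq1.1, hq1.2, ?_⟩
    rcases (hq _).1 (hinv p ⟨hzp, hwp⟩) with h | h
    · right
      refine ⟨h, ?_⟩
      rcases (hq _).1 (hinv q hq1) with h' | h'
      · exfalso
        apply hqp
        rw [← htt q, h', h]
      · exact h'
    · left; exact h
  have hdc := double_count (Finset.univ.filter fun w => w ≠ z ∧ t • w = w)
    (Finset.univ.filter fun p => R z p ∧
        ∃ q, q ≠ p ∧ R z q ∧ (t • p = q ∨ (t • p = p ∧ t • q = q)))
    (fun w p => R w p) 2 1 (by
      intro w hw
      simp only [Finset.mem_filter, Finset.mem_univ, true_and] at hw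
      rw [← hl, ← T.cout z w (Ne.symm hw.1), Finset.filter_filter]
      congr 1
      ext p
      simp only [Finset.mem_filter, Finset.mem_univ, true_and]
      constructor
      · rintro ⟨⟨h1, -⟩, h2⟩; exact ⟨h1, h2⟩
      · rintro ⟨h1, h2⟩
        obtain ⟨q, a1, a2, -, a4⟩ := mate w p hw.1 hw.2 h2 h1
        exact ⟨⟨h1, q, a1, a2, a4⟩, h2⟩)
    (by
      intro p hp
      simp only [Finset.mem_filter, Finset.mem_univ, true_and] at hp
      obtain ⟨hzp, q, hqp, hzq, hmate⟩ := hp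
      have hinv : ∀ r, (R r p ∧ R r q) → (R (t • r) p ∧ R (t • r) q) := by
        rintro r ⟨h1, h2⟩
        have h1' := T.inv t _ _ h1
        have h2' := T.inv t _ _ h2
        rcases hmate with h | ⟨h, h'⟩
        · rw [h] at h1'
          rw [← h, htt] at h2'
          exact ⟨h2', h1'⟩
        · rw [h] at h1'
          rw [h'] at h2'
          exact ⟨h1', h2'⟩
      have hc := T.cin p q hqp.symm
      rw [hl, Finset.card_eq_two] at hc
      obtain ⟨b, c, hbc, hS⟩ := hc
      have hm : ∀ r, (R r p ∧ R r q) ↔ r = b ∨ r = c := by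
        intro r
        have : r ∈ (Finset.univ.filter fun y => R y p ∧ R y q) ↔ r ∈ ({b, c} : Finset X) := by
          rw [hS]
        simpa using this
      obtain ⟨w, hwz, hw⟩ : ∃ w, w ≠ z ∧ ∀ r, (R r p ∧ R r q) ↔ r = z ∨ r = w := by
        rcases (hm z).1 ⟨hzp, hzq⟩ with rfl | rfl
        · exact ⟨c, hbc.symm, hm⟩
        · exact ⟨b, hbc, fun r => by rw [hm r, or_comm]⟩
      rw [Finset.card_eq_one]
      refine ⟨w, ?_⟩
      ext w'
      simp only [Finset.mem_filter, Finset.mem_univ, true_and, Finset.mem_singleton]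
      constructor
      · rintro ⟨⟨h1, h2⟩, h4⟩
        obtain ⟨q', a1, a2, a3, a4⟩ := mate w' p h1 h2 h4 hzp
        have hqq : q' = q := by
          rcases hmate with h | ⟨h, h'⟩
          · rcases a4 with h5 | ⟨h5, -⟩
            · rw [← h, ← h5]
            · rw [h5] at h; exact absurd h.symm hqp
          · rcases a4 with h5 | ⟨h5, h6⟩
            · rw [h] at h5; exact absurd h5.symm a1
            · exact h3 p q' q hzp a2 hzq h h6 h' a1 hqp
        rw [hqq] at a3
        rcases (hw w').1 ⟨h4, a3⟩ with h | h
        · exact absurd h h1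
        · exact h
      · rintro rfl
        have h5 := (hw w').2 (Or.inr rfl)
        refine ⟨⟨hwz, ?_⟩, h5.1⟩
        rcases (hw _).1 (hinv w' h5) with h | h
        · exfalso; apply hwz; rw [← htt w', h, hz]
        · exact h)
  linarith

end RelConf
end Even2

section Even3
open Classical MulAction

namespace RelConf

variable {G X : Type*} [Group G] [MulAction G X] [Fintype X] {R : X → X → Prop} {k l n : ℕ}
variable {u : X → G}

theorem R_smul (T : RelConf G X R k l n) {z p : X} {g : G} (hg : g • z = z) (h : R z p) :
    R z (g • p) := by
  have := T.inv g _ _ h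
  rwa [hg] at this

/-- When `k = n` the rotation subgroup of `G_z` is transitive on the out-neighbours of `z`. -/
theorem rot_tr (T : RelConf G X R k l n) [Finite G] (hk : k = n) {z p q : X} (hp : R z p)
    (hq : R z q) : ∃ a ∈ rot (stabilizer G z), a • p = q := by
  have h1 := orbF_card (rot (stabilizer G z)) p
  have h2 : (rot (stabilizer G z) ⊓ stabilizer G p : Subgroup G) = ⊥ := by
    rw [Subgroup.eq_bot_iff_forall]
    rintro a ⟨ha, hap⟩
    exact T.semi z a ha p hp hap
  rw [h2, Subgroup.card_bot, mul_one, (T.dih z).cardC, ← hk] at h1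
  have h3 : orbF (rot (stabilizer G z)) p ⊆ Finset.univ.filter fun y => R z y := by
    intro y hy
    rw [mem_orbF] at hy
    obtain ⟨g, hg, rfl⟩ := hy
    rw [Finset.mem_filter]
    exact ⟨Finset.mem_univ _, T.R_smul ((T.dih z).le hg) hp⟩
  have h4 := Finset.eq_of_subset_of_card_le h3 (by rw [T.out, h1])
  have h5 : q ∈ orbF (rot (stabilizer G z)) p := by
    rw [h4, Finset.mem_filter]; exact ⟨Finset.mem_univ _, hq⟩
  exact mem_orbF.1 h5

/-- A rotation carrying a fixed point of a reflection to another one is an involution. -/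
theorem refl_rot_sq (T : RelConf G X R k l n) {z p : X} {t a : G}
    (htz : t • z = z) (htC : t ∉ rot (stabilizer G z)) (ha : a ∈ rot (stabilizer G z))
    (hp : R z p) (h1 : t • p = p) (h2 : t • a • p = a • p) : a * a = 1 := by
  apply T.semi z _ (mul_mem ha ha) p hp
  have h3 := (T.dih z).conj htz htC ha
  have h4 : t • a • p = (t * a * t⁻¹) • (t • p) := by
    rw [← mul_smul, ← mul_smul]; congr 1; group
  rw [h2, h3, h1] at h4
  rw [mul_smul, h4, smul_inv_smul]

theorem even_fix (T : RelConf G X R k l n) [Finite G] (U : IsU u) (hk : k = n) (hl : l = 2)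
    {z : X} {t : G} (htz : t • z = z) (htC : t ∉ rot (stabilizer G z)) :
    2 * (Finset.univ.filter fun w => w ≠ z ∧ t • w = w).card = n := by
  have ht := (T.dih z).inv t htz htC
  rw [T.biplane_fix hl ht htz]
  · rw [← hk, ← T.out z]
    congr 1
    ext p
    simp only [Finset.mem_filter, Finset.mem_univ, true_and, and_iff_left_iff_imp]
    intro hp
    by_cases h : t • p = p
    · refine ⟨u z • p, fun e => U.ne z (T.semi z _ (U.mem z) p hp e),
        T.R_smul (T.u_fix U z) hp, Or.inr ⟨h, ?_⟩⟩
      rw [← mul_smul, (T.comm_iff U).2 htz, mul_smul, h]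
    · exact ⟨t • p, h, T.R_smul htz hp, Or.inl rfl⟩
  · have key : ∀ p q, R z p → R z q → t • p = p → t • q = q → q ≠ p → q = u z • p := by
      intro p q hp hq h1 h2 h3
      obtain ⟨a, ha, rfl⟩ := T.rot_tr hk hp hq
      have h4 := T.refl_rot_sq htz htC ha hp h1 h2
      rw [T.u_eq U ha h4 (fun e => h3 (by rw [e, one_smul]))]
    intro p q q' hp hq hq' h1 h2 h3 h4 h5
    rw [key p q hp hq h1 h2 h4, key p q' hp hq' h1 h3 h5]

/-- Counting fixed points of the involutions not of the form `u y` gives `n = 6`. -/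
theorem even_six (T : RelConf G X R k l n) [Finite G] (U : IsU u) (x : X) (hk : k = n) :
    n = 6 ∧ l = 2 ∧ Fintype.card X = 16 := by
  have := Fintype.ofFinite G
  obtain ⟨hl, hv⟩ := T.even_param U x hk
  have hK := T.K_half U x
  have hn3 := T.n_ge
  have hdc := double_count (Finset.univ : Finset X)
    (Finset.univ.filter fun t : G => t ≠ 1 ∧ t * t = 1 ∧ (∃ z : X, t • z = z) ∧ ∀ y, t ≠ u y)
    (fun z t => t • z = z) (Kset u x).card (1 + (Kset u x).card) (by
      intro z _
      have e : (Finset.filter (fun t : G => t • z = z) (Finset.univ.filter fun t : G => t ≠ 1 ∧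
          t * t = 1 ∧ (∃ z : X, t • z = z) ∧ ∀ y, t ≠ u y)) =
          (Finset.univ.filter fun g : G => g • z = z ∧ g ∉ rot (stabilizer G z)) \
            (Kset u z).image u := by
        ext t
        simp only [Finset.mem_filter, Finset.mem_univ, true_and, Finset.mem_sdiff,
          Finset.mem_image, not_exists, not_and]
        constructor
        · rintro ⟨⟨h1, h2, -, h4⟩, h5⟩
          refine ⟨⟨h5, fun h => h4 z (T.u_eq U h h2 h1)⟩, fun y _ e => h4 y e.symm⟩
        · rintro ⟨⟨h1, h2⟩, h3⟩
          refine ⟨⟨?_, (T.dih z).inv t h1 h2, ⟨z, h1⟩, ?_⟩, h1⟩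
          · rintro rfl; exact h2 (one_mem _)
          · rintro y rfl
            have hyz : y ≠ z := by rintro rfl; exact h2 (U.mem y)
            exact h3 y (mem_Kset.2 ⟨hyz, T.u_symm U h1⟩) rfl
      rw [e, Finset.card_sdiff_of_subset, T.refl_card, Finset.card_image_of_injective _
        (fun a b h => T.u_inj U h), T.K_card U z x]
      · omega
      · intro t ht
        rw [Finset.mem_image] at ht
        obtain ⟨y, hy, rfl⟩ := ht
        simp only [Finset.mem_filter, Finset.mem_univ, true_and]
        exact ⟨(mem_Kset.1 (T.K_symm U hy)).2, T.u_notMem U (mem_Kset.1 hy).1⟩)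
    (by
      intro t ht
      simp only [Finset.mem_filter, Finset.mem_univ, true_and] at ht
      obtain ⟨h1, h2, ⟨z, hz⟩, h4⟩ := ht
      have h5 := T.even_fix U hk hl hz (fun h => h4 z (T.u_eq U h h2 h1))
      have h6 : (Finset.univ.filter fun w : X => t • w = w) =
          insert z (Finset.univ.filter fun w => w ≠ z ∧ t • w = w) := by
        ext w
        simp only [Finset.mem_filter, Finset.mem_univ, true_and, Finset.mem_insert]
        constructor
        · intro h
          by_cases e : w = z
          · exact Or.inl e
          · exact Or.inr ⟨e, h⟩
        · rintro (rfl | h)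
          · exact hz
          · exact h.2
      rw [h6, Finset.card_insert_of_notMem (by simp)]
      omega)
  rw [Finset.card_univ] at hdc
  set ν := (Kset u x).card with hν
  have h1 : ν + 1 ∣ Fintype.card X * ν := by
    rw [hdc, add_comm 1 ν]; exact Dvd.intro_left _ rfl
  have h2 : ν + 1 ∣ Fintype.card X :=
    Nat.Coprime.dvd_of_dvd_mul_right (by simp) h1
  obtain ⟨m, hm⟩ : ∃ m, ν = m + 2 := ⟨ν - 2, by omega⟩
  have h3 : Fintype.card X = (ν + 1) * (2 * m + 1) + 4 := by
    rw [hv, ← hK, hm, show 2 * (m + 2) - 1 = 2 * m + 3 by omega]; ring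
  rw [h3] at h2
  have h4 : ν + 1 ∣ 4 := (Nat.dvd_add_right (Dvd.intro _ rfl)).1 h2
  have h5 := Nat.le_of_dvd (by norm_num) h4
  have h6 : ν = 3 := by
    have : ν = 2 ∨ ν = 3 := by omega
    rcases this with h | h
    · rw [h] at h4; norm_num at h4
    · exact h
  refine ⟨by omega, hl, ?_⟩
  have : m = 1 := by omega
  rw [h3, h6, this]

end RelConf
end Even3

section Even4
open Classical MulAction

namespace RelConf

variable {G X : Type*} [Group G] [MulAction G X] [Fintype X] {R : X → X → Prop} {k l n : ℕ}
variable {u : X → G}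

/-- `G_x ∩ G_y` is trivial. -/
def Reg (G : Type*) {X : Type*} [Group G] [MulAction G X] (x y : X) : Prop :=
  ∀ g : G, g • x = x → g • y = y → g = 1

/-- If `u w` interchanges `x` and `y` then it commutes with a non-trivial element of
`G_x ∩ G_y`, provided the latter is non-trivial; so that element fixes `w`. -/
theorem reg_aux (T : RelConf G X R k l n) [Finite G] (U : IsU u) {x w : X}
    (hw : Reg G x w) (hxw : u w • x ≠ x) : Reg G x (u w • x) := by
  by_contra hh
  simp only [Reg, not_forall] at hh
  obtain ⟨g, h1, h2, h3⟩ := hh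
  have := Fintype.ofFinite G
  set y := u w • x with hy
  have hyx : u w • y = x := by rw [hy, ← mul_smul, U.sq, one_smul]
  let S : Finset G := Finset.univ.filter fun g : G => g • x = x ∧ g • y = y
  have hS : ∀ {a : G}, a ∈ S ↔ a • x = x ∧ a • y = y := by simp [S]
  have hi := u_inv U w
  have c1 := card_mod_two_fixed S (fun a => u w * a * u w) (by
      intro a _
      calc u w * (u w * a * u w) * u w = (u w * u w) * a * (u w * u w) := by group
        _ = a := by rw [U.sq]; group)
    (by
      intro a ha
      rw [hS] at ha ⊢
      constructor
      · rw [mul_smul, mul_smul, ← hy, ha.2, hyx]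
      · rw [mul_smul, mul_smul, hyx, ha.1])
  have c2 := card_mod_two_fixed S (fun a => a * g) (by
      intro a _
      rw [mul_assoc, T.two_fix_sq h1 h2 (Ne.symm hxw), mul_one])
    (by
      intro a ha
      rw [hS] at ha ⊢
      rw [mul_smul, mul_smul, h1, h2]; exact ha)
  have c3 : (S.filter fun a => a * g = a) = ∅ := by
    rw [Finset.filter_eq_empty_iff]
    intro a _ h
    exact h3 (mul_eq_left.1 h)
  rw [c3, c1, Finset.card_empty] at c2
  have c4 : (1 : G) ∈ S.filter fun a => u w * a * u w = a := by
    rw [Finset.mem_filter, hS]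
    simp [U.sq]
  have c5 : 1 < (S.filter fun a => u w * a * u w = a).card := by
    have := Finset.card_pos.2 ⟨_, c4⟩
    omega
  obtain ⟨a, ha, ha1⟩ := Finset.exists_mem_ne c5 1
  rw [Finset.mem_filter, hS] at ha
  apply ha1
  apply hw a ha.1.1
  apply (T.comm_iff U).1
  have := ha.2
  calc a * u w = (u w * a * u w) * u w := by rw [this]
    _ = u w * a * (u w * u w) := by group
    _ = u w * a := by rw [U.sq, mul_one]

theorem reg_inj (T : RelConf G X R k l n) [Finite G] (U : IsU u) {x w w' : X}
    (hw : Reg G x w) (h : u w • x = u w' • x) (hxw : u w • x ≠ x) : w = w' := by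
  have hs : (u w' * u w) • x = x := by
    rw [mul_smul, h, ← mul_smul, U.sq, one_smul]
  apply T.u_inj U
  have hinv : u w * (u w' * u w) * (u w)⁻¹ = (u w' * u w)⁻¹ := by
    rw [mul_inv_rev, u_inv U, u_inv U]
    calc u w * (u w' * u w) * u w = u w * u w' * (u w * u w) := by group
      _ = u w * u w' := by rw [U.sq, mul_one]
  have h1 : u w' * u w = 1 := by
    by_contra h1
    by_cases hC : u w' * u w ∈ rot (stabilizer G x)
    · exact hxw (T.star hC h1 (Or.inr hinv))
    · apply h1
      apply hw _ hs
      have hsq := (T.dih x).inv _ hs hC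
      apply (T.comm_iff U).1
      rw [inv_eq_of_mul_eq_one_left hsq] at hinv
      exact (mul_inv_eq_iff_eq_mul.1 hinv).symm
  rw [eq_inv_of_mul_eq_one_left h1, u_inv U]

/-- For regular `y` there is exactly one `w` such that `u w` maps `x` to `y`. -/
theorem reg_unique (T : RelConf G X R k l n) [Finite G] (U : IsU u) {x y : X} (hy : Reg G x y)
    (hxy : x ≠ y) : ∃ w, u w • x = y ∧ ∀ w', u w' • x = y → w' = w := by
  let S : Finset X := Finset.univ.filter fun w => Reg G x w ∧ w ≠ x
  have hS : ∀ {a : X}, a ∈ S ↔ Reg G x a ∧ a ≠ x := by simp [S]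
  have mv : ∀ w, Reg G x w → u w • x ≠ x := by
    intro w h1 h
    exact U.ne w (h1 _ h (T.u_fix U w))
  have h1 : ∀ w ∈ S, u w • x ∈ S := by
    intro w hw
    rw [hS] at hw ⊢
    exact ⟨T.reg_aux U hw.1 (mv w hw.1), mv w hw.1⟩
  have h2 : Set.InjOn (fun w => u w • x) S := by
    intro a ha b hb hab
    rw [Finset.mem_coe, hS] at ha
    exact T.reg_inj U ha.1 hab (mv a ha.1)
  have h3 := Finset.surjOn_of_injOn_of_card_le (fun w => u w • x) h1 h2 le_rfl
  obtain ⟨w, hw, hwy⟩ := h3 (Finset.mem_coe.2 (hS.2 ⟨hy, hxy.symm⟩))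
  refine ⟨w, hwy, ?_⟩
  intro w' hw'
  have hw'' : Reg G x w' := by
    intro g h1 h2
    apply hy g h1
    have := (T.comm_iff U).2 h2
    rw [← hw', ← mul_smul, this, mul_smul, h1]
  exact T.reg_inj U hw'' (hw'.trans hwy.symm) (mv _ hw'')

theorem reg_of_out (T : RelConf G X R k l n) [Finite G] (hk : k = 2 * n) {x y : X}
    (h : R x y) : Reg G x y := fun _ h1 h2 => T.reg_out hk h h1 h2

theorem R_symm (T : RelConf G X R k l n) [Finite G] (U : IsU u) (hk : k = 2 * n) {x y : X}
    (h : R x y) : R y x := by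
  obtain ⟨w, hw, -⟩ := T.reg_unique U (T.reg_of_out hk h) (T.ne h)
  have := T.inv (u w) _ _ h
  rw [hw] at this
  have h2 : u w • y = x := by rw [← hw, ← mul_smul, U.sq, one_smul]
  rwa [h2] at this

/-- The number of `y` with `R y (u w y)` is `k` for every `w`. -/
theorem trace_count (T : RelConf G X R k l n) [Finite G] (U : IsU u) (hk : k = 2 * n) (w : X) :
    (Finset.univ.filter fun y => R y (u w • y)).card = k := by
  have h1 : ∀ w', (Finset.univ.filter fun y => R y (u w' • y)).card =
      (Finset.univ.filter fun y => R y (u w • y)).card := by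
    intro w'
    obtain ⟨g, rfl⟩ := T.trans w w'
    symm
    apply Finset.card_bij (fun y _ => g • y)
    · intro y hy
      rw [Finset.mem_filter] at hy ⊢
      refine ⟨Finset.mem_univ _, ?_⟩
      have := T.inv g _ _ hy.2
      rw [← T.conj_u U g w]
      simpa [mul_smul] using this
    · intro a _ b _ h; exact smul_left_cancel g h
    · intro y hy
      rw [Finset.mem_filter, ← T.conj_u U g w] at hy
      refine ⟨g⁻¹ • y, ?_, smul_inv_smul _ _⟩
      rw [Finset.mem_filter]
      refine ⟨Finset.mem_univ _, ?_⟩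
      rw [← T.inv_iff g]
      simpa [mul_smul] using hy.2
  have h2 := double_count (Finset.univ : Finset X) (Finset.univ : Finset X)
    (fun w y => R y (u w • y)) (Finset.univ.filter fun y => R y (u w • y)).card k
    (fun w' _ => h1 w') (by
      intro y _
      rw [← T.out y]
      apply Finset.card_bij (fun w _ => u w • y)
      · intro a ha
        rw [Finset.mem_filter] at ha ⊢
        exact ⟨Finset.mem_univ _, ha.2⟩
      · intro a ha b _ h
        rw [Finset.mem_filter] at ha
        obtain ⟨c, -, hc⟩ := T.reg_unique U (T.reg_of_out hk ha.2) (T.ne ha.2)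
        rw [hc a rfl, hc b h.symm]
      · intro z hz
        rw [Finset.mem_filter] at hz
        obtain ⟨c, hc, -⟩ := T.reg_unique U (T.reg_of_out hk hz.2) (T.ne hz.2)
        refine ⟨c, ?_, hc⟩
        rw [Finset.mem_filter, hc]
        exact ⟨Finset.mem_univ _, hz.2⟩)
  exact Nat.eq_of_mul_eq_mul_left (by rw [Finset.card_univ]; have := T.k_lt; omega) h2

/-- Applying the trace identity to `R` and to `R` composed with `u w`. -/
theorem even_trace (T : RelConf G X R k l n) [Finite G] (U : IsU u) (hk : k = 2 * n) (w : X) :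
    (∃ d : ℤ, (k : ℤ) ^ 2 = ((k : ℤ) - l) * d ^ 2) ∧ Odd (Fintype.card X) := by
  have hsymm : ∀ x y, R x y ↔ R y x := fun x y => ⟨T.R_symm U hk, T.R_symm U hk⟩
  have hlk := T.l_lt
  have hkv := T.k_lt
  have hsum : ∀ (p : X → Prop) [DecidablePred p], ∑ y, (if p y then (1 : ℝ) else 0) =
      ((Finset.univ.filter p).card : ℝ) := by
    intro p _; rw [Finset.sum_boole]
  have hprod : ∀ x y, ∑ z, (if R x z then (1 : ℝ) else 0) * (if R z y then (1 : ℝ) else 0) =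
      if x = y then (k : ℝ) else l := by
    intro x y
    have : ∀ z, (if R x z then (1 : ℝ) else 0) * (if R z y then (1 : ℝ) else 0) =
        if R x z ∧ R y z then 1 else 0 := by
      intro z
      rw [hsymm z y]
      by_cases h1 : R x z <;> by_cases h2 : R y z <;> simp [h1, h2]
    rw [Finset.sum_congr rfl fun z _ => this z, hsum]
    split_ifs with h
    · subst h; simp only [and_self]; rw [T.out]
    · rw [T.cout x y h]
  have hone : ∀ x y : X, (((k : ℝ) - l) • (1 : Matrix X X ℝ) +
      (l : ℝ) • Matrix.of (fun _ _ => 1) : Matrix X X ℝ) x y = if x = y then (k : ℝ) else l := by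
    intro x y
    simp only [Matrix.add_apply, Matrix.smul_apply, Matrix.one_apply, Matrix.of_apply, smul_eq_mul]
    split_ifs <;> ring
  constructor
  · obtain ⟨d, hd, -⟩ := trace_lemma (Matrix.of fun x y => if R x y then (1 : ℝ) else 0) k l
      (Fintype.card X) 0 rfl (by omega) hlk T.eqn (by
        ext x y
        rw [hone, Matrix.mul_apply]
        exact hprod x y)
      (fun x => by simp only [Matrix.of_apply]; rw [hsum, T.out])
      (fun x => by simp only [Matrix.of_apply]; rw [hsum, T.inn])
      (by simp [Matrix.trace, T.irrefl])
    refine ⟨d, ?_⟩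
    rw [← hd]; push_cast; ring
  · have hswap : ∀ y z, R (u w • y) z ↔ R y (u w • z) := by
      intro y z
      rw [← T.inv_iff (u w), ← mul_smul, U.sq, one_smul]
    have hbij : Function.Bijective (fun y : X => u w • y) := MulAction.bijective (u w)
    obtain ⟨d, hd, hd2⟩ := trace_lemma (Matrix.of fun x y => if R x (u w • y) then (1 : ℝ) else 0)
      k l (Fintype.card X) k rfl (by omega) hlk T.eqn (by
        ext x y
        rw [hone, Matrix.mul_apply]
        simp only [Matrix.of_apply]
        rw [← hprod x y, ← hbij.sum_comp]
        apply Finset.sum_congr rfl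
        intro z _
        rw [← mul_smul, U.sq, one_smul, hswap z (u w • y), ← mul_smul, U.sq, one_smul])
      (fun x => by
        simp only [Matrix.of_apply]
        rw [hbij.sum_comp (fun y => if R x y then (1 : ℝ) else 0), hsum, T.out])
      (fun y => by simp only [Matrix.of_apply]; rw [hsum, T.inn])
      (by
        simp only [Matrix.trace, Matrix.diag, Matrix.of_apply]
        rw [hsum, T.trace_count U hk])
    have h1 : d = 0 := by
      rw [sub_self] at hd
      have : ((k : ℤ) - l) ≠ 0 := by omega
      have h3 : ((k : ℤ) - l) * d ^ 2 = 0 := by rw [← hd]; ring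
      rcases mul_eq_zero.1 h3 with h | h
      · exact absurd h this
      · exact pow_eq_zero_iff (two_ne_zero) |>.1 h
    rw [h1] at hd2
    rcases hd2 with ⟨c, hc⟩
    refine ⟨(-c).toNat, ?_⟩
    omega

theorem even_false (T : RelConf G X R k l n) [Finite G] (U : IsU u) (x : X) (hk : k = 2 * n) :
    False := by
  have h0 := T.K_half U x
  have h1 := T.NR_ge U x
  have h2 := T.eqn'
  have h3 := T.n_ge
  have h4 := T.l_gt
  have h5 := T.NR_lt' hk x
  have hkv := T.k_lt
  obtain ⟨a, ha⟩ := T.K_free U x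
  obtain ⟨m, hm⟩ := T.l_dvd U x
  obtain ⟨⟨d, hd⟩, hodd⟩ := T.even_trace U hk x
  have hl : l = 4 * m := by
    apply Nat.eq_of_mul_eq_mul_left (show 0 < n by omega)
    rw [hm, hk]; ring
  obtain ⟨q, hq⟩ : ∃ q, (Kset u x).card = q + 2 := ⟨(Kset u x).card - 2, by omega⟩
  have hq' := hq
  rw [hq] at h0 h1 ha
  have hn : n = 2 * q + 4 := by omega
  subst hn
  subst hl
  have e0 : Fintype.card X = (q + 2) * (1 + 2 * a) + 1 := by rw [ha]; ring
  have e1 : Fintype.card X - 1 = (q + 2) * (1 + 2 * a) := by omega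
  rw [e1, hk, show 2 * (2 * q + 4) - 1 = 4 * q + 7 by omega] at h2
  have e2 : m * (1 + 2 * a) = 4 * q + 7 := by
    apply Nat.eq_of_mul_eq_mul_left (show 0 < 4 * (q + 2) by omega)
    linarith
  rw [show q + 2 - 1 = q + 1 by omega] at h1
  have e3 : q + 5 ≤ 1 + 2 * a := by
    apply Nat.le_of_mul_le_mul_left (c := q + 2) _ (by omega)
    rw [← e1]
    have : (q + 2) * (q + 5) = (q + 2) * (q + 1) + 2 * (2 * q + 4) := by ring
    omega
  have hq2 : q % 2 = 0 := by
    rw [e0] at hodd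
    have : (q + 2) * (1 + 2 * a) = q + 2 * (1 + a * q + 2 * a) := by ring
    rw [this] at hodd
    obtain ⟨c, hc⟩ := hodd
    omega
  have hm4 : m < 4 := by
    by_contra h
    have : 4 ≤ m := by omega
    nlinarith
  rw [hk] at hd
  have hm0 : m ≠ 0 := by rintro rfl; omega
  have hm2 : m ≠ 2 := by rintro rfl; omega
  have hm13 : m = 1 ∨ m = 3 := by omega
  rcases hm13 with rfl | rfl
  · -- `ν - 1` divides `4`, so `n = 4`
    have hd2 : 4 * ((q : ℤ) + 2) ^ 2 = ((q : ℤ) + 1) * d ^ 2 := by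
      push_cast at hd; linarith
    have h6 : ((q : ℤ) + 1) ∣ 4 := by
      refine ⟨d ^ 2 - 4 * (q + 1) - 8, ?_⟩
      linear_combination hd2
    have h7 : (q + 1) ∣ 4 := by exact_mod_cast h6
    have h8 := Nat.le_of_dvd (by norm_num) h7
    have h9 : q = 0 ∨ q = 2 := by omega
    rcases h9 with rfl | rfl
    swap
    · norm_num at h7
    rw [zero_add] at hq'
    have hcard : ∀ y, (Kset u y).card = 2 := fun y => (T.K_card U y x).trans hq'
    obtain ⟨y, hy⟩ := T.K_nonempty U x
    obtain ⟨z, hz, hzy⟩ := Finset.exists_mem_ne (s := Kset u x) (by rw [hcard]; norm_num) y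
    have hKx : Kset u x = {y, z} := by
      symm
      apply Finset.eq_of_subset_of_card_le
      · intro w hw
        rw [Finset.mem_insert, Finset.mem_singleton] at hw
        rcases hw with rfl | rfl
        · exact hy
        · exact hz
      · rw [hcard, Finset.card_pair hzy.symm]
    have hyx := (mem_Kset.1 hy).1
    have hzx := (mem_Kset.1 hz).1
    have huy := (mem_Kset.1 (T.K_symm U hy)).2
    have hzK : z ∈ Kset u y := by
      have h10 : u y • z ∈ Kset u x := by
        have := (T.K_smul U (u y)).2 hz
        rwa [huy] at this
      rw [hKx, Finset.mem_insert, Finset.mem_singleton] at h10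
      rw [mem_Kset]
      refine ⟨hzy, ?_⟩
      rcases h10 with h | h
      · exfalso
        apply hzy
        apply smul_left_cancel (u y)
        rw [h, T.u_fix U]
      · exact h
    have hKy : Kset u y = {x, z} := by
      symm
      apply Finset.eq_of_subset_of_card_le
      · intro w hw
        rw [Finset.mem_insert, Finset.mem_singleton] at hw
        rcases hw with rfl | rfl
        · exact T.K_symm U hy
        · exact hzK
      · rw [hcard, Finset.card_pair hzx.symm]
    obtain ⟨g, hg⟩ := T.trans x y
    have hset : ∀ w, w ∈ ({x, y, z} : Set X) ↔ w = x ∨ w ∈ Kset u x := by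
      intro w; rw [hKx]; simp
    have hset' : ∀ w, w ∈ ({x, y, z} : Set X) ↔ w = y ∨ w ∈ Kset u y := by
      intro w; rw [hKy]
      simp only [Set.mem_insert_iff, Set.mem_singleton_iff, Finset.mem_insert,
        Finset.mem_singleton]
      tauto
    have hX := T.max_set x ({x, y, z} : Set X) (by simp) (by
      intro h hh s hs
      have hhx : h • x = x := hh
      rw [hset] at hs ⊢
      rcases hs with rfl | hs
      · exact Or.inl hhx
      · right
        have := (T.K_smul U h).2 hs
        rwa [hhx] at this) g (by rw [hg]; exact hyx) (by
      intro s
      have e : g • s = y ↔ s = x := by rw [← hg, smul_left_cancel_iff]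
      rw [hset' (g • s), hset s, e, ← T.K_smul U g (x := x), hg])
    have h11 : (Finset.univ : Finset X) = {x, y, z} := by
      ext w
      have : w ∈ ({x, y, z} : Set X) := hX ▸ Set.mem_univ w
      simpa using this
    have h12 : Fintype.card X ≤ 3 := by
      rw [← Finset.card_univ, h11]; exact Finset.card_le_three
    omega
  · have hd2 : 4 * ((q : ℤ) + 2) ^ 2 = ((q : ℤ) - 1) * d ^ 2 := by
      push_cast at hd; linarith
    have h6 : ((q : ℤ) - 1) ∣ 36 := by
      refine ⟨d ^ 2 - 4 * (q - 1) - 24, ?_⟩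
      linear_combination hd2
    obtain ⟨p, rfl⟩ : ∃ p, q = p + 1 := ⟨q - 1, by omega⟩
    have h7 : p ∣ 36 := by
      have e : ((p + 1 : ℕ) : ℤ) - 1 = p := by push_cast; ring
      rw [e] at h6; exact_mod_cast h6
    have h8 := Nat.le_of_dvd (by norm_num) h7
    interval_cases p <;> omega

end RelConf
end Even4

/-! ### The primitive case with `n` odd: reflections and their centralizers -/

section Odd
open Classical MulAction

/-- The involutions of `G` that fix a point of `X`. -/
noncomputable def II (G X : Type*) [Group G] [MulAction G X] [Fintype G] : Finset G :=
  Finset.univ.filter fun t => t ≠ 1 ∧ t * t = 1 ∧ ∃ z : X, t • z = z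

/-- The fixed points of `t`. -/
noncomputable def fixF {G : Type*} (X : Type*) [Group G] [MulAction G X] [Fintype X] (t : G) :
    Finset X :=
  Finset.univ.filter fun z => t • z = z

/-- The elements of `II G X` commuting with `t`. -/
noncomputable def Icen {G : Type*} (X : Type*) [Group G] [MulAction G X] [Fintype G] (t : G) :
    Finset G :=
  (II G X).filter fun s => s * t = t * s

section basic
variable {G X : Type*} [Group G] [MulAction G X]

theorem mem_II [Fintype G] {t : G} : t ∈ II G X ↔ t ≠ 1 ∧ t * t = 1 ∧ ∃ z : X, t • z = z := by
  simp [II]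

theorem mem_fixF [Fintype X] {t : G} {z : X} : z ∈ fixF X t ↔ t • z = z := by simp [fixF]

theorem mem_Icen [Fintype G] {s t : G} : s ∈ Icen X t ↔ s ∈ II G X ∧ s * t = t * s := by
  simp [Icen]

theorem mem_cen {s t : G} : s ∈ Subgroup.centralizer ({t} : Set G) ↔ s * t = t * s := by
  rw [Subgroup.mem_centralizer_singleton_iff]

theorem II_conj [Fintype G] {g t : G} : g * t * g⁻¹ ∈ II G X ↔ t ∈ II G X := by
  rw [mem_II, mem_II]
  refine and_congr ?_ (and_congr ?_ ?_)
  · rw [ne_eq, ne_eq, conj_eq_one_iff]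
  · have : g * t * g⁻¹ * (g * t * g⁻¹) = g * (t * t) * g⁻¹ := by group
    rw [this, conj_eq_one_iff]
  · constructor
    · rintro ⟨z, hz⟩
      refine ⟨g⁻¹ • z, ?_⟩
      rw [mul_smul, mul_smul] at hz
      rw [eq_inv_smul_iff]; exact hz
    · rintro ⟨z, hz⟩
      exact ⟨g • z, conj_fix.2 hz⟩

theorem card_fixF_conj [Fintype X] (g t : G) :
    (fixF X (g * t * g⁻¹)).card = (fixF X t).card := by
  rw [← Finset.card_image_of_injective (fixF X t) (MulAction.injective g)]
  congr 1
  ext z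
  rw [Finset.mem_image, mem_fixF]
  constructor
  · intro h
    refine ⟨g⁻¹ • z, ?_, smul_inv_smul _ _⟩
    rw [mem_fixF, ← conj_fix (g := g), smul_inv_smul]; exact h
  · rintro ⟨w, hw, rfl⟩
    exact conj_fix.2 (mem_fixF.1 hw)

theorem card_Icen_conj [Fintype G] (g t : G) :
    (Icen X (g * t * g⁻¹)).card = (Icen X t).card := by
  symm
  apply Finset.card_bij (fun s _ => g * s * g⁻¹)
  · intro s hs
    rw [mem_Icen] at hs ⊢
    refine ⟨II_conj.2 hs.1, ?_⟩
    calc g * s * g⁻¹ * (g * t * g⁻¹) = g * (s * t) * g⁻¹ := by group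
      _ = g * t * g⁻¹ * (g * s * g⁻¹) := by rw [hs.2]; group
  · intro a _ b _ h; simpa using h
  · intro s hs
    rw [mem_Icen] at hs
    refine ⟨g⁻¹ * s * g, ?_, by group⟩
    have e : g * (g⁻¹ * s * g) * g⁻¹ = s := by group
    rw [mem_Icen, ← II_conj (g := g), e]
    refine ⟨hs.1, ?_⟩
    calc g⁻¹ * s * g * t = g⁻¹ * (s * (g * t * g⁻¹)) * g := by group
      _ = t * (g⁻¹ * s * g) := by rw [hs.2]; group

end basic

namespace RelConf

variable {G X : Type*} [Group G] [MulAction G X] [Fintype X] [Fintype G] {R : X → X → Prop}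
  {k l n : ℕ}

theorem rot_one (T : RelConf G X R k l n) (hn : Odd n) {x y : X} {a : G}
    (ha : a ∈ rot (stabilizer G x)) (hy : a • y = y) (hxy : x ≠ y) : a = 1 :=
  (T.dih x).no_invol hn ha (T.rot_sq ha hy hxy)

theorem II_of (T : RelConf G X R k l n) {x : X} {t : G} (hx : t • x = x)
    (ht : t ∉ rot (stabilizer G x)) : t ∈ II G X := by
  rw [mem_II]
  exact ⟨fun e => ht (e ▸ one_mem _), (T.dih x).inv t hx ht, x, hx⟩

theorem II_rot (T : RelConf G X R k l n) (hn : Odd n) {x : X} {t : G} (ht : t ∈ II G X) :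
    t ∉ rot (stabilizer G x) := by
  rw [mem_II] at ht
  exact fun h => ht.1 ((T.dih x).no_invol hn h ht.2.1)

theorem refl_conj (T : RelConf G X R k l n) (hn : Odd n) {x : X} {s t : G} (hs : s ∈ II G X)
    (ht : t ∈ II G X) (hsx : s • x = x) (htx : t • x = x) :
    ∃ b : G, b • x = x ∧ b * s * b⁻¹ = t := by
  have hsC := T.II_rot hn (x := x) hs
  have htC := T.II_rot hn (x := x) ht
  have ha := (T.dih x).mul t htx htC s hsx hsC
  obtain ⟨m, hm⟩ := hn
  have hb := pow_mem ha (m + 1)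
  -- `t * s` is the square of `b` because the rotation subgroup has odd order
  have hbb : (t * s) ^ (m + 1) * (t * s) ^ (m + 1) = t * s := by
    have h1 : (⟨t * s, ha⟩ : rot (stabilizer G x)) ^ Nat.card (rot (stabilizer G x)) = 1 :=
      pow_card_eq_one'
    have h2 : (t * s) ^ n = 1 := by
      rw [(T.dih x).cardC] at h1
      exact congrArg Subtype.val h1
    rw [← pow_add, show m + 1 + (m + 1) = n + 1 by omega, pow_succ, h2, one_mul]
  refine ⟨(t * s) ^ (m + 1), (T.dih x).le hb, ?_⟩
  set b := (t * s) ^ (m + 1) with hbdef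
  have h3 := (T.dih x).conj hsx hsC hb
  have hs2 := (mem_II.1 hs).2.1
  have hsi : s⁻¹ = s := inv_eq_of_mul_eq_one_left hs2
  have h4 : s * b⁻¹ = b * s := by
    rw [← h3]
    calc s * (s * b * s⁻¹) = (s * s) * b * s⁻¹ := by group
      _ = b * s := by rw [hs2, hsi, one_mul]
  calc b * s * b⁻¹ = b * (s * b⁻¹) := by group
    _ = (b * b) * s := by rw [h4]; group
    _ = t * (s * s) := by rw [hbb]; group
    _ = t := by rw [hs2, mul_one]

theorem pair_stab (T : RelConf G X R k l n) (hn : Odd n) {x y : X} {g t : G} (ht : t ∈ II G X)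
    (hxy : x ≠ y) (htx : t • x = x) (hty : t • y = y) (hgx : g • x = x) (hgy : g • y = y) :
    g = 1 ∨ g = t := by
  by_cases hg : g ∈ rot (stabilizer G x)
  · exact Or.inl (T.rot_one hn hg hgy hxy)
  · right
    have h1 := (T.dih x).mul g hgx hg t htx (T.II_rot hn ht)
    have h2 := T.rot_one hn h1 (by rw [mul_smul, hty, hgy]) hxy
    rw [eq_inv_of_mul_eq_one_left h2]
    exact inv_eq_of_mul_eq_one_left (mem_II.1 ht).2.1

theorem cen_stab (T : RelConf G X R k l n) (hn : Odd n) {x : X} {g t : G} (ht : t ∈ II G X)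
    (htx : t • x = x) (hgx : g • x = x) (hgt : g * t = t * g) : g = 1 ∨ g = t := by
  have htC := T.II_rot hn (x := x) ht
  have key : ∀ a ∈ rot (stabilizer G x), a * t = t * a → a = 1 := by
    intro a ha h
    have h1 := (T.dih x).conj htx htC ha
    rw [← h, mul_inv_cancel_right] at h1
    apply (T.dih x).no_invol hn ha
    nth_rewrite 1 [h1]
    exact inv_mul_cancel a
  by_cases hg : g ∈ rot (stabilizer G x)
  · exact Or.inl (key g hg hgt)
  · right
    have h1 := (T.dih x).mul g hgx hg t htx htC
    have h2 := key _ h1 (by rw [hgt, mul_assoc, hgt])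
    rw [eq_inv_of_mul_eq_one_left h2]
    exact inv_eq_of_mul_eq_one_left (mem_II.1 ht).2.1

theorem cen_tr (T : RelConf G X R k l n) (hn : Odd n) {x y : X} {t : G} (ht : t ∈ II G X)
    (htx : t • x = x) (hty : t • y = y) : ∃ g : G, g * t = t * g ∧ g • x = y := by
  obtain ⟨g, rfl⟩ := T.trans x y
  have h1 : g⁻¹ * t * g ∈ II G X := by
    rw [← II_conj (g := g)]
    have : g * (g⁻¹ * t * g) * g⁻¹ = t := by group
    rw [this]; exact ht
  have h2 : (g⁻¹ * t * g) • x = x := by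
    rw [mul_smul, mul_smul, hty, inv_smul_smul]
  obtain ⟨b, hb, e⟩ := T.refl_conj hn ht h1 htx h2
  refine ⟨g * b, ?_, by rw [mul_smul, hb]⟩
  have e2 : b * t = g⁻¹ * t * g * b := mul_inv_eq_iff_eq_mul.1 e
  rw [mul_assoc, e2]; group

theorem II_conj_all (T : RelConf G X R k l n) (hn : Odd n) {s t : G} (hs : s ∈ II G X)
    (ht : t ∈ II G X) : ∃ g : G, g * s * g⁻¹ = t := by
  obtain ⟨-, -, x, hx⟩ := mem_II.1 hs
  obtain ⟨-, -, y, hy⟩ := mem_II.1 ht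
  obtain ⟨g, rfl⟩ := T.trans x y
  obtain ⟨b, -, e⟩ := T.refl_conj hn (II_conj.2 hs) ht (conj_fix.2 hx) hy
  exact ⟨b * g, by rw [← e]; group⟩

theorem fixF_card (T : RelConf G X R k l n) (hn : Odd n) {s t : G} (hs : s ∈ II G X)
    (ht : t ∈ II G X) : (fixF X s).card = (fixF X t).card := by
  obtain ⟨g, rfl⟩ := T.II_conj_all hn hs ht
  exact (card_fixF_conj g s).symm

theorem Icen_card (T : RelConf G X R k l n) (hn : Odd n) {s t : G} (hs : s ∈ II G X)
    (ht : t ∈ II G X) : (Icen X s).card = (Icen X t).card := by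
  obtain ⟨g, rfl⟩ := T.II_conj_all hn hs ht
  exact (card_Icen_conj g s).symm

theorem cen_card (T : RelConf G X R k l n) (hn : Odd n) {t : G} (ht : t ∈ II G X) :
    Nat.card (Subgroup.centralizer ({t} : Set G)) = 2 * (fixF X t).card := by
  obtain ⟨h1, h2, x, hx⟩ := mem_II.1 ht
  rw [← orbF_card (Subgroup.centralizer ({t} : Set G)) x]
  have e1 : orbF (Subgroup.centralizer ({t} : Set G)) x = fixF X t := by
    ext y
    rw [mem_orbF, mem_fixF]
    constructor
    · rintro ⟨g, hg, rfl⟩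
      rw [mem_cen] at hg
      rw [← mul_smul, ← hg, mul_smul, hx]
    · intro hy
      obtain ⟨g, hg, e⟩ := T.cen_tr hn ht hx hy
      exact ⟨g, mem_cen.2 hg, e⟩
  have e2 : ((Subgroup.centralizer ({t} : Set G) ⊓ stabilizer G x : Subgroup G) : Set G) =
      (({1, t} : Finset G) : Set G) := by
    ext g
    simp only [SetLike.mem_coe, Subgroup.mem_inf, Finset.coe_insert, Finset.coe_singleton,
      Set.mem_insert_iff, Set.mem_singleton_iff]
    constructor
    · rintro ⟨hg, hgx⟩
      exact T.cen_stab hn ht hx hgx (mem_cen.1 hg)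
    · rintro (rfl | rfl)
      · exact ⟨one_mem _, one_mem _⟩
      · exact ⟨mem_cen.2 rfl, hx⟩
  have e3 : Nat.card (Subgroup.centralizer ({t} : Set G) ⊓ stabilizer G x : Subgroup G) = 2 := by
    have : Nat.card (Subgroup.centralizer ({t} : Set G) ⊓ stabilizer G x : Subgroup G) =
      Set.ncard ((Subgroup.centralizer ({t} : Set G) ⊓ stabilizer G x : Subgroup G) : Set G) := rfl
    rw [this, e2, Set.ncard_coe_finset, Finset.card_pair (Ne.symm h1)]
  rw [e1, e3, mul_comm]

/-- The reflections in `G_x`. -/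
theorem refl_eq (T : RelConf G X R k l n) (hn : Odd n) (x : X) :
    ((II G X).filter fun t => t • x = x).card = n := by
  rw [← T.refl_card x]
  congr 1
  ext t
  simp only [Finset.mem_filter, Finset.mem_univ, true_and]
  exact ⟨fun h => ⟨h.2, T.II_rot hn h.1⟩, fun h => ⟨T.II_of h.1 h.2, h.1⟩⟩

theorem II_count (T : RelConf G X R k l n) (hn : Odd n) {t : G} (ht : t ∈ II G X) :
    (II G X).card * (fixF X t).card = Fintype.card X * n := by
  rw [← Finset.card_univ]
  apply double_count (II G X) Finset.univ (fun s z => s • z = z)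
  · intro s hs
    exact T.fixF_card hn hs ht
  · intro x _
    exact T.refl_eq hn x

theorem exists_II (T : RelConf G X R k l n) (x : X) :
    ∃ t ∈ II G X, t • x = x := by
  obtain ⟨t, h1, h2⟩ := (T.dih x).exists_refl (by have := T.n_ge; omega)
  exact ⟨t, T.II_of h1 h2, h1⟩

theorem two_le_fix (T : RelConf G X R k l n) {t : G} (ht : t ∈ II G X) :
    2 ≤ (fixF X t).card := by
  obtain ⟨h1, h2, x, hx⟩ := mem_II.1 ht
  obtain ⟨z, hz, hz'⟩ := T.invol_fix h2 hx
  rw [← Finset.card_pair hz]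
  apply Finset.card_le_card
  intro w hw
  rw [Finset.mem_insert, Finset.mem_singleton] at hw
  rw [mem_fixF]
  rcases hw with rfl | rfl <;> assumption

theorem exists_w (T : RelConf G X R k l n) (hn : Odd n) (x : X) :
    ∃ w, Fintype.card X = 1 + n * w := by
  have h1 : n ∣ (Finset.univ.erase x).card := by
    rw [← (T.dih x).cardC]
    apply free_dvd_subgroup
    · intro a ha s hs
      have hax : a • x = x := (T.dih x).le ha
      rw [Finset.mem_erase] at hs ⊢
      refine ⟨fun e => hs.1 ?_, Finset.mem_univ _⟩
      rw [← smul_left_cancel_iff a, e, hax]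
    · intro a ha s hs h
      exact T.rot_one hn ha h (Ne.symm (Finset.ne_of_mem_erase hs))
  obtain ⟨w, hw⟩ := h1
  refine ⟨w, ?_⟩
  have := T.k_lt
  rw [Finset.card_erase_of_mem (Finset.mem_univ _), Finset.card_univ] at hw
  omega

theorem NR_card (T : RelConf G X R k l n) (hn : Odd n) {t : G} (ht : t ∈ II G X) (x : X) :
    (NR G x).card = n * ((fixF X t).card - 1) := by
  have e : NR G x = ((II G X).filter fun t => t • x = x).biUnion fun s => (fixF X s).erase x := by
    ext z
    simp only [NR, Finset.mem_filter, Finset.mem_univ, true_and, Finset.mem_biUnion,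
      Finset.mem_erase, mem_fixF]
    constructor
    · rintro ⟨h1, g, h2, h3, h4⟩
      refine ⟨g, ⟨T.II_of h3 (fun h => h2 (T.rot_one hn h h4 (Ne.symm h1))), h3⟩, h1, h4⟩
    · rintro ⟨g, ⟨h1, h2⟩, h3, h4⟩
      exact ⟨h3, g, (mem_II.1 h1).1, h2, h4⟩
  rw [e, Finset.card_biUnion, Finset.sum_const_nat (m := (fixF X t).card - 1), T.refl_eq hn x]
  · intro s hs
    rw [Finset.mem_filter] at hs
    rw [Finset.card_erase_of_mem (mem_fixF.2 hs.2), T.fixF_card hn hs.1 ht]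
  · intro s hs s' hs' hne
    rw [Finset.mem_coe, Finset.mem_filter] at hs hs'
    show Disjoint _ _
    rw [Finset.disjoint_left]
    intro z hz hz'
    rw [Finset.mem_erase, mem_fixF] at hz hz'
    apply hne
    rcases T.pair_stab hn hs'.1 (Ne.symm hz.1) hs'.2 hz'.2 hs.2 hz.2 with h | h
    · exact absurd h (mem_II.1 hs.1).1
    · exact h

/-- Counting the elements `s` of `II` according to `s x`: regular points are hit at most once,
and an `s` taking `x` to a non-regular point commutes with a reflection in `G_x`. -/
theorem II_bound (T : RelConf G X R k l n) (hn : Odd n) {t : G} (ht : t ∈ II G X) (x : X) :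
    (II G X).card + (NR G x).card + 1 ≤ n * (Icen X t).card + Fintype.card X := by
  have hswap : ∀ s ∈ II G X, s • s • x = x := by
    intro s hs
    rw [← mul_smul, (mem_II.1 hs).2.1, one_smul]
  have h0 := Finset.card_filter_add_card_filter_not (s := II G X) (fun s => s • x = x)
  rw [T.refl_eq hn x] at h0
  have h1 := Finset.card_filter_add_card_filter_not
    (s := (II G X).filter fun s => ¬ s • x = x) (fun s => s • x ∈ NR G x)
  rw [Finset.filter_filter, Finset.filter_filter] at h1
  have h2 : ((II G X).filter fun s => ¬ s • x = x ∧ s • x ∉ NR G x).card ≤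
      (Finset.univ \ insert x (NR G x)).card := by
    apply Finset.card_le_card_of_injOn (fun s => s • x)
    · intro s hs
      rw [Finset.mem_coe, Finset.mem_filter] at hs
      rw [Finset.mem_coe, Finset.mem_sdiff, Finset.mem_insert, not_or]
      exact ⟨Finset.mem_univ _, hs.2⟩
    · intro s hs s' hs' e
      rw [Finset.mem_coe, Finset.mem_filter] at hs hs'
      have e : s • x = s' • x := e
      by_contra hne
      apply hs.2.2
      simp only [NR, Finset.mem_filter, Finset.mem_univ, true_and]
      refine ⟨hs.2.1, s * s', ?_, ?_, ?_⟩
      · intro h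
        apply hne
        rw [eq_inv_of_mul_eq_one_left h]
        exact inv_eq_of_mul_eq_one_left (mem_II.1 hs'.1).2.1
      · rw [mul_smul, ← e, hswap s hs.1]
      · have e2 : s' • s • x = x := by rw [e, hswap s' hs'.1]
        rw [mul_smul, e2]
  rw [Finset.card_sdiff_of_subset (Finset.subset_univ _),
    Finset.card_insert_of_notMem (by simp [NR]), Finset.card_univ] at h2
  have h3 : ((II G X).filter fun s => ¬ s • x = x ∧ s • x ∈ NR G x).card ≤
      n * ((Icen X t).card - 1) := by
    have hsub : ((II G X).filter fun s => ¬ s • x = x ∧ s • x ∈ NR G x) ⊆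
        ((II G X).filter fun t => t • x = x).biUnion fun r => (Icen X r).erase r := by
      intro s hs
      simp only [NR, Finset.mem_filter, Finset.mem_univ, true_and] at hs
      obtain ⟨hs, h4, -, r, hr1, hr2, hr3⟩ := hs
      have hr : r ∈ II G X :=
        T.II_of hr2 (fun h => hr1 (T.rot_one hn h hr3 (Ne.symm h4)))
      rw [Finset.mem_biUnion]
      refine ⟨r, Finset.mem_filter.2 ⟨hr, hr2⟩, ?_⟩
      rw [Finset.mem_erase, mem_Icen]
      refine ⟨fun e => h4 (e ▸ hr2), hs, ?_⟩
      have hsi : s⁻¹ = s := inv_eq_of_mul_eq_one_left (mem_II.1 hs).2.1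
      have h5 : s * r * s⁻¹ = 1 ∨ s * r * s⁻¹ = r := by
        apply T.pair_stab hn hr (Ne.symm h4) hr2 hr3
        · rw [hsi, mul_smul, mul_smul, hr3, hswap s hs]
        · exact conj_fix.2 hr2
      rcases h5 with h5 | h5
      · exact absurd (conj_eq_one_iff.1 h5) hr1
      · exact mul_inv_eq_iff_eq_mul.1 h5
    refine (Finset.card_le_card hsub).trans (Finset.card_biUnion_le.trans ?_)
    rw [Finset.sum_const_nat (m := (Icen X t).card - 1), T.refl_eq hn x]
    intro r hr
    rw [Finset.mem_filter] at hr
    rw [Finset.card_erase_of_mem (mem_Icen.2 ⟨hr.1, rfl⟩), T.Icen_card hn hr.1 ht]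
  have h4 := NR_lt (G := G) x
  have h5 : 0 < (Icen X t).card := Finset.card_pos.2 ⟨t, mem_Icen.2 ⟨ht, rfl⟩⟩
  obtain ⟨m, hm⟩ : ∃ m, (Icen X t).card = m + 1 := ⟨(Icen X t).card - 1, by omega⟩
  rw [hm, Nat.add_sub_cancel] at h3
  rw [hm, mul_add, mul_one]
  omega

theorem Icen_lt (T : RelConf G X R k l n) (hn : Odd n) {t : G} (ht : t ∈ II G X) :
    (Icen X t).card + 1 ≤ 2 * (fixF X t).card := by
  rw [← T.cen_card hn ht]
  have h1 : insert 1 (Icen X t) ⊆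
      Finset.univ.filter fun g : G => g ∈ Subgroup.centralizer ({t} : Set G) := by
    intro g hg
    rw [Finset.mem_filter, mem_cen]
    refine ⟨Finset.mem_univ _, ?_⟩
    rw [Finset.mem_insert, mem_Icen] at hg
    rcases hg with rfl | h
    · simp
    · exact h.2
  have h2 := Finset.card_le_card h1
  rw [Finset.card_insert_of_notMem (by rw [mem_Icen, mem_II]; simp)] at h2
  rw [Nat.card_eq_fintype_card, Fintype.card_subtype]
  exact h2

/-- The basic inequality `v ≤ f (N + w - f + 1)`. -/
theorem v_bound (T : RelConf G X R k l n) (hn : Odd n) {t : G} (ht : t ∈ II G X) {w : ℕ}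
    (hw : Fintype.card X = 1 + n * w) :
    Fintype.card X + (fixF X t).card * (fixF X t).card ≤
      (fixF X t).card * ((Icen X t).card + w + 1) ∧ (fixF X t).card ≤ w + 1 := by
  obtain ⟨-, -, x, -⟩ := mem_II.1 ht
  have h1 := T.II_bound hn ht x
  have h2 := T.NR_card hn ht x
  have h3 := T.two_le_fix ht
  have h4 := T.II_count hn ht
  have h5 := NR_lt (G := G) x
  have hn0 : 0 < n := by have := T.n_ge; omega
  obtain ⟨f, hf⟩ : ∃ f, (fixF X t).card = f + 1 := ⟨(fixF X t).card - 1, by omega⟩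
  rw [hf, Nat.add_sub_cancel] at h2
  rw [h2] at h1 h5
  rw [hf] at h4 ⊢
  constructor
  · apply Nat.le_of_mul_le_mul_left (c := n) _ hn0
    have h6 : (II G X).card + n * f ≤ n * ((Icen X t).card + w) := by
      rw [mul_add]; omega
    nlinarith
  · have : n * f ≤ n * w := by omega
    have := Nat.le_of_mul_le_mul_left this hn0
    omega

end RelConf
end Odd

/-! ### The case `n` odd, `k = n` -/

section OddN
open Classical MulAction

namespace RelConf

variable {G X : Type*} [Group G] [MulAction G X] [Fintype X] {R : X → X → Prop} {k l n : ℕ}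

/-- Reversing the relation preserves all the hypotheses. -/
theorem swap (T : RelConf G X R k l n) : RelConf G X (fun x y => R y x) k l n where
  inv := fun g x y h => T.inv g y x h
  irrefl := T.irrefl
  out := T.inn
  inn := T.out
  cout := T.cin
  cin := T.cout
  tr_out := T.tr_in
  tr_in := T.tr_out
  trans := T.trans
  faith := T.faith
  dih := T.dih
  semi := T.semi'
  semi' := T.semi
  two_lt := T.two_lt
  k_lt := T.k_lt
  l_gt := T.l_gt
  eqn := T.eqn
  n_ge := T.n_ge
  max := T.max

variable [Fintype G]

theorem fix_unique (T : RelConf G X R k l n) (hn : Odd n) (hk : k = n) {t : G} (ht : t ∈ II G X)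
    {x p q : X} (htx : t • x = x) (hp : R x p) (hq : R x q) (htp : t • p = p) (htq : t • q = q) :
    p = q := by
  obtain ⟨a, ha, rfl⟩ := T.rot_tr hk hp hq
  have h1 := T.refl_rot_sq htx (T.II_rot hn ht) ha hp htp htq
  rw [(T.dih x).no_invol hn ha h1, one_smul]

theorem odd_one_false (T : RelConf G X R k l n) (hn : Odd n) (hk : k = n) (x0 : X) : False := by
  obtain ⟨t, ht, htx0⟩ := T.exists_II x0
  obtain ⟨h1, h2, -⟩ := mem_II.1 ht
  have htt : ∀ y : X, t • t • y = y := fun y => by rw [← mul_smul, h2, one_smul]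
  have hl : l % 2 = 0 := by
    obtain ⟨z, hz0, hz'⟩ := T.invol_fix h2 htx0
    have hz := hz0.symm
    rw [← T.cout x0 z hz, card_mod_two_fixed _ (fun y => t • y) (fun y _ => htt y),
      Finset.filter_filter, Finset.filter_false_of_mem]
    · simp
    · rintro y - ⟨⟨hy, hy'⟩, hty⟩
      exact hz (T.swap.fix_unique hn hk ht hty hy hy' htx0 hz')
    · intro y hy
      rw [Finset.mem_filter] at hy ⊢
      exact ⟨Finset.mem_univ _, T.R_smul htx0 hy.2.1, T.R_smul hz' hy.2.2⟩
  obtain ⟨w, hw⟩ := T.exists_w hn x0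
  obtain ⟨hv, hfw⟩ := T.v_bound hn ht hw
  have hN := T.Icen_lt hn ht
  have hc := T.II_count hn ht
  have hkl := T.k_lt
  have hf2 := T.two_le_fix ht
  have h3 := T.n_ge
  have hl1 := T.l_gt
  have hlw : n = l * w + 1 := by
    have h4 := T.eqn'
    rw [hw, Nat.add_sub_cancel_left, hk] at h4
    have h5 : n * (l * w) = n * (n - 1) := by rw [← h4]; ring
    have := Nat.eq_of_mul_eq_mul_left (by omega) h5
    omega
  set f := (fixF X t).card with hf
  set N := (Icen X t).card
  have hw1 : w ≠ 0 := by rintro rfl; omega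
  have hw2 : w ≠ 1 := by rintro rfl; omega
  have hb : Fintype.card X ≤ f * (f + w) := by
    have : f * (N + w + 1) ≤ f * (2 * f + w) := Nat.mul_le_mul_left _ (by omega)
    nlinarith
  have hb2 : f * (f + w) ≤ (w + 1) * (w + 1 + w) := Nat.mul_le_mul hfw (by omega)
  by_cases hl4 : 4 ≤ l
  · have : 4 * (w * w) ≤ l * (w * w) := Nat.mul_le_mul_right _ hl4
    have h5 : 2 ≤ w := by omega
    subst hlw
    nlinarith
  · have hl2 : l = 2 := by omega
    have hfix : ((Finset.univ.filter fun p => R x0 p).filter fun p => t • p = p).card = 1 := by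
      have h5 := card_mod_two_fixed (Finset.univ.filter fun p => R x0 p) (fun y => t • y)
        (fun y _ => htt y) (by
          intro y hy
          rw [Finset.mem_filter] at hy ⊢
          exact ⟨Finset.mem_univ _, T.R_smul htx0 hy.2⟩)
      rw [T.out, hk, Nat.odd_iff.1 hn] at h5
      have h6 : ((Finset.univ.filter fun p => R x0 p).filter fun p => t • p = p).card ≤ 1 := by
        rw [Finset.card_le_one]
        intro p hp q hq
        simp only [Finset.mem_filter, Finset.mem_univ, true_and] at hp hq
        exact T.fix_unique hn hk ht htx0 hp.1 hq.1 hp.2 hq.2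
      omega
    have h6 := T.biplane_fix hl2 h2 htx0 (by
      intro p q q' hp hq hq' e1 e2 e3 h _
      exact absurd (T.fix_unique hn hk ht htx0 hq hp e2 e1) h)
    have h7 : (Finset.univ.filter fun w => w ≠ x0 ∧ t • w = w) = (fixF X t).erase x0 := by
      ext w
      simp [fixF]
    have h8 : (Finset.univ.filter fun p => R x0 p ∧
        ∃ q, q ≠ p ∧ R x0 q ∧ (t • p = q ∨ (t • p = p ∧ t • q = q))) =
        (Finset.univ.filter fun p => R x0 p).filter fun p => ¬ t • p = p := by
      ext p
      simp only [Finset.mem_filter, Finset.mem_univ, true_and]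
      refine and_congr_right fun hp => ⟨?_, ?_⟩
      · rintro ⟨q, hq, hRq, rfl | ⟨h, h'⟩⟩
        · exact hq
        · exact absurd (T.fix_unique hn hk ht htx0 hRq hp h' h) hq
      · intro h
        exact ⟨t • p, h, T.R_smul htx0 hp, Or.inl rfl⟩
    have h9 := Finset.card_filter_add_card_filter_not
      (s := Finset.univ.filter fun p => R x0 p) (fun p => t • p = p)
    rw [hfix, T.out] at h9
    rw [h7, h8, Finset.card_erase_of_mem (mem_fixF.2 htx0), ← hf] at h6
    subst hl2
    have hfw' : f = w + 1 := by omega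
    -- `f` divides `v n`, and `v n ≡ -2` modulo `f`
    have hd : f ∣ 2 := by
      have e : (f : ℤ) ∣ 2 := by
        refine ⟨(4 * f * f - 8 * f + 7) - (II G X).card, ?_⟩
        have hc' : ((II G X).card : ℤ) * f = Fintype.card X * n := by exact_mod_cast hc
        have hv' : (Fintype.card X : ℤ) = 1 + n * w := by exact_mod_cast hw
        have hn' : (n : ℤ) = 2 * w + 1 := by exact_mod_cast hlw
        have hf' : (f : ℤ) = w + 1 := by exact_mod_cast hfw'
        rw [mul_sub, mul_comm (f : ℤ) ((II G X).card : ℤ), hc', hv', hn', hf']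
        ring
      exact_mod_cast e
    have := Nat.le_of_dvd (by norm_num) hd
    omega

end RelConf
end OddN

/-! ### The case `n` odd, `k = 2n`: possible parameters -/

section OddTwo
open Classical MulAction

namespace RelConf

variable {G X : Type*} [Group G] [MulAction G X] [Fintype X] {R : X → X → Prop} {k l n : ℕ}
variable [Fintype G]

theorem l_even (T : RelConf G X R k l n) (hk : k = 2 * n) (x0 : X) : l % 2 = 0 := by
  obtain ⟨t, ht, htx0⟩ := T.exists_II x0
  obtain ⟨h1, h2, -⟩ := mem_II.1 ht
  obtain ⟨z, hz, hz'⟩ := T.invol_fix h2 htx0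
  have htt : ∀ y : X, t • t • y = y := fun y => by rw [← mul_smul, h2, one_smul]
  rw [← T.cout x0 z hz.symm, card_mod_two_fixed _ (fun y => t • y) (fun y _ => htt y),
    Finset.filter_filter, Finset.filter_false_of_mem]
  · simp
  · rintro y - ⟨⟨hy, hy'⟩, hty⟩
    exact h1 (T.reg_out hk hy htx0 hty)
  · intro y hy
    rw [Finset.mem_filter] at hy ⊢
    exact ⟨Finset.mem_univ _, T.R_smul htx0 hy.2.1, T.R_smul hz' hy.2.2⟩

theorem odd_two (T : RelConf G X R k l n) (hn : Odd n) (hk : k = 2 * n) {t : G}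
    (ht : t ∈ II G X) :
    (n = 3 ∧ l = 2 ∧ Fintype.card X = 16) ∨
    ∃ w, l = 6 ∧ 2 * n = 3 * w + 1 ∧ Fintype.card X = 1 + n * w ∧ (fixF X t).card % 2 = 0 ∧
      (fixF X t).card + 1 ≤ w := by
  obtain ⟨h1, h2, x0, htx0⟩ := mem_II.1 ht
  have htt : ∀ y : X, t • t • y = y := fun y => by rw [← mul_smul, h2, one_smul]
  obtain ⟨w, hw⟩ := T.exists_w hn x0
  obtain ⟨hv, hfw⟩ := T.v_bound hn ht hw
  have hN := T.Icen_lt hn ht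
  have hc := T.II_count hn ht
  have hf2 := T.two_le_fix ht
  have h3 := T.n_ge
  have hl1 := T.l_gt
  have hNR := T.NR_lt' hk x0
  rw [T.NR_card hn ht, hw] at hNR
  have hpar := card_mod_two_fixed (Finset.univ : Finset X) (fun y => t • y) (fun y _ => htt y)
    (fun y _ => Finset.mem_univ _)
  rw [Finset.card_univ] at hpar
  change Fintype.card X % 2 = (fixF X t).card % 2 at hpar
  obtain ⟨m, hm⟩ : ∃ m, l = 2 * m := ⟨l / 2, by have := T.l_even hk x0; omega⟩
  have hmw : m * w + 1 = 2 * n := by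
    have h4 := T.eqn'
    rw [hw, Nat.add_sub_cancel_left, hk, hm] at h4
    have h5 : (2 * n) * (m * w) = (2 * n) * (2 * n - 1) := by rw [← h4]; ring
    have := Nat.eq_of_mul_eq_mul_left (by omega) h5
    omega
  have hmwo : Odd (m * w) := by rw [Nat.odd_iff]; omega
  have hmo := (Nat.odd_mul.1 hmwo).1
  have hwo := (Nat.odd_mul.1 hmwo).2
  have hfe : (fixF X t).card % 2 = 0 := by
    have := Nat.odd_iff.1 (hn.mul hwo)
    omega
  set f := (fixF X t).card with hf
  set N := (Icen X t).card
  have hfw' : f + 1 ≤ w := by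
    have h5 : n * (f - 1) + 2 * n = n * (f + 1) := by
      obtain ⟨f', hf'⟩ : ∃ f', f = f' + 1 := ⟨f - 1, by omega⟩
      rw [hf', Nat.add_sub_cancel]; ring
    exact Nat.le_of_mul_le_mul_left (c := n) (by omega) (by omega)
  have hb : Fintype.card X ≤ f * (f + w) := by
    have : f * (N + w + 1) ≤ f * (2 * f + w) := Nat.mul_le_mul_left _ (by omega)
    nlinarith
  have hm4 : m < 4 := by
    by_contra hcon
    obtain ⟨w', rfl⟩ : ∃ w', w = w' + 1 := ⟨w - 1, by omega⟩
    have hb2 : f * (f + (w' + 1)) ≤ w' * (w' + (w' + 1)) :=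
      Nat.mul_le_mul (by omega) (by omega)
    have h6 : 4 * ((w' + 1) * (w' + 1)) ≤ m * ((w' + 1) * (w' + 1)) :=
      Nat.mul_le_mul_right _ (by omega)
    nlinarith
  have hm13 : m = 1 ∨ m = 3 := by
    have := Nat.odd_iff.1 hmo
    omega
  rcases hm13 with rfl | rfl
  · left
    have hl2 : l = 2 := by omega
    have hnofix : ∀ p, R x0 p → t • p ≠ p := fun p hp h => h1 (T.reg_out hk hp htx0 h)
    have h6 := T.biplane_fix hl2 h2 htx0 (by
      intro p q q' hp hq hq' e1 e2 e3 h _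
      exact absurd e1 (hnofix p hp))
    have h7 : (Finset.univ.filter fun w => w ≠ x0 ∧ t • w = w) = (fixF X t).erase x0 := by
      ext w
      simp [fixF]
    have h8 : (Finset.univ.filter fun p => R x0 p ∧
        ∃ q, q ≠ p ∧ R x0 q ∧ (t • p = q ∨ (t • p = p ∧ t • q = q))) =
        (Finset.univ.filter fun p => R x0 p) := by
      ext p
      simp only [Finset.mem_filter, Finset.mem_univ, true_and, and_iff_left_iff_imp]
      intro hp
      exact ⟨t • p, hnofix p hp, T.R_smul htx0 hp, Or.inl rfl⟩
    rw [h7, h8, Finset.card_erase_of_mem (mem_fixF.2 htx0), ← hf, T.out] at h6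
    have hfn : f = n + 1 := by omega
    -- `f` divides `v n`, and `v n ≡ -4` modulo `f`
    have hd : f ∣ 4 := by
      have e : (f : ℤ) ∣ 4 := by
        refine ⟨(2 * n * n - 3 * n + 4) - (II G X).card, ?_⟩
        have hc' : ((II G X).card : ℤ) * f = Fintype.card X * n := by exact_mod_cast hc
        have hv' : (Fintype.card X : ℤ) = 1 + n * w := by exact_mod_cast hw
        have hn' : (w : ℤ) = 2 * n - 1 := by
          have : (1 * w + 1 : ℤ) = 2 * n := by exact_mod_cast hmw
          linarith
        have hf' : (f : ℤ) = n + 1 := by exact_mod_cast hfn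
        rw [mul_sub, mul_comm (f : ℤ) ((II G X).card : ℤ), hc', hv', hn', hf']
        ring
      exact_mod_cast e
    have := Nat.le_of_dvd (by norm_num) hd
    have hn3 : n = 3 := by omega
    have hw5 : w = 5 := by omega
    refine ⟨hn3, hl2, ?_⟩
    rw [hw, hn3, hw5]
  · right
    exact ⟨w, by omega, by omega, hw, hfe, hfw'⟩

end RelConf
end OddTwo

/-! ### The case `n` odd, `k = 2n`, `λ = 6`: elementary abelian centralizers -/

section OddSix
open Classical MulAction

/-- The Klein four-group `{1, t, g, t g}` generated by two commuting involutions. -/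
def klein {G : Type*} [Group G] (t g : G) (ht : t * t = 1) (hg : g * g = 1) (hc : g * t = t * g) :
    Subgroup G where
  carrier := {1, t, g, t * g}
  mul_mem' := by
    have e1 : t * (t * g) = g := by rw [← mul_assoc, ht, one_mul]
    have e2 : g * (t * g) = t := by rw [← mul_assoc, hc, mul_assoc, hg, mul_one]
    have e3 : t * g * t = g := by rw [mul_assoc, hc, e1]
    have e4 : t * g * g = t := by rw [mul_assoc, hg, mul_one]
    have e5 : t * g * (t * g) = 1 := by rw [mul_assoc, e2, ht]
    rintro a b (rfl | rfl | rfl | rfl) (rfl | rfl | rfl | rfl) <;>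
      simp [ht, hg, hc, e1, e2, e3, e4, e5]
  one_mem' := by simp
  inv_mem' := by
    have e1 : t⁻¹ = t := inv_eq_of_mul_eq_one_left ht
    have e2 : g⁻¹ = g := inv_eq_of_mul_eq_one_left hg
    rintro a (rfl | rfl | rfl | rfl) <;> simp [e1, e2, hc]

theorem mem_klein {G : Type*} [Group G] {t g : G} {ht : t * t = 1} {hg : g * g = 1}
    {hc : g * t = t * g} {a : G} :
    a ∈ klein t g ht hg hc ↔ a = 1 ∨ a = t ∨ a = g ∨ a = t * g := Iff.rfl

theorem card_klein {G : Type*} [Group G] {t g : G} (ht : t * t = 1) (hg : g * g = 1)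
    (hc : g * t = t * g) (h1 : t ≠ 1) (h2 : g ≠ 1) (h3 : g ≠ t) :
    Nat.card (klein t g ht hg hc) = 4 := by
  have e : ((klein t g ht hg hc : Subgroup G) : Set G) = (({1, t, g, t * g} : Finset G) : Set G) := by
    ext a
    simp [mem_klein]
  have h4 : t * g ≠ 1 := fun h => h3 (by
    rw [← mul_right_inj t, h, ht])
  have h5 : Nat.card ((klein t g ht hg hc : Subgroup G) : Set G) = 4 := by
    rw [e, Nat.card_coe_set_eq, Set.ncard_coe_finset]
    rw [Finset.card_insert_of_notMem, Finset.card_insert_of_notMem, Finset.card_insert_of_notMem,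
      Finset.card_singleton]
    · simpa using h1
    · simp only [Finset.mem_insert, Finset.mem_singleton, not_or]
      exact ⟨Ne.symm h3, by simpa using h2⟩
    · simp only [Finset.mem_insert, Finset.mem_singleton, not_or]
      exact ⟨h1.symm, h2.symm, h4.symm⟩
  exact h5

theorem comm_of_sq {G : Type*} [Group G] {g h : G} (h1 : g * g = 1) (h2 : h * h = 1)
    (h3 : g * h * (g * h) = 1) : g * h = h * g := by
  have e1 : g⁻¹ = g := inv_eq_of_mul_eq_one_left h1
  have e2 : h⁻¹ = h := inv_eq_of_mul_eq_one_left h2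
  rw [← inv_eq_of_mul_eq_one_left h3, mul_inv_rev, e1, e2]

namespace RelConf

variable {G X : Type*} [Group G] [MulAction G X] [Fintype X] {R : X → X → Prop} {k l n : ℕ}
variable [Fintype G]

/-- Almost all elements of the centralizer of `t` are involutions, hence all are. -/
theorem cen_sq (T : RelConf G X R k l n) (hn : Odd n) {w : ℕ}
    (hnw : 2 * n = 3 * w + 1) (hv : Fintype.card X = 1 + n * w) {t : G} (ht : t ∈ II G X)
    (hfw : (fixF X t).card + 1 ≤ w) {g : G} (hg : g * t = t * g) : g * g = 1 := by
  have hb := (T.v_bound hn ht hv).1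
  have hf2 := T.two_le_fix ht
  have hQ := T.cen_card hn ht
  set f := (fixF X t).card
  set N := (Icen X t).card with hN
  have h1 : 6 * f < 4 * (N + 1) := by
    by_contra hcon
    have h2 : f * (4 * (N + 1)) ≤ f * (6 * f) := Nat.mul_le_mul_left _ (by omega)
    obtain ⟨d, rfl⟩ : ∃ d, w = f + 1 + d := ⟨w - (f + 1), by omega⟩
    have h3 : 2 * Fintype.card X = 2 + (3 * (f + 1 + d) + 1) * (f + 1 + d) := by
      rw [hv, ← hnw]; ring
    nlinarith
  have h2 : (Icen X t).card + 1 ≤ (Finset.univ.filter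
      fun g : Subgroup.centralizer ({t} : Set G) => g * g = 1).card := by
    have h3 : insert 1 (Icen X t) ⊆ (Finset.univ.filter
        fun g : Subgroup.centralizer ({t} : Set G) => g * g = 1).image Subtype.val := by
      intro s hs
      rw [Finset.mem_image]
      rw [Finset.mem_insert, mem_Icen] at hs
      rcases hs with rfl | h
      · exact ⟨1, by simp, rfl⟩
      · refine ⟨⟨s, mem_cen.2 h.2⟩, ?_, rfl⟩
        rw [Finset.mem_filter]
        exact ⟨Finset.mem_univ _, Subtype.ext (mem_II.1 h.1).2.1⟩
    rw [← Finset.card_insert_of_notMem (by rw [mem_Icen, mem_II]; simp : (1 : G) ∉ Icen X t)]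
    exact (Finset.card_le_card h3).trans Finset.card_image_le
  have h3 := elemAb_of_three_quarters (Q := Subgroup.centralizer ({t} : Set G)) (by
    rw [← Nat.card_eq_fintype_card, hQ]
    have h4 : 3 * (2 * f) < 4 * (N + 1) := by omega
    refine h4.trans_le (Nat.mul_le_mul_left 4 (h2.trans (le_of_eq ?_)))
    congr) ⟨g, mem_cen.2 hg⟩
  exact congrArg Subtype.val h3


end RelConf
end OddSix

section OddSixB
open Classical MulAction

/-- The remaining situation for `n` odd: `k = 2n`, `λ = 6`, and centralizers of reflections are
elementary abelian `2`-groups. -/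
structure SixConf (G X : Type*) [Group G] [MulAction G X] [Fintype X] [Fintype G]
    (R : X → X → Prop) (k l n : ℕ) : Prop extends RelConf G X R k l n where
  odd : Odd n
  hk : k = 2 * n
  hl : l = 6
  sq : ∀ s ∈ II G X, ∀ g : G, g * s = s * g → g * g = 1

/-- The points fixed by some involution commuting with `t`. -/
noncomputable def UU {G : Type*} (X : Type*) [Group G] [MulAction G X] [Fintype X] [Fintype G]
    (t : G) : Finset X :=
  Finset.univ.filter fun x => ∃ s ∈ Icen X t, s • x = x

/-- The points `q` with `R x q` that are fixed by `g`. -/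
noncomputable def bF {G X : Type*} [Group G] [MulAction G X] [Fintype X] (R : X → X → Prop)
    (x : X) (g : G) : Finset X :=
  Finset.univ.filter fun q => R x q ∧ g • q = q

theorem smul_fix {G X : Type*} [Group G] [MulAction G X] {s g : G} (h : g * s = s * g) {x : X}
    (hx : s • x = x) : s • g • x = g • x := by
  rw [← mul_smul, ← h, mul_smul, hx]

namespace SixConf

variable {G X : Type*} [Group G] [MulAction G X] [Fintype X] {R : X → X → Prop} {k l n : ℕ}
variable [Fintype G]

theorem comm (S : SixConf G X R k l n) {s g h : G} (hs : s ∈ II G X) (hg : g * s = s * g)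
    (hh : h * s = s * h) : g * h = h * g := by
  apply comm_of_sq (S.sq s hs g hg) (S.sq s hs h hh)
  apply S.sq s hs
  rw [mul_assoc, hh, ← mul_assoc, hg, mul_assoc]

/-- Commuting reflections have the same centralizer. -/
theorem cen_eq (S : SixConf G X R k l n) {s t : G} (hs : s ∈ II G X) (ht : t ∈ II G X)
    (h : s * t = t * s) (g : G) : g * s = s * g ↔ g * t = t * g :=
  ⟨fun hg => S.comm hs hg h.symm, fun hg => S.comm ht hg h⟩

theorem Icen_eq (S : SixConf G X R k l n) {s t : G} (hs : s ∈ II G X) (ht : t ∈ II G X)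
    (h : s * t = t * s) : Icen X s = Icen X t := by
  ext g
  rw [mem_Icen, mem_Icen, S.cen_eq hs ht h]

theorem UU_eq (S : SixConf G X R k l n) {s t : G} (hs : s ∈ II G X) (ht : t ∈ II G X)
    (h : s * t = t * s) : UU X s = UU X t := by
  rw [UU, UU, S.Icen_eq hs ht h]

theorem mem_UU {t : G} {x : X} : x ∈ UU X t ↔ ∃ s ∈ Icen X t, s • x = x := by simp [UU]

theorem UU_card (S : SixConf G X R k l n) {t : G} (ht : t ∈ II G X) :
    (UU X t).card = (Icen X t).card * (fixF X t).card := by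
  have e : UU X t = (Icen X t).biUnion fun s => fixF X s := by
    ext x
    rw [mem_UU, Finset.mem_biUnion]
    simp only [mem_fixF]
  rw [e, Finset.card_biUnion, Finset.sum_const_nat (m := (fixF X t).card)]
  · intro s hs
    exact S.fixF_card S.odd (mem_Icen.1 hs).1 ht
  · intro s hs s' hs' hne
    show Disjoint _ _
    rw [Finset.disjoint_left]
    intro z hz hz'
    rw [mem_fixF] at hz hz'
    rw [Finset.mem_coe, mem_Icen] at hs hs'
    rcases S.cen_stab S.odd hs'.1 hz' hz (S.comm ht hs.2 hs'.2) with h | h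
    · exact (mem_II.1 hs.1).1 h
    · exact hne h

/-- The centralizer of `t` acts freely outside `UU X t`. -/
theorem W_card (S : SixConf G X R k l n) {t : G} (ht : t ∈ II G X) :
    ∃ M, Fintype.card X = (fixF X t).card * ((Icen X t).card + M) ∧
      (Finset.univ \ UU X t).card = (fixF X t).card * M := by
  have h1 : Nat.card (Subgroup.centralizer ({t} : Set G)) ∣ (Finset.univ \ UU X t).card := by
    apply free_dvd_subgroup
    · intro g hg x hx
      rw [mem_cen] at hg
      rw [Finset.mem_sdiff, mem_UU] at hx ⊢
      refine ⟨Finset.mem_univ _, fun ⟨s, hs, hsx⟩ => hx.2 ⟨s, hs, ?_⟩⟩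
      have h2 : g * s = s * g := S.comm ht hg (mem_Icen.1 hs).2
      rw [← smul_left_cancel_iff g, ← mul_smul, h2, mul_smul, hsx]
    · intro g hg x hx hgx
      rw [mem_cen] at hg
      by_contra hne
      rw [Finset.mem_sdiff, mem_UU] at hx
      exact hx.2 ⟨g, mem_Icen.2 ⟨mem_II.2 ⟨hne, S.sq t ht g hg, x, hgx⟩, hg⟩, hgx⟩
  rw [S.cen_card S.odd ht] at h1
  obtain ⟨m, hm⟩ := h1
  refine ⟨2 * m, ?_, by rw [hm]; ring⟩
  have h2 := Finset.card_sdiff_add_card_eq_card (Finset.subset_univ (UU X t))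
  rw [hm, S.UU_card ht, Finset.card_univ] at h2
  rw [← h2]; ring

/-- The classes of commuting reflections have equal size. -/
theorem N_dvd (S : SixConf G X R k l n) {t : G} (ht : t ∈ II G X) :
    (Icen X t).card ∣ (II G X).card := by
  rw [Finset.card_eq_sum_card_image (fun s => Icen X s) (II G X)]
  apply Finset.dvd_sum
  intro c hc
  rw [Finset.mem_image] at hc
  obtain ⟨s, hs, rfl⟩ := hc
  have e : ((II G X).filter fun a => Icen X a = Icen X s) = Icen X s := by
    ext a
    rw [Finset.mem_filter, mem_Icen]
    refine and_congr_right fun ha => ⟨fun h => ?_, fun h => S.Icen_eq ha hs h⟩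
    have : a ∈ Icen X s := by rw [← h, mem_Icen]; exact ⟨ha, rfl⟩
    exact (mem_Icen.1 this).2
  rw [e, S.Icen_card S.odd hs ht]

theorem smul_ne (S : SixConf G X R k l n) {t g : G} {x : X} (ht : t ∈ II G X) (htx : t • x = x)
    (hg : g * t = t * g) (h1 : g ≠ 1) (h2 : g ≠ t) : x ≠ g • x := by
  intro h
  rcases S.cen_stab S.odd ht htx h.symm hg with h | h
  · exact h1 h
  · exact h2 h

theorem bF_even (S : SixConf G X R k l n) {t g : G} {x : X} (ht : t ∈ II G X) (htx : t • x = x)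
    (hg : g * t = t * g) : (bF R x g).card % 2 = 0 := by
  obtain ⟨h1, h2, -⟩ := mem_II.1 ht
  rw [card_mod_two_fixed _ (fun y => t • y) (fun y _ => by rw [← mul_smul, h2, one_smul]),
    Finset.filter_false_of_mem]
  · simp
  · intro y hy hty
    simp only [bF, Finset.mem_filter, Finset.mem_univ, true_and] at hy
    exact h1 (S.reg_out S.hk hy.1 htx hty)
  · intro y hy
    simp only [bF, Finset.mem_filter, Finset.mem_univ, true_and] at hy ⊢
    exact ⟨S.R_smul htx hy.1, smul_fix hg.symm hy.2⟩

/-- The Klein four-group `⟨t, g⟩` acts on the six common neighbours of `x` and `g x`. -/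
theorem bF_sum (S : SixConf G X R k l n) {t g : G} {x : X} (ht : t ∈ II G X) (htx : t • x = x)
    (hg : g * t = t * g) (hg1 : g ≠ 1) (hgt : g ≠ t) :
    (bF R x g).card + (bF R x (t * g)).card = 2 ∨ (bF R x g).card + (bF R x (t * g)).card = 6 := by
  obtain ⟨h1, h2, -⟩ := mem_II.1 ht
  have hgg := S.sq t ht g hg
  have htfree : ∀ q, R x q → t • q ≠ q := fun q hq h => h1 (S.reg_out S.hk hq htx h)
  have hgx : ∀ q, R x q → R (g • x) (g • q) := fun q h => S.inv g x q h
  have htgx : t • g • x = g • x := smul_fix hg htx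
  set D := Finset.univ.filter fun q => R x q ∧ R (g • x) q with hD
  have hDc : D.card = 6 := by
    rw [hD, S.cout x (g • x) (S.smul_ne ht htx hg hg1 hgt), S.hl]
  have htD : ∀ q ∈ D, t • q ∈ D := by
    intro q hq
    simp only [hD, Finset.mem_filter, Finset.mem_univ, true_and] at hq ⊢
    exact ⟨S.R_smul htx hq.1, S.R_smul htgx hq.2⟩
  have hgD : ∀ q ∈ D, g • q ∈ D := by
    intro q hq
    simp only [hD, Finset.mem_filter, Finset.mem_univ, true_and] at hq ⊢
    refine ⟨?_, hgx q hq.1⟩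
    have := S.inv g _ _ hq.2
    rwa [← mul_smul, hgg, one_smul] at this
  have hsub1 : bF R x g ⊆ D := by
    intro q hq
    simp only [bF, hD, Finset.mem_filter, Finset.mem_univ, true_and] at hq ⊢
    refine ⟨hq.1, ?_⟩
    have := hgx q hq.1
    rwa [hq.2] at this
  have hsub2 : bF R x (t * g) ⊆ D := by
    intro q hq
    simp only [bF, hD, Finset.mem_filter, Finset.mem_univ, true_and] at hq ⊢
    refine ⟨hq.1, ?_⟩
    have := S.inv (t * g) _ _ hq.1
    rwa [hq.2, mul_smul, htgx] at this
  have hdis : Disjoint (bF R x g) (bF R x (t * g)) := by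
    rw [Finset.disjoint_left]
    intro q hq hq'
    simp only [bF, Finset.mem_filter, Finset.mem_univ, true_and] at hq hq'
    have := hq'.2
    rw [mul_smul, hq.2] at this
    exact htfree q hq.1 this
  have h4 : 4 ∣ (D \ (bF R x g ∪ bF R x (t * g))).card := by
    rw [← card_klein h2 hgg hg h1 hg1 hgt]
    have hmem : ∀ q, q ∈ D \ (bF R x g ∪ bF R x (t * g)) ↔
        q ∈ D ∧ g • q ≠ q ∧ t • g • q ≠ q := by
      intro q
      rw [Finset.mem_sdiff, Finset.mem_union, not_or]
      refine and_congr_right fun hq => ?_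
      simp only [hD, Finset.mem_filter, Finset.mem_univ, true_and] at hq
      simp [bF, hq.1, mul_smul]
    have hst : ∀ q ∈ D \ (bF R x g ∪ bF R x (t * g)), t • q ∈ D \ (bF R x g ∪ bF R x (t * g)) := by
      intro q hq
      rw [hmem] at hq ⊢
      refine ⟨htD q hq.1, ?_, ?_⟩
      · rw [← mul_smul, hg, mul_smul, ne_eq, smul_left_cancel_iff]; exact hq.2.1
      · rw [← mul_smul g t, hg, mul_smul, ne_eq, smul_left_cancel_iff]; exact hq.2.2
    have hsg : ∀ q ∈ D \ (bF R x g ∪ bF R x (t * g)), g • q ∈ D \ (bF R x g ∪ bF R x (t * g)) := by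
      intro q hq
      rw [hmem] at hq ⊢
      refine ⟨hgD q hq.1, ?_, ?_⟩
      · rw [ne_eq, smul_left_cancel_iff]; exact hq.2.1
      · rw [← mul_smul t g, ← hg, mul_smul, ne_eq, smul_left_cancel_iff]
        exact hq.2.2
    apply free_dvd_subgroup
    · intro a ha q hq
      rw [mem_klein] at ha
      rcases ha with rfl | rfl | rfl | rfl
      · rwa [one_smul]
      · exact hst q hq
      · exact hsg q hq
      · rw [mul_smul]; exact hst _ (hsg q hq)
    · intro a ha q hq haq
      rw [mem_klein] at ha
      rw [hmem] at hq
      rcases ha with rfl | rfl | rfl | rfl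
      · rfl
      · simp only [hD, Finset.mem_filter, Finset.mem_univ, true_and] at hq
        exact absurd haq (htfree q hq.1.1)
      · exact absurd haq hq.2.1
      · rw [mul_smul] at haq; exact absurd haq hq.2.2
  have h5 := Finset.card_sdiff_add_card_eq_card (Finset.union_subset hsub1 hsub2)
  rw [Finset.card_union_of_disjoint hdis, hDc] at h5
  omega

/-- The elements of the centralizer of `t` that are trivial or have no fixed point. -/
def ZZ (S : SixConf G X R k l n) (t : G) (ht : t ∈ II G X) : Subgroup G where
  carrier := {g | g * t = t * g ∧ g ∉ II G X}
  one_mem' := ⟨by simp, by rw [mem_II]; simp⟩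
  inv_mem' := by
    rintro g ⟨h1, h2⟩
    rw [inv_eq_of_mul_eq_one_left (S.sq t ht g h1)]
    exact ⟨h1, h2⟩
  mul_mem' := by
    rintro g h ⟨hg, hg'⟩ ⟨hh, hh'⟩
    refine ⟨by rw [mul_assoc, hh, ← mul_assoc, hg, mul_assoc], fun hI => ?_⟩
    obtain ⟨-, -, x, hx⟩ := mem_II.1 hI
    have hgg := S.sq t ht g hg
    have hcom := S.comm ht hg hh
    have he : g * h * g = h := by rw [hcom, mul_assoc, hgg, mul_one]
    have hnil : ∀ a : G, a * a = 1 → a ∉ II G X → a ≠ 1 → (bF R x a).card = 0 := by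
      intro a ha ha' ha1
      rw [Finset.card_eq_zero, bF, Finset.filter_false_of_mem]
      rintro q - ⟨-, hq⟩
      exact ha' (mem_II.2 ⟨ha1, ha, q, hq⟩)
    have hg1 : g ≠ 1 := by rintro rfl; rw [one_mul] at hI; exact hh' hI
    have hh1 : h ≠ 1 := by rintro rfl; rw [mul_one] at hI; exact hg' hI
    have := S.bF_sum hI hx (g := g) (by rw [he, ← mul_assoc, hgg, one_mul]) hg1
      (fun h => hg' (h ▸ hI))
    rw [he, hnil g hgg hg' hg1, hnil h (S.sq t ht h hh) hh' hh1] at this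
    omega

theorem ZZ_card (S : SixConf G X R k l n) {t : G} (ht : t ∈ II G X) :
    Nat.card (S.ZZ t ht) + (Icen X t).card = 2 * (fixF X t).card := by
  rw [← S.cen_card S.odd ht]
  have e1 : Nat.card (S.ZZ t ht) =
      ((Finset.univ.filter fun g : G => g * t = t * g).filter fun g => ¬ g ∈ II G X).card := by
    rw [Nat.card_eq_fintype_card, Fintype.card_subtype]
    congr 1
    ext g
    simp only [Finset.mem_filter, Finset.mem_univ, true_and]
    exact Iff.rfl
  have e2 : Nat.card (Subgroup.centralizer ({t} : Set G)) =
      (Finset.univ.filter fun g : G => g * t = t * g).card := by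
    rw [Nat.card_eq_fintype_card, Fintype.card_subtype]
    congr 1
    ext g
    simp only [Finset.mem_filter, Finset.mem_univ, true_and]
    exact mem_cen
  have e3 : Icen X t = ((Finset.univ.filter fun g : G => g * t = t * g).filter
      fun g => g ∈ II G X) := by
    ext g
    rw [mem_Icen]
    simp [and_comm]
  rw [e1, e2, e3, add_comm]
  exact Finset.card_filter_add_card_filter_not _

/-- The centralizer is a `2`-group, and `ZZ` is a subgroup of it. -/
theorem ZZ_pow (S : SixConf G X R k l n) {t : G} (ht : t ∈ II G X) :
    ∃ a b, Nat.card (S.ZZ t ht) = 2 ^ a ∧ 2 * (fixF X t).card = 2 ^ a * 2 ^ b := by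
  have h1 : IsPGroup 2 (Subgroup.centralizer ({t} : Set G)) := by
    intro g
    refine ⟨1, Subtype.ext ?_⟩
    have := S.sq t ht g.1 (mem_cen.1 g.2)
    simpa [pow_two] using this
  have : Fact (Nat.Prime 2) := ⟨Nat.prime_two⟩
  obtain ⟨c, hc⟩ := IsPGroup.iff_card.1 h1
  have h2 : S.ZZ t ht ≤ Subgroup.centralizer ({t} : Set G) := fun g hg => mem_cen.2 hg.1
  have h3 := Subgroup.card_dvd_of_le h2
  rw [S.cen_card S.odd ht] at hc h3
  rw [hc] at h3
  obtain ⟨a, ha, hZ⟩ := (Nat.dvd_prime_pow Nat.prime_two).1 h3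
  exact ⟨a, c - a, hZ, by rw [hc, ← pow_add, Nat.add_sub_cancel' ha]⟩

end SixConf
end OddSixB

/-! ### The case `n` odd, `k = 2n`, `λ = 6`: counting neighbours -/

section OddSixC
open Classical MulAction

namespace SixConf

variable {G X : Type*} [Group G] [MulAction G X] [Fintype X] {R : X → X → Prop} {k l n : ℕ}
variable [Fintype G]

theorem swap (S : SixConf G X R k l n) : SixConf G X (fun x y => R y x) k l n where
  toRelConf := S.toRelConf.swap
  odd := S.odd
  hk := S.hk
  hl := S.hl
  sq := S.sq

theorem bF_smul (S : SixConf G X R k l n) {g h : G} (hc : g * h = h * g) (x : X) :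
    (bF R (h • x) g).card = (bF R x g).card := by
  rw [← Finset.card_image_of_injective (bF R x g) (MulAction.injective h)]
  congr 1
  ext q
  rw [Finset.mem_image]
  simp only [bF, Finset.mem_filter, Finset.mem_univ, true_and]
  constructor
  · rintro ⟨h1, h2⟩
    refine ⟨h⁻¹ • q, ⟨?_, ?_⟩, smul_inv_smul _ _⟩
    · rw [← S.inv_iff h, smul_inv_smul]; exact h1
    · rw [← smul_left_cancel_iff h, ← mul_smul, ← hc, mul_smul, smul_inv_smul, h2]
  · rintro ⟨q, ⟨h1, h2⟩, rfl⟩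
    exact ⟨S.inv h _ _ h1, smul_fix hc.symm h2⟩

/-- The number of neighbours in `Fix g` of a point of `Fix t` equals the number of neighbours in
`Fix t` of a point of `Fix g`: the common centralizer is transitive on both sets. -/
theorem bF_eq (S : SixConf G X R k l n) {t g : G} (ht : t ∈ II G X) (hg : g ∈ II G X)
    (hgt : g * t = t * g) {x q : X} (htx : t • x = x) (hgq : g • q = q) :
    (bF (fun a b => R b a) q t).card = (bF R x g).card := by
  have h1 := double_count (fixF X t) (fixF X g) (fun p q => R p q) (bF R x g).card
    (bF (fun a b => R b a) q t).card (by
      intro p hp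
      obtain ⟨h, hh, rfl⟩ := S.cen_tr S.odd ht htx (mem_fixF.1 hp)
      rw [← S.bF_smul (S.comm ht hgt hh) x]
      congr 1
      ext q
      simp [bF, fixF, and_comm]) (by
      intro p hp
      obtain ⟨h, hh, rfl⟩ := S.cen_tr S.odd hg hgq (mem_fixF.1 hp)
      rw [← S.swap.bF_smul (S.comm hg hgt.symm hh) q]
      congr 1
      ext q
      simp [bF, fixF, and_comm])
  rw [S.fixF_card S.odd hg ht] at h1
  have h2 := S.two_le_fix ht
  exact (Nat.eq_of_mul_eq_mul_left (by omega) h1).symm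

/-- A neighbour `q` of a point of `Fix t` has at least one further neighbour in `Fix t`: the
involution `t` acts on the six points having both `q` and `t q` as neighbours. -/
theorem two_le_bF (S : SixConf G X R k l n) {t : G} (ht : t ∈ II G X) {x q : X} (htx : t • x = x)
    (hq : R x q) : 2 ≤ (bF (fun a b => R b a) q t).card := by
  obtain ⟨h1, h2, -⟩ := mem_II.1 ht
  have hne : q ≠ t • q := fun h => h1 (S.reg_out S.hk hq htx h.symm)
  have h3 := card_mod_two_fixed (Finset.univ.filter fun w => R w q ∧ R w (t • q))
    (fun w => t • w) (fun y _ => by rw [← mul_smul, h2, one_smul]) (by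
      intro w hw
      simp only [Finset.mem_filter, Finset.mem_univ, true_and] at hw ⊢
      refine ⟨?_, S.inv t _ _ hw.1⟩
      have := S.inv t _ _ hw.2
      rwa [← mul_smul, h2, one_smul] at this)
  have h4 : ((Finset.univ.filter fun w => R w q ∧ R w (t • q)).filter fun w => t • w = w) =
      bF (fun a b => R b a) q t := by
    ext w
    simp only [bF, Finset.mem_filter, Finset.mem_univ, true_and]
    refine ⟨fun h => ⟨h.1.1, h.2⟩, fun h => ⟨⟨h.1, S.R_smul h.2 h.1⟩, h.2⟩⟩
  rw [S.cin q (t • q) hne, S.hl, h4] at h3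
  have h5 : 0 < (bF (fun a b => R b a) q t).card :=
    Finset.card_pos.2 ⟨x, by simp [bF, hq, htx]⟩
  omega

theorem sum_bF (S : SixConf G X R k l n) {t : G} {x : X} (htx : t • x = x) :
    ∑ q ∈ Finset.univ.filter (fun q => R x q), (bF (fun a b => R b a) q t).card =
      2 * n + 6 * ((fixF X t).card - 1) := by
  have h1 := double_count_sum (fixF X t) (Finset.univ.filter fun q => R x q) (fun p q => R p q)
  have h2 : ∀ q, ((fixF X t).filter fun p => R p q) = bF (fun a b => R b a) q t := by
    intro q
    ext p
    simp [bF, fixF, and_comm]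
  simp only [h2] at h1
  rw [← h1, ← Finset.add_sum_erase _ _ (mem_fixF.2 htx)]
  congr 1
  · rw [Finset.filter_filter]
    simp only [and_self]
    rw [S.out, S.hk]
  · rw [Finset.sum_const_nat (m := 6), Finset.card_erase_of_mem (mem_fixF.2 htx), mul_comm]
    intro p hp
    rw [Finset.filter_filter, S.cout x p (Finset.ne_of_mem_erase hp).symm, S.hl]

/-- A lower bound for the number of neighbours outside `UU X t` of a fixed point `x` of `t`: the
neighbours inside are partitioned according to the commuting reflection `g ≠ t` fixing them, into
sets of even size `b g`, and `(b g - 2)² + (b (t g) - 2)² ≥ 4`. -/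
theorem local_bound (S : SixConf G X R k l n) {t : G} (ht : t ∈ II G X) {x : X} (htx : t • x = x) :
    3 * n ≤ 5 * ((fixF X t).card - 1) +
      ((Finset.univ \ UU X t).filter fun q => R x q).card := by
  obtain ⟨ht1, htt, -⟩ := mem_II.1 ht
  set K := (Icen X t).erase t with hK
  set W := (Finset.univ \ UU X t).filter fun q => R x q with hW
  set b : G → ℕ := fun g => (bF R x g).card with hb
  have hdisj : ∀ g ∈ K, ∀ g' ∈ K, g ≠ g' → Disjoint (bF R x g) (bF R x g') := by
    intro g hg g' hg' hne
    rw [Finset.disjoint_left]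
    intro q hq hq'
    simp only [bF, Finset.mem_filter, Finset.mem_univ, true_and] at hq hq'
    have hg := mem_Icen.1 (Finset.mem_of_mem_erase hg)
    have hg' := mem_Icen.1 (Finset.mem_of_mem_erase hg')
    rcases S.cen_stab S.odd hg'.1 hq'.2 hq.2 (S.comm ht hg.2 hg'.2) with h | h
    · exact (mem_II.1 hg.1).1 h
    · exact hne h
  have hsplit : (Finset.univ.filter fun q => R x q) = K.biUnion (fun g => bF R x g) ∪ W := by
    ext q
    simp only [Finset.mem_filter, Finset.mem_univ, true_and, Finset.mem_union, Finset.mem_biUnion,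
      hW, Finset.mem_sdiff, mem_UU, bF]
    constructor
    · intro hq
      by_cases h : ∃ s ∈ Icen X t, s • q = q
      · left
        obtain ⟨s, hs, hsq⟩ := h
        refine ⟨s, Finset.mem_erase.2 ⟨?_, hs⟩, hq, hsq⟩
        rintro rfl
        exact ht1 (S.reg_out S.hk hq htx hsq)
      · exact Or.inr ⟨h, hq⟩
    · rintro (⟨g, -, h, -⟩ | h)
      · exact h
      · exact h.2
  have hdW : Disjoint (K.biUnion (fun g => bF R x g)) W := by
    rw [Finset.disjoint_left]
    intro q hq hq'
    simp only [hW, Finset.mem_filter, Finset.mem_sdiff, Finset.mem_univ, true_and, mem_UU] at hq'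
    simp only [Finset.mem_biUnion, bF, Finset.mem_filter, Finset.mem_univ, true_and] at hq
    obtain ⟨g, hg, -, hq⟩ := hq
    exact hq'.1 ⟨g, Finset.mem_of_mem_erase hg, hq⟩
  have h1 := S.out x
  rw [hsplit, Finset.card_union_of_disjoint hdW, Finset.card_biUnion hdisj, S.hk] at h1
  have h2 := S.sum_bF htx
  rw [hsplit, Finset.sum_union hdW, Finset.sum_biUnion hdisj] at h2
  have h3 : ∑ g ∈ K, b g * b g ≤
      ∑ g ∈ K, ∑ q ∈ bF R x g, (bF (fun a b => R b a) q t).card := by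
    apply Finset.sum_le_sum
    intro g hg
    have hg := mem_Icen.1 (Finset.mem_of_mem_erase hg)
    rw [Finset.sum_const_nat (m := b g)]
    intro q hq
    simp only [bF, Finset.mem_filter, Finset.mem_univ, true_and] at hq
    exact S.bF_eq ht hg.1 hg.2 htx hq.2
  have h4 : W.card * 2 ≤ ∑ q ∈ W, (bF (fun a b => R b a) q t).card := by
    rw [← smul_eq_mul, ← Finset.sum_const]
    apply Finset.sum_le_sum
    intro q hq
    exact S.two_le_bF ht htx (Finset.mem_filter.1 hq).2
  set Q := ((Finset.univ.filter fun g : G => g * t = t * g).erase 1).erase t with hQ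
  have hmQ : ∀ g, g ∈ Q ↔ g ≠ t ∧ g ≠ 1 ∧ g * t = t * g := by
    intro g; simp [hQ]
  have hQc : Q.card + 2 = 2 * (fixF X t).card := by
    have e2 : Nat.card (Subgroup.centralizer ({t} : Set G)) =
        (Finset.univ.filter fun g : G => g * t = t * g).card := by
      rw [Nat.card_eq_fintype_card, Fintype.card_subtype]
      congr 1
      ext g
      simp only [Finset.mem_filter, Finset.mem_univ, true_and]
      exact mem_cen
    have h5 := S.two_le_fix ht
    rw [← S.cen_card S.odd ht, e2]
    have h6 := S.cen_card S.odd ht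
    rw [e2] at h6
    rw [hQ, Finset.card_erase_of_mem, Finset.card_erase_of_mem]
    · omega
    · simp
    · simp [ht1]
  have hKQ : K ⊆ Q := by
    intro g hg
    rw [hK, Finset.mem_erase, mem_Icen] at hg
    rw [hmQ]
    exact ⟨hg.1, (mem_II.1 hg.2.1).1, hg.2.2⟩
  have hz : ∀ g ∈ Q, g ∉ K → b g = 0 := by
    intro g hg hgK
    rw [hmQ] at hg
    rw [hb]
    show (bF R x g).card = 0
    rw [Finset.card_eq_zero, bF, Finset.filter_false_of_mem]
    rintro q - ⟨-, hq⟩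
    exact hgK (Finset.mem_erase.2 ⟨hg.1, mem_Icen.2
      ⟨mem_II.2 ⟨hg.2.1, S.sq t ht g hg.2.2, q, hq⟩, hg.2.2⟩⟩)
  have h5 : ∑ g ∈ K, b g = ∑ g ∈ Q, b g := Finset.sum_subset hKQ hz
  have h6 : ∑ g ∈ K, b g * b g = ∑ g ∈ Q, b g * b g :=
    Finset.sum_subset hKQ (fun g h h' => by rw [hz g h h', mul_zero])
  have hinv : ∀ F : G → ℕ, ∑ g ∈ Q, F (t * g) = ∑ g ∈ Q, F g := by
    intro F
    have hm : ∀ g ∈ Q, t * g ∈ Q := by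
      intro g hg
      rw [hmQ] at hg ⊢
      refine ⟨by simpa using hg.2.1, fun h => hg.1 ?_, by rw [mul_assoc, hg.2.2]⟩
      rw [← mul_right_inj t, h, htt]
    have hi : ∀ g : G, t * (t * g) = g := fun g => by rw [← mul_assoc, htt, one_mul]
    exact Finset.sum_nbij' (fun g => t * g) (fun g => t * g) hm hm (fun g _ => hi g)
      (fun g _ => hi g) (fun g _ => rfl)
  have h7 : ∑ g ∈ Q, 4 * (b g + b (t * g)) ≤ ∑ g ∈ Q, (b g * b g + b (t * g) * b (t * g) + 4) := by
    apply Finset.sum_le_sum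
    intro g hg
    rw [hmQ] at hg
    have e1 : b g % 2 = 0 := S.bF_even ht htx hg.2.2
    have e2 : b (t * g) % 2 = 0 := S.bF_even ht htx (by rw [mul_assoc, hg.2.2])
    have e3 : b g + b (t * g) = 2 ∨ b g + b (t * g) = 6 := S.bF_sum ht htx hg.2.2 hg.2.1 hg.1
    have e4 : b g ≤ 6 := by omega
    generalize b (t * g) = c at *
    generalize b g = d at *
    obtain rfl | rfl : c = 2 - d ∨ c = 6 - d := by omega
    all_goals interval_cases d <;> omega
  rw [← Finset.mul_sum, Finset.sum_add_distrib, Finset.sum_add_distrib, Finset.sum_add_distrib,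
    hinv b, hinv (fun g => b g * b g), Finset.sum_const, smul_eq_mul, ← h5, ← h6] at h7
  change ∑ g ∈ K, b g + W.card = 2 * n at h1
  have h8 := S.two_le_fix ht
  omega

/-- Summing the local bound over the points of `UU X t`. -/
theorem global_bound (S : SixConf G X R k l n) {t : G} (ht : t ∈ II G X) {M : ℕ}
    (hM : (Finset.univ \ UU X t).card = (fixF X t).card * M) :
    (Icen X t).card * (3 * n) ≤ (Icen X t).card * (5 * ((fixF X t).card - 1)) + 2 * n * M := by
  have h1 : ∀ x ∈ UU X t, 3 * n ≤ 5 * ((fixF X t).card - 1) +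
      ((Finset.univ \ UU X t).filter fun q => R x q).card := by
    intro x hx
    obtain ⟨s, hs, hsx⟩ := mem_UU.1 hx
    rw [mem_Icen] at hs
    rw [← S.UU_eq hs.1 ht hs.2, ← S.fixF_card S.odd hs.1 ht]
    exact S.local_bound hs.1 hsx
  have h2 := Finset.sum_le_sum h1
  rw [Finset.sum_add_distrib, Finset.sum_const, Finset.sum_const, smul_eq_mul, smul_eq_mul,
    S.UU_card ht, double_count_sum (UU X t) (Finset.univ \ UU X t) R] at h2
  have h3 : ∑ q ∈ Finset.univ \ UU X t, ((UU X t).filter fun x => R x q).card ≤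
      ∑ q ∈ Finset.univ \ UU X t, 2 * n := by
    apply Finset.sum_le_sum
    intro q _
    rw [← S.hk, ← S.inn q]
    exact Finset.card_le_card (Finset.filter_subset_filter _ (Finset.subset_univ _))
  rw [Finset.sum_const, smul_eq_mul, hM] at h3
  have h4 := S.two_le_fix ht
  apply Nat.le_of_mul_le_mul_left (c := (fixF X t).card) _ (by omega)
  nlinarith

end SixConf
end OddSixC

/-! ### The case `n` odd, `k = 2n`, `λ = 6`: arithmetic -/

section OddSixD
open Classical MulAction

/-- The real inequality used when the fixed-point-free part of the centralizer is small: the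
two upper bounds on `N` and the lower bound `N ≥ 31 f / 16` are incompatible. The ranges
`w ≤ 1.19 f` and `w ≥ 1.19 f` are treated separately. -/
theorem six_ineq (f w N : ℝ) (hf : 16 ≤ f) (hw : f + 1 ≤ w) (hN : 31 * f ≤ 16 * N)
    (h1 : 3 * w ^ 2 + w + 2 + 2 * f ^ 2 ≤ 2 * f * (N + w + 1))
    (h2 : 5 * f * N * (3 * w + 3 - 2 * f) ≤ (3 * w + 1) * (3 * w ^ 2 + w + 2)) : False := by
  have hp : 0 ≤ 3 * w + 3 - 2 * f := by linarith
  rcases le_total (100 * w) (119 * f) with hc | hc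
  · have h3 : 155 * f ^ 2 * (3 * w + 3 - 2 * f) ≤ 16 * ((3 * w + 1) * (3 * w ^ 2 + w + 2)) := by
      have : 0 ≤ 5 * f * (16 * N - 31 * f) * (3 * w + 3 - 2 * f) := by
        apply mul_nonneg (mul_nonneg (by linarith) (by linarith)) hp
      nlinarith
    have h4 : 0 ≤ 155 * f ^ 2 * (3 * w - 2 * f) - 144 * w ^ 3 := by
      obtain ⟨a, ha⟩ : ∃ a, a = w - f := ⟨_, rfl⟩
      obtain ⟨b, hb⟩ : ∃ b, b = 119 * f - 100 * w := ⟨_, rfl⟩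
      have ha0 : 0 ≤ a := by linarith
      have hb0 : 0 ≤ b := by linarith
      have e1 : f = (b + 100 * a) / 19 := by linarith
      have e2 : w = (b + 119 * a) / 19 := by linarith
      rw [e1, e2]
      ring_nf
      positivity
    have h5 : 0 < 465 * f ^ 2 - 96 * w ^ 2 - 112 * w - 32 := by nlinarith
    nlinarith
  · have h3 : 5 * (3 * w ^ 2 + w + 2 + 2 * f ^ 2 - 2 * f * w - 2 * f) * (3 * w + 3 - 2 * f) ≤
        2 * ((3 * w + 1) * (3 * w ^ 2 + w + 2)) := by
      have := mul_le_mul_of_nonneg_right h1 hp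
      nlinarith
    obtain ⟨e, he⟩ : ∃ e, e = w - 119 / 100 * f := ⟨_, rfl⟩
    obtain ⟨d, hd⟩ : ∃ d, d = f - 16 := ⟨_, rfl⟩
    have he0 : 0 ≤ e := by linarith
    have hd0 : 0 ≤ d := by linarith
    have e1 : w = e + 119 / 100 * f := by linarith
    have e2 : f = d + 16 := by linarith
    have h4 : 0 < 5 * (3 * w ^ 2 + w + 2 + 2 * f ^ 2 - 2 * f * w - 2 * f) * (3 * w + 3 - 2 * f) -
        2 * ((3 * w + 1) * (3 * w ^ 2 + w + 2)) := by
      rw [e1, e2]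
      ring_nf
      positivity
    linarith

/-- The case `2 ^ b = 8` of `six_arith`, where `f = 4 z`, `N = 7 z` and `M = z m`: the hypotheses
bound `w` by `10`, unless `m = 0`, which a congruence modulo `7` excludes. -/
theorem six_three (z m w : ℕ) (hz : 0 < z) (hw : w % 4 = 3)
    (h5 : 3 * w * w + w + 2 = 8 * z * (7 * z + z * m)) (hM : z * m + 4 * z ≤ w + 1) : False := by
  rcases Nat.eq_zero_or_pos m with rfl | hm
  · -- `3 w ^ 2 + w + 2` has no root modulo `7`
    have h6 : (3 * w * w + w + 2) % 7 = 0 := by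
      rw [h5, show 8 * z * (7 * z + z * 0) = 7 * (8 * z * z) by ring]; exact Nat.mul_mod_right _ _
    rw [Nat.add_mod, Nat.add_mod (3 * w * w), Nat.mul_mod (3 * w), Nat.mul_mod 3] at h6
    have h7 : w % 7 < 7 := Nat.mod_lt _ (by norm_num)
    generalize w % 7 = r at h6 h7
    interval_cases r <;> omega
  · have h6 : z ≤ z * m := Nat.le_mul_of_pos_right _ hm
    have h7 : 8 * z * (7 * z + z * m) ≤ 8 * z * (3 * z + w + 1) :=
      Nat.mul_le_mul_left _ (by omega)
    have h8 : 5 * z ≤ w + 1 := by omega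
    have h9 : 5 * z * (5 * z) ≤ (w + 1) * (w + 1) := Nat.mul_le_mul h8 h8
    have h10 : 5 * z * (w + 1) ≤ (w + 1) * (w + 1) := Nat.mul_le_mul_right _ h8
    have h11 : w < 11 := by
      by_contra hcon
      have := Nat.mul_le_mul_right w (show 11 ≤ w by omega)
      linarith
    have h12 : z < 3 := by omega
    generalize z * m = c at *
    interval_cases w <;> interval_cases z <;> omega

/-- The case `2 ^ b = 16` of `six_arith`, where `f = 8 z`, `N = 15 z` and `M = z m`. -/
theorem six_four (z m w : ℕ) (hz : 0 < z) (hw : w % 4 = 3) (hfw : 8 * z + 1 ≤ w)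
    (h5 : 3 * w * w + w + 2 = 16 * z * (15 * z + z * m)) (hM : z * m + 8 * z ≤ w + 1)
    (hJ : m ≠ 1) : False := by
  rcases (show m = 0 ∨ 2 ≤ m by omega) with rfl | hm
  · -- `3 w ^ 2 + w + 2` has no root modulo `5`
    have h6 : (3 * w * w + w + 2) % 5 = 0 := by
      rw [h5, show 16 * z * (15 * z + z * 0) = 5 * (48 * z * z) by ring]; exact Nat.mul_mod_right _ _
    rw [Nat.add_mod, Nat.add_mod (3 * w * w), Nat.mul_mod (3 * w), Nat.mul_mod 3] at h6
    have h7 : w % 5 < 5 := Nat.mod_lt _ (by norm_num)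
    generalize w % 5 = r at h6 h7
    interval_cases r <;> omega
  · have h6 : z * 2 ≤ z * m := Nat.mul_le_mul_left _ hm
    have h7 : 16 * z * (15 * z + z * m) ≤ 16 * z * (7 * z + w + 1) :=
      Nat.mul_le_mul_left _ (by omega)
    have h8 : 10 * z ≤ w + 1 := by omega
    have h9 : 10 * z * (10 * z) ≤ (w + 1) * (w + 1) := Nat.mul_le_mul h8 h8
    have h10 : 10 * z * (w + 1) ≤ (w + 1) * (w + 1) := Nat.mul_le_mul_right _ h8
    have h11 : w < 17 := by
      by_contra hcon
      have := Nat.mul_le_mul_right w (show 17 ≤ w by omega)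
      linarith
    have h12 : z < 2 := by omega
    obtain rfl : z = 1 := by omega
    generalize 1 * m = c at *
    interval_cases w <;> omega

/-- The case `2 ^ b ≥ 32` of `six_arith`, where `16 z ≤ f`. -/
theorem six_five (f N w n z b : ℕ) (hz0 : 0 < z) (hf : 2 ≤ f) (hzN : z + N = 2 * f)
    (h16 : 16 * z ≤ f) (hnw : 2 * n = 3 * w + 1)
    (h2v : 3 * w * w + w + 2 = 2 * (f * (N + z * b)))
    (hvb : 1 + n * w + f * f ≤ f * (N + w + 1)) (hfw : f + 1 ≤ w)
    (hg : N * (3 * n) ≤ N * (5 * (f - 1)) + 2 * n * (z * b)) : False := by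
  have hzNr : (z : ℝ) + N = 2 * f := by exact_mod_cast hzN
  have h16r : 16 * (z : ℝ) ≤ f := by exact_mod_cast h16
  have hz1 : (1 : ℝ) ≤ z := by exact_mod_cast hz0
  have hNr : 31 * (f : ℝ) ≤ 16 * N := by linarith
  have hnr : 2 * (n : ℝ) = 3 * w + 1 := by exact_mod_cast hnw
  have h2r : 3 * (w : ℝ) * w + w + 2 = 2 * (f * (N + z * b)) := by exact_mod_cast h2v
  have hvr : (1 : ℝ) + n * w + f * f ≤ f * (N + w + 1) := by exact_mod_cast hvb
  have hfwr : (f : ℝ) + 1 ≤ w := by exact_mod_cast hfw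
  have hgr : (N : ℝ) * (3 * n) ≤ N * (5 * (f - 1)) + 2 * n * (z * b) := by
    have : ((f - 1 : ℕ) : ℝ) = f - 1 := by rw [Nat.cast_sub (by omega)]; norm_num
    rw [← this]
    exact_mod_cast hg
  refine six_ineq f w N (by linarith) hfwr hNr ?_ ?_
  · have : 2 * ((n : ℝ) * w) = (3 * w + 1) * w := by rw [← hnr]; ring
    nlinarith
  · have h5 := mul_le_mul_of_nonneg_left hgr (show (0 : ℝ) ≤ f by linarith)
    have h6 : 2 * ((f : ℝ) * (2 * n * (z * b))) =
        (3 * w + 1) * (3 * w * w + w + 2 - 2 * (f * N)) := by rw [h2r, hnr]; ring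
    have h7 : 2 * ((f : ℝ) * (N * (3 * n))) = 3 * (f * N) * (3 * w + 1) := by rw [← hnr]; ring
    linarith

/-- The arithmetic of the case `λ = 6`. Here `f` is the number of fixed points of a reflection `t`,
`N` the number of reflections commuting with `t`, `f M` the number of points fixed by none of
them, `I` the number of all reflections, and `z = 2 ^ a` the number of elements of the centralizer
of `t` that are not reflections. The quotient `2 ^ b = 2 f / z` determines how close `N` is to
`2 f`; it is at least `8`, and the values `8`, `16` and the larger ones are treated separately. -/
theorem six_arith (f N M w n z a b I : ℕ) (hf : 2 ≤ f) (hz : z = 2 ^ a) (hzN : z + N = 2 * f)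
    (hzJ : 2 * f = z * 2 ^ b) (hnw : 2 * n = 3 * w + 1) (hn : Odd n)
    (hv : 1 + n * w = f * (N + M)) (hvb : 1 + n * w + f * f ≤ f * (N + w + 1)) (hfw : f + 1 ≤ w)
    (hI : I * f = (1 + n * w) * n) (hNI : N ∣ I)
    (hg : N * (3 * n) ≤ N * (5 * (f - 1)) + 2 * n * M) : False := by
  have hn2 := Nat.odd_iff.1 hn
  have hw4 : w % 4 = 3 := by omega
  have h2v : 3 * w * w + w + 2 = 2 * (f * (N + M)) := by
    rw [← hv]; nlinarith
  have hMw : M + f ≤ w + 1 := by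
    rw [hv] at hvb
    have : f * (N + M + f) ≤ f * (N + w + 1) := by rw [mul_add f (N + M)]; exact hvb
    have := Nat.le_of_mul_le_mul_left this (by omega)
    omega
  have h3f : 3 * f < 2 * N := by
    by_contra hcon
    have h2 : f * (2 * N) ≤ f * (3 * f) := Nat.mul_le_mul_left _ (by omega)
    obtain ⟨d, rfl⟩ : ∃ d, w = f + 1 + d := ⟨w - (f + 1), by omega⟩
    nlinarith
  have hz0 : 0 < z := by rw [hz]; positivity
  have hN0 : 0 < N := by omega
  have hNM : N ∣ n * M := by
    have h3 : I = n * N + n * M := by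
      rw [hv] at hI
      refine Nat.eq_of_mul_eq_mul_right (show 0 < f by omega) ?_
      rw [hI]; ring
    rw [h3] at hNI
    exact (Nat.dvd_add_right (Dvd.intro_left n rfl)).1 hNI
  obtain ⟨J, hJ⟩ : ∃ J, 2 ^ b = J + 1 := ⟨2 ^ b - 1, by have := Nat.one_le_two_pow (n := b); omega⟩
  have hNJ : N = z * J := by
    rw [hJ, mul_add, mul_one] at hzJ; omega
  have hzM : z ∣ M := by
    have h3 : z ∣ n * M := (Dvd.intro J hNJ.symm).trans hNM
    refine Nat.Coprime.dvd_of_dvd_mul_left ?_ h3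
    rw [hz]
    exact Nat.Coprime.pow_left _ (Nat.coprime_two_left.2 hn)
  obtain ⟨m, rfl⟩ := hzM
  have hJnm : J ∣ n * m := by
    rw [hNJ, show n * (z * m) = z * (n * m) by ring] at hNM
    exact Nat.dvd_of_mul_dvd_mul_left hz0 hNM
  have hJ4 : 5 ≤ 2 ^ b := by
    by_contra hcon
    have : z * 2 ^ b ≤ z * 4 := Nat.mul_le_mul_left _ (by omega)
    omega
  have hb3 : 3 ≤ b := by
    by_contra hcon
    have : 2 ^ b ≤ 2 ^ 2 := Nat.pow_le_pow_right (by norm_num) (by omega)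
    omega
  rcases (show b = 3 ∨ b = 4 ∨ 5 ≤ b by omega) with rfl | rfl | hb5
  · obtain rfl : J = 7 := by omega
    obtain rfl : f = 4 * z := by omega
    subst hNJ
    exact six_three z m w hz0 hw4 (by rw [h2v]; ring) hMw
  · obtain rfl : J = 15 := by omega
    obtain rfl : f = 8 * z := by omega
    subst hNJ
    refine six_four z m w hz0 hw4 hfw (by rw [h2v]; ring) hMw ?_
    rintro rfl
    omega
  · have hb32 : 2 ^ 5 ≤ 2 ^ b := Nat.pow_le_pow_right (by norm_num) hb5
    have h16 : 16 * z ≤ f := by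
      have : z * 2 ^ 5 ≤ z * 2 ^ b := Nat.mul_le_mul_left _ hb32
      omega
    exact six_five f N w n z m hz0 hf hzN h16 hnw h2v hvb hfw hg

namespace RelConf

variable {G X : Type*} [Group G] [MulAction G X] [Fintype X] {R : X → X → Prop} {k l n : ℕ}
variable [Fintype G]

/-- For `n` odd and `k = 2n` only the parameters of the `2`-`(16, 6, 2)` designs remain. -/
theorem odd_param (T : RelConf G X R k l n) (hn : Odd n) (hk : k = 2 * n) (x : X) :
    n = 3 ∧ l = 2 ∧ Fintype.card X = 16 := by
  obtain ⟨t, ht, -⟩ := T.exists_II x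
  rcases T.odd_two hn hk ht with h | ⟨w, hl, hnw, hv, -, hfw⟩
  · exact h
  exfalso
  have S : SixConf G X R k l n :=
    { toRelConf := T
      odd := hn
      hk := hk
      hl := hl
      sq := fun s hs g hg => T.cen_sq hn hnw hv hs (by rwa [T.fixF_card hn hs ht]) hg }
  obtain ⟨M, hM1, hM2⟩ := S.W_card ht
  obtain ⟨a, b, ha, hb⟩ := S.ZZ_pow ht
  have hvb := (T.v_bound hn ht hv).1
  have hI := T.II_count hn ht
  rw [hv] at hvb hM1 hI
  exact six_arith (fixF X t).card (Icen X t).card M w n (2 ^ a) a b (II G X).card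
    (T.two_le_fix ht) rfl (by rw [← ha]; exact S.ZZ_card ht) hb hnw hn hM1 hvb hfw hI
    (S.N_dvd ht) (S.global_bound ht hM2)

end RelConf
end OddSixD

/-! ### The parameters `(16, 6, 2)` -/

section Sixteen
open Classical MulAction

/-- A group of order `3 * 2 ^ m > 6` has a nontrivial normal `2`-subgroup: the core of a Sylow
`2`-subgroup, which has index at most `3!`. -/
theorem exists_two_core {G : Type*} [Group G] [Finite G] (m : ℕ) (hG : Nat.card G = 3 * 2 ^ m)
    (hm : 2 ≤ m) : ∃ N : Subgroup G, N.Normal ∧ N ≠ ⊥ ∧ IsPGroup 2 N := by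
  have : Fact (Nat.Prime 2) := ⟨Nat.prime_two⟩
  obtain ⟨Q⟩ : Nonempty (Sylow 2 G) := inferInstance
  have hQ : Nat.card (Q : Subgroup G) = 2 ^ m := by
    rw [Q.card_eq_multiplicity, hG, Nat.factorization_mul (by norm_num) (by positivity)]
    simp [Nat.Prime.factorization Nat.prime_two, Nat.factorization_eq_zero_of_not_dvd]
  have hidx : (Q : Subgroup G).index = 3 := by
    have h1 := (Q : Subgroup G).card_mul_index
    rw [hQ, hG, mul_comm] at h1
    exact Nat.eq_of_mul_eq_mul_right (by positivity) h1
  refine ⟨(Q : Subgroup G).normalCore, inferInstance, ?_, Q.2.to_le (Subgroup.normalCore_le _)⟩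
  intro hbot
  have h2 : Nat.card G ∣ Nat.card (Equiv.Perm (G ⧸ (Q : Subgroup G))) := by
    apply Subgroup.card_dvd_of_injective (MulAction.toPermHom G (G ⧸ (Q : Subgroup G)))
    rw [← MonoidHom.ker_eq_bot_iff, ← Subgroup.normalCore_eq_ker, hbot]
  rw [Nat.card_perm, ← Subgroup.index_eq_card, hidx, hG] at h2
  have h3 : 2 ^ 2 ≤ 2 ^ m := Nat.pow_le_pow_right (by norm_num) hm
  have h4 := Nat.le_of_dvd (by decide) h2
  have h5 : Nat.factorial 3 = 6 := rfl
  omega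

/-- A nontrivial normal `2`-subgroup yields a nontrivial normal elementary abelian `2`-subgroup,
namely the central elements of order at most `2`. -/
theorem exists_elemAb {G : Type*} [Group G] [Finite G] (N : Subgroup G) (hN : N.Normal)
    (hN1 : N ≠ ⊥) (hN2 : IsPGroup 2 N) : ∃ A : Subgroup G, A.Normal ∧
      (∀ g ∈ A, g * g = 1) ∧ (∀ g ∈ A, ∀ h ∈ A, g * h = h * g) ∧ ∃ g ∈ A, g ≠ 1 := by
  have : Fact (Nat.Prime 2) := ⟨Nat.prime_two⟩
  have hnt : Nontrivial N := (Subgroup.nontrivial_iff_ne_bot N).2 hN1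
  have hc := hN2.center_nontrivial
  let A : Subgroup G :=
    { carrier := {g | g ∈ N ∧ g * g = 1 ∧ ∀ h ∈ N, g * h = h * g}
      one_mem' := ⟨N.one_mem, by simp, by simp⟩
      mul_mem' := by
        rintro a b ⟨ha, ha2, hac⟩ ⟨hb, hb2, hbc⟩
        refine ⟨N.mul_mem ha hb, ?_, fun h hh => ?_⟩
        · rw [mul_assoc, ← mul_assoc b, ← hac b hb, mul_assoc, hb2, mul_one, ha2]
        · rw [mul_assoc, hbc h hh, ← mul_assoc, hac h hh, mul_assoc]
      inv_mem' := by
        rintro a ⟨ha, ha2, hac⟩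
        rw [Set.mem_ofPred_eq, inv_eq_of_mul_eq_one_left ha2]
        exact ⟨ha, ha2, hac⟩ }
  refine ⟨A, ⟨?_⟩, fun g hg => hg.2.1, fun g hg h hh => hg.2.2 h hh.1, ?_⟩
  · rintro a ⟨ha, ha2, hac⟩ g
    refine ⟨hN.conj_mem a ha g, ?_, fun h hh => ?_⟩
    · rw [show g * a * g⁻¹ * (g * a * g⁻¹) = g * (a * a) * g⁻¹ by group, ha2]; group
    · have h1 := hac (g⁻¹ * h * g) (by simpa using hN.conj_mem h hh g⁻¹)
      calc g * a * g⁻¹ * h = g * (a * (g⁻¹ * h * g)) * g⁻¹ := by group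
        _ = h * (g * a * g⁻¹) := by rw [h1]; group
  · have h1 : 2 ∣ Nat.card (Subgroup.center N) := by
      obtain ⟨j, hj⟩ := IsPGroup.iff_card.1 (hN2.to_subgroup (Subgroup.center N))
      rw [hj]
      apply dvd_pow_self
      rintro rfl
      have := Finite.one_lt_card_iff_nontrivial.2 hc
      omega
    obtain ⟨z, hz⟩ := exists_prime_orderOf_dvd_card' 2 h1
    have hz2 := pow_orderOf_eq_one z
    rw [hz, pow_two] at hz2
    refine ⟨z.1.1, ⟨z.1.2, ?_, fun h hh => ?_⟩, ?_⟩
    · exact congrArg (fun w : Subgroup.center N => (w.1.1 : G)) hz2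
    · exact congrArg Subtype.val (Subgroup.mem_center_iff.1 z.2 ⟨h, hh⟩).symm
    · intro h0
      have : z = 1 := Subtype.ext (Subtype.ext h0)
      rw [this, orderOf_one] at hz
      omega

namespace RelConf

variable {G X : Type*} [Group G] [MulAction G X] [Fintype X] {R : X → X → Prop} {k l n : ℕ}

/-- A normal elementary abelian `2`-subgroup is regular on the points. The elements moving `x` into
a `G_x`-invariant set of at most `3` points generate a subgroup of order at most `8`, normalized by
`G_x`, and the orbit of `x` under it contradicts primitivity on `16` points. -/
theorem no_sixteen (T : RelConf G X R k l n) [Finite G] (x : X) (m : ℕ)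
    (hG : Nat.card G = 3 * 2 ^ m) (hm : 2 ≤ m) (hX : Fintype.card X = 16) (D : Finset X)
    (hD : D.card ≤ 3) (y : X) (hy : y ∈ D) (hyx : y ≠ x)
    (hinv : ∀ g ∈ stabilizer G x, ∀ z ∈ D, g • z ∈ D) : False := by
  obtain ⟨N, hN, hN1, hN2⟩ := exists_two_core m hG hm
  obtain ⟨A, hA, hsq, hcom, a0, ha0, ha1⟩ := exists_elemAb N hN hN1 hN2
  have hmove : ∃ g ∈ A, g • x ≠ x := by
    by_contra! hcon
    apply ha1
    apply T.faith
    intro z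
    obtain ⟨g, rfl⟩ := T.trans x z
    have h1 := hcon (g⁻¹ * a0 * g) (by simpa using hA.conj_mem a0 ha0 g⁻¹)
    rw [mul_smul, mul_smul, inv_smul_eq_iff] at h1
    exact h1
  have htr : ∀ z : X, ∃ a : A, (a : G) • x = z := by
    obtain ⟨g, hg, hgx⟩ := hmove
    have h1 := T.max x (A ⊔ stabilizer G x) le_sup_right g
      (le_sup_left (a := A) (b := stabilizer G x) hg) hgx
    intro z
    obtain ⟨h, rfl⟩ := T.trans x z
    have h2 : h ∈ A ⊔ stabilizer G x := by rw [h1]; trivial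
    obtain ⟨a, ha, s, hs, rfl⟩ := Subgroup.mem_sup_of_normal_left.1 h2
    exact ⟨⟨a, ha⟩, by rw [mul_smul]; congr 1; exact hs.symm⟩
  have huniq : ∀ a b : A, (a : G) • x = (b : G) • x → a = b := by
    intro a b hab
    have h1 : (b⁻¹ * a : A) = 1 := by
      apply Subtype.ext
      apply T.faith
      intro z
      obtain ⟨d, rfl⟩ := htr z
      rw [smul_smul, hcom _ (b⁻¹ * a).2 _ d.2, mul_smul]
      congr 1
      rw [Subgroup.coe_mul, mul_smul, hab, Subgroup.coe_inv, inv_smul_smul]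
    exact (inv_mul_eq_one.1 h1).symm
  choose a ha using htr
  let _ : CommGroup A :=
    { (inferInstance : Group A) with mul_comm := fun g h => Subtype.ext (hcom g g.2 h h.2) }
  let f : Finset X → A := fun S => ∏ z ∈ S, a z
  let F : Finset X := D.powerset.image fun S => (f S : G) • x
  have hF : F.card ≤ 8 := by
    refine Finset.card_image_le.trans ?_
    rw [Finset.card_powerset]
    exact Nat.pow_le_pow_right (by norm_num) hD
  have hy2 : (a y : G) * a y = 1 := hsq _ (a y).2
  have hmv : ∀ s ∈ (F : Set X), (a y : G) • s ∈ (F : Set X) := by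
    intro s hs
    obtain ⟨S, hS, rfl⟩ := Finset.mem_image.1 (Finset.mem_coe.1 hs)
    rw [Finset.mem_powerset] at hS
    rw [Finset.mem_coe, Finset.mem_image]
    by_cases hyS : y ∈ S
    · refine ⟨S.erase y, Finset.mem_powerset.2 ((Finset.erase_subset _ _).trans hS), ?_⟩
      have h1 : f S = a y * f (S.erase y) := (Finset.mul_prod_erase S a hyS).symm
      rw [h1, Subgroup.coe_mul, smul_smul, ← mul_assoc, hy2, one_mul]
    · refine ⟨insert y S, Finset.mem_powerset.2 (Finset.insert_subset hy hS), ?_⟩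
      have h1 : f (insert y S) = a y * f S := Finset.prod_insert hyS
      rw [h1, Subgroup.coe_mul, mul_smul]
  have huniv : (F : Set X) = Set.univ := by
    refine T.max_set x F ?_ ?_ (a y : G) (by rw [ha]; exact hyx) fun s => ⟨fun h => ?_, hmv s⟩
    · rw [Finset.mem_coe, Finset.mem_image]
      exact ⟨∅, by simp, by simp [f]⟩
    · intro g hg s hs
      obtain ⟨S, hS, rfl⟩ := Finset.mem_image.1 (Finset.mem_coe.1 hs)
      rw [Finset.mem_powerset] at hS
      rw [Finset.mem_coe, Finset.mem_image]
      refine ⟨S.image (g • ·), Finset.mem_powerset.2 fun z hz => ?_, ?_⟩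
      · obtain ⟨w, hw, rfl⟩ := Finset.mem_image.1 hz
        exact hinv g hg w (hS hw)
      · have hgx : g⁻¹ • x = x := by rw [inv_smul_eq_iff]; exact hg.symm
        have h1 : ∀ z, a (g • z) = (MulAut.conjNormal g : A ≃* A) (a z) := by
          intro z
          apply huniq
          rw [ha, MulAut.conjNormal_apply, mul_smul, hgx, mul_smul, ha]
        have h2 : f (S.image (g • ·)) = (MulAut.conjNormal g : A ≃* A) (f S) := by
          simp only [f]
          rw [Finset.prod_image (fun _ _ _ _ h => smul_left_cancel g h)]
          simp only [h1]
          rw [map_prod]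
        rw [h2, MulAut.conjNormal_apply, mul_smul, hgx, mul_smul]
    · have := hmv _ h
      rwa [smul_smul, hy2, one_smul] at this
  have h1 : F = Finset.univ := by
    ext z
    have : z ∈ (F : Set X) := by rw [huniv]; trivial
    simpa using this
  rw [h1, Finset.card_univ, hX] at hF
  omega

/-- There is no `RelConf`; that is, a primitive counterexample does not exist. -/
theorem false (T : RelConf G X R k l n) [Finite G] (x : X) : False := by
  have := Fintype.ofFinite G
  have hc := T.cardG x
  rcases Nat.even_or_odd n with hn | hn
  · obtain ⟨u, U⟩ := T.exists_u hn
    rcases T.k_cases x with hk | hk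
    · obtain ⟨h6, -, hX⟩ := T.even_six U x hk
      obtain ⟨y, hy⟩ := T.K_nonempty U x
      have h3 := T.K_half U x
      refine T.no_sixteen x 6 ?_ (by norm_num) hX (Kset u x) (by omega) y hy (mem_Kset.1 hy).1 ?_
      · rw [← hc, hX, h6]; norm_num
      · intro g hg z hz
        have := (T.K_smul U g).2 hz
        rwa [mem_stabilizer_iff.1 hg] at this
    · exact T.even_false U x hk
  · rcases T.k_cases x with hk | hk
    · exact T.odd_one_false hn hk x
    · obtain ⟨h3, -, hX⟩ := T.odd_param hn hk x
      obtain ⟨t, ht, htx⟩ := T.exists_II x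
      obtain ⟨-, ht2, -⟩ := mem_II.1 ht
      obtain ⟨y, hyx, hty⟩ := T.invol_fix ht2 htx
      have h4 := orbF_card (stabilizer G x) y
      rw [(T.dih x).cardH, h3] at h4
      have h5 : 1 < Nat.card (stabilizer G x ⊓ stabilizer G y : Subgroup G) := by
        rw [Finite.one_lt_card_iff_nontrivial, Subgroup.nontrivial_iff_ne_bot]
        intro hb
        have : t ∈ (stabilizer G x ⊓ stabilizer G y : Subgroup G) := ⟨htx, hty⟩
        rw [hb, Subgroup.mem_bot] at this
        exact (mem_II.1 ht).1 this
      refine T.no_sixteen x 5 ?_ (by norm_num) hX (orbF (stabilizer G x) y) ?_ y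
        (mem_orbF.2 ⟨1, Subgroup.one_mem _, one_smul _ _⟩) hyx ?_
      · rw [← hc, hX, h3]; norm_num
      · by_contra hcon
        have := Nat.mul_le_mul (show 4 ≤ (orbF (stabilizer G x) y).card by omega) h5
        omega
      · intro g hg z hz
        obtain ⟨h, hh, rfl⟩ := mem_orbF.1 hz
        exact mem_orbF.2 ⟨g * h, Subgroup.mul_mem _ hg hh, mul_smul _ _ _⟩

end RelConf
end Sixteen

/-! ### Imprimitivity and the equivalence of the local conditions -/

section Glue
open Classical MulAction

namespace SymAct

variable {G X Y : Type*} [Group G] [MulAction G X] [MulAction G Y] [Fintype X] [Fintype Y]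
variable {I : X → Y → Prop} {k l n : ℕ}

theorem equiv_all (S : SymAct G X Y I k l) {x : X} (e : stabilizer G x ≃* DihedralGroup n)
    (x' : X) : Nonempty (stabilizer G x' ≃* DihedralGroup n) := by
  obtain ⟨g, hg⟩ := S.trans x x'
  exact ⟨(stabilizerEquivStabilizer hg.symm).symm.trans e⟩

theorem dih_all (S : SymAct G X Y I k l) (hn : 3 ≤ n) {x : X}
    (e : stabilizer G x ≃* DihedralGroup n) (x' : X) :
    IsDih (stabilizer G x') (rot (stabilizer G x')) n := by
  obtain ⟨e'⟩ := S.equiv_all e x'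
  exact IsDih.of_equiv hn e'

theorem HF_all' (S : SymAct G X Y I k l) (hn : 3 ≤ n) {x : X}
    (e : stabilizer G x ≃* DihedralGroup n) (x' : X) : HF G I x' :=
  S.HF_all (S.HF_of_dih hn e) x'

theorem stab_eq (S : SymAct G X Y I k l) [Finite G] (hn : 3 ≤ n) {x : X}
    (e : stabilizer G x ≃* DihedralGroup n) (y : Y) :
    ∃ z : X, stabilizer G y = stabilizer G z :=
  S.conj_thm hn (S.dih_all hn e) (S.HF_all' hn e) x y

/-- Point stabilizers are dihedral if and only if block stabilizers are; this is one direction,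
the other one is its dual. -/
theorem equiv_dual (S : SymAct G X Y I k l) [Finite G] (hn : 3 ≤ n) {x : X}
    (e : stabilizer G x ≃* DihedralGroup n) (y : Y) :
    Nonempty (stabilizer G y ≃* DihedralGroup n) := by
  obtain ⟨z, hz⟩ := S.stab_eq hn e y
  rw [hz]
  exact S.equiv_all e z

theorem stab_conj (S : SymAct G X Y I k l) [Finite G] (hn : 3 ≤ n) {x : X}
    (e : stabilizer G x ≃* DihedralGroup n) (y : Y) :
    ∃ g : G, stabilizer G y = (stabilizer G x).map (MulAut.conj g).toMonoidHom := by
  obtain ⟨z, hz⟩ := S.stab_eq hn e y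
  obtain ⟨g, rfl⟩ := S.trans x z
  exact ⟨g, by rw [hz, stabilizer_smul_eq_stabilizer_map_conj]⟩

/-- `G_x` is dihedral if and only if its action on the blocks through `x` is: in both cases that
action is faithful. -/
theorem local_iff (S : SymAct G X Y I k l) (hn : 3 ≤ n) (x : X) :
    Nonempty (stabilizer G x ≃* DihedralGroup n) ↔
      Nonempty ((S.locRep x).range ≃* DihedralGroup n) := by
  have hinj : (∀ x', HF G I x') → Function.Injective (S.locRep x) := by
    intro h
    rw [injective_iff_map_eq_one]
    intro g hg
    apply Subtype.ext
    refine S.kernel_trivial h x g g.2 fun y hy => ?_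
    have := congrArg (fun p => (p ⟨y, hy⟩ : Y)) hg
    exact this
  constructor
  · rintro ⟨e⟩
    exact ⟨(MonoidHom.ofInjective (hinj (S.HF_all' hn e))).symm.trans e⟩
  · rintro ⟨e⟩
    have h1 := (IsDih.of_equiv hn e).toIsWDih
    have h2 := S.HF_all (S.HF_of_range (S.locRep x) (S.locRep_apply x) h1)
    exact ⟨(MonoidHom.ofInjective (hinj h2)).trans e⟩

/-- If `G` were primitive on the points, then the bijection between points and blocks with the same
stabilizer would turn incidence into a relation `RelConf`, which does not exist. -/
theorem not_prim (S : SymAct G X Y I k l) [Finite G] (hn : 3 ≤ n) {x : X}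
    (e : stabilizer G x ≃* DihedralGroup n)
    (hprim : ∀ B : Set X, IsBlock G B → B.Subsingleton ∨ B = Set.univ) : False := by
  obtain ⟨y0, -⟩ := S.exists_block x
  obtain ⟨z0, hz0⟩ := S.stab_eq hn e y0
  have hex : ∀ z : X, ∃ w : Y, ∃ g : G, g • z0 = z ∧ g • y0 = w := fun z => by
    obtain ⟨g, hg⟩ := S.trans z0 z
    exact ⟨_, g, hg, rfl⟩
  choose b r hr hb using hex
  have hiff : ∀ g h : G, g • y0 = h • y0 ↔ g • z0 = h • z0 := by
    intro g h
    rw [← inv_smul_eq_iff (g := h), ← inv_smul_eq_iff (g := h), smul_smul, smul_smul,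
      ← mem_stabilizer_iff, hz0, mem_stabilizer_iff]
  have hbs : ∀ (g : G) z, b (g • z) = g • b z := by
    intro g z
    rw [← hb, ← hb z, smul_smul, hiff, hr, mul_smul, hr]
  have hbi : Function.Injective b := by
    intro z w hzw
    rw [← hb, ← hb w, hiff, hr, hr] at hzw
    exact hzw
  have hbb : Function.Bijective b :=
    (Fintype.bijective_iff_injective_and_card b).2 ⟨hbi, S.card_eq⟩
  have hstab : ∀ z, stabilizer G (b z) = stabilizer G z := by
    intro z
    ext g
    rw [mem_stabilizer_iff, mem_stabilizer_iff, ← hbs, hbi.eq_iff]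
  have hcount : ∀ p : Y → Prop, (Finset.univ.filter fun z : X => p (b z)).card =
      (Finset.univ.filter fun y : Y => p y).card := by
    intro p
    rw [← Finset.card_image_of_injective _ hbi]
    congr 1
    ext y
    simp only [Finset.mem_image, Finset.mem_filter, Finset.mem_univ, true_and]
    constructor
    · rintro ⟨z, hz, rfl⟩; exact hz
    · intro hy
      obtain ⟨z, rfl⟩ := hbb.2 y
      exact ⟨z, hy, rfl⟩
  obtain ⟨e'⟩ := S.equiv_dual hn e (b x)
  have T : RelConf G X (fun z w => I w (b z)) k l n :=
    { inv := fun g z w h => by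
        have := S.inv g _ _ h
        rwa [← hbs] at this
      irrefl := by
        -- otherwise `G_z = G_B` would be transitive on `B` and fix `z ∈ B`, so that `k = 1`
        intro z hz
        have h1 := S.deg' (b z)
        have h2 : (Finset.univ.filter fun w => I w (b z)) ⊆ {z} := by
          intro w hw
          obtain ⟨g, hg, hgb⟩ := S.flag z (b z) w (b z) hz (Finset.mem_filter.1 hw).2
          rw [← hbs, hbi.eq_iff] at hgb
          rw [Finset.mem_singleton, ← hg, hgb]
        have h3 := Finset.card_le_card h2
        have h4 := S.two_lt
        rw [h1, Finset.card_singleton] at h3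
        omega
      out := fun z => S.deg' (b z)
      inn := fun w => by rw [hcount (fun y => I w y)]; exact S.deg w
      cout := fun z z' h => S.pair' (b z) (b z') fun h' => h (hbi h')
      cin := fun w w' h => by
        have h1 := hcount (fun y => I w y ∧ I w' y)
        have h2 := S.pair w w' h
        rw [← h2]
        convert h1
      tr_out := fun z w w' h h' => by
        obtain ⟨g, hg, hgb⟩ := S.flag _ _ _ _ h h'
        rw [← hbs, hbi.eq_iff] at hgb
        exact ⟨g, hgb, hg⟩
      tr_in := fun z w w' h h' => by
        obtain ⟨g, hg, hgb⟩ := S.flag _ _ _ _ h h'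
        rw [← hbs, hbi.eq_iff] at hgb
        exact ⟨g, hg, hgb⟩
      trans := S.trans
      faith := S.faith
      dih := S.dih_all hn e
      semi := fun z a ha w h haw => by
        refine S.dual.rot_free (S.dual.dih_all hn e') (S.dual.HF_all' hn e') (x := b z) ?_ h haw
        rw [hstab]; exact ha
      semi' := fun z a ha w h haw =>
        S.rot_free (S.dih_all hn e) (S.HF_all' hn e) ha h (by rw [← hbs, haw])
      two_lt := S.two_lt
      k_lt := S.k_lt
      l_gt := S.l_gt
      eqn := S.eqn
      n_ge := hn
      max := by
        intro z H hH g hg hgz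
        rcases hprim _ (IsBlock.of_orbit hH) with h | h
        · exact absurd (h ⟨⟨g, hg⟩, rfl⟩ (mem_orbit_self z)) hgz
        · rw [eq_top_iff]
          intro f _
          obtain ⟨⟨j, hj⟩, hjz⟩ := (show f • z ∈ orbit H z by rw [h]; trivial)
          have h1 : j⁻¹ * f ∈ H := by
            apply hH
            rw [mem_stabilizer_iff, mul_smul, inv_smul_eq_iff]
            exact hjz.symm
          simpa using H.mul_mem hj h1 }
  exact T.false x

end SymAct
end Glue

/-! ### The symmetric design of the theorem -/

section Design
open MulAction

/-- The action of `G` on the blocks. -/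
@[reducible] def blockAct {Q : Type*} [Fintype Q] [DecidableEq Q] {𝓑 : Finset (Finset Q)}
    {G : Subgroup (Equiv.Perm Q)} (hAut : IsAutGroup G 𝓑) : MulAction G 𝓑 where
  smul g C := ⟨g • (C : Finset Q), hAut g g.2 C C.2⟩
  one_smul C := Subtype.ext (one_smul G (C : Finset Q))
  mul_smul g h C := Subtype.ext (mul_smul g h (C : Finset Q))

theorem card_filter_coe {Q : Type*} (𝓑 : Finset Q) (p : Q → Prop) [DecidablePred p]
    [DecidablePred fun C : 𝓑 => p C] :
    (Finset.univ.filter fun C : 𝓑 => p C).card = (𝓑.filter p).card := by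
  rw [← Finset.card_map (Function.Embedding.subtype _)]
  congr 1
  ext C
  simp only [Finset.mem_map, Finset.mem_filter, Finset.mem_univ, true_and,
    Function.Embedding.subtype_apply]
  constructor
  · rintro ⟨C, hC, rfl⟩; exact ⟨C.2, hC⟩
  · rintro ⟨h1, h2⟩; exact ⟨⟨C, h1⟩, h2, rfl⟩

/-- In a `2`-design every point lies in `r` blocks, where `r (k - 1) = λ (v - 1)`. -/
theorem IsDesign.repl {Q : Type*} [Fintype Q] [DecidableEq Q] {𝓑 : Finset (Finset Q)}
    {v k lam : ℕ} (hD : IsDesign 𝓑 v k lam) (x : Q) :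
    (𝓑.filter fun C => x ∈ C).card * (k - 1) = (v - 1) * lam := by
  classical
  have h := double_count (𝓑.filter fun C => x ∈ C) (Finset.univ.erase x) (fun C y => y ∈ C)
    (k - 1) lam ?_ ?_
  · rw [h, Finset.card_erase_of_mem (Finset.mem_univ x), Finset.card_univ, hD.card_points]
  · intro C hC
    obtain ⟨hC, hx⟩ := Finset.mem_filter.1 hC
    rw [← hD.blocks_card C hC, ← Finset.card_erase_of_mem hx]
    congr 1
    ext y
    simp
  · intro y hy
    rw [← hD.pair_blocks x y (Finset.ne_of_mem_erase hy).symm]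
    congr 1
    ext C
    simp [and_assoc]

/-- In a symmetric design every point lies in `k` blocks, and `k ^ 2 + λ = k + λ v`. -/
theorem IsDesign.params {Q : Type*} [Fintype Q] [DecidableEq Q] {𝓑 : Finset (Finset Q)}
    {v k lam : ℕ} (hD : IsDesign 𝓑 v k lam) (hsym : 𝓑.card = v) :
    (∀ x : Q, (𝓑.filter fun C => x ∈ C).card = k) ∧ k * k + lam = k + lam * v := by
  classical
  have hk := hD.two_lt_k
  have hv := hD.k_lt_v
  have hvQ := hD.card_points
  have hne : Nonempty Q := Fintype.card_pos_iff.1 (by omega)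
  obtain ⟨x0⟩ := hne
  have hr : ∀ x : Q, (𝓑.filter fun C => x ∈ C).card = (𝓑.filter fun C => x0 ∈ C).card := fun x =>
    Nat.eq_of_mul_eq_mul_right (show 0 < k - 1 by omega) ((hD.repl x).trans (hD.repl x0).symm)
  have h := double_count 𝓑 (Finset.univ : Finset Q) (fun C y => y ∈ C) k
    (𝓑.filter fun C => x0 ∈ C).card
    (fun C hC => by
      rw [← hD.blocks_card C hC]
      congr 1
      ext y
      simp)
    (fun y _ => by convert hr y)
  rw [hsym, Finset.card_univ, hvQ] at h
  have hk0 := Nat.eq_of_mul_eq_mul_left (show 0 < v by omega) h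
  refine ⟨fun x => by rw [hr, ← hk0], ?_⟩
  have h1 := hD.repl x0
  rw [← hk0] at h1
  obtain ⟨k', rfl⟩ : ∃ k', k = k' + 1 := ⟨k - 1, by omega⟩
  obtain ⟨v', rfl⟩ : ∃ v', v = v' + 1 := ⟨v - 1, by omega⟩
  simp only [Nat.add_sub_cancel] at h1
  nlinarith

/-- A symmetric design with a flag-transitive group `G` satisfies the self-dual axioms `SymAct`. -/
theorem symAct {Q : Type*} [Fintype Q] [DecidableEq Q] {𝓑 : Finset (Finset Q)} {v k lam : ℕ}
    (hD : IsDesign 𝓑 v k lam) (hsym : 𝓑.card = v) (hlam : 1 < lam)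
    {G : Subgroup (Equiv.Perm Q)} (hAut : IsAutGroup G 𝓑) (hflag : IsFlagTransitive G 𝓑) :
    letI := blockAct hAut
    SymAct G Q 𝓑 (fun x C => x ∈ (C : Finset Q)) k lam := by
  let _ := blockAct hAut
  classical
  obtain ⟨hr, heq⟩ := hD.params hsym
  have hk := hD.two_lt_k
  have hv := hD.k_lt_v
  have hvQ := hD.card_points
  have hlk : lam < k := by
    by_contra h
    push Not at h
    have : lam * (k + 2) ≤ lam * v := Nat.mul_le_mul_left _ (by omega)
    nlinarith
  have hcard : Fintype.card Q = Fintype.card 𝓑 := by rw [Fintype.card_coe, hsym, hvQ]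
  have hdeg : ∀ x : Q, (Finset.univ.filter fun C : 𝓑 => x ∈ (C : Finset Q)).card = k := fun x =>
    (card_filter_coe 𝓑 fun C => x ∈ C).trans (hr x)
  have hdeg' : ∀ C : 𝓑, (Finset.univ.filter fun x => x ∈ (C : Finset Q)).card = k := fun C => by
    rw [← hD.blocks_card C C.2]
    congr 1
    ext y
    simp
  have hpair : ∀ x x' : Q, x ≠ x' →
      (Finset.univ.filter fun C : 𝓑 => x ∈ (C : Finset Q) ∧ x' ∈ (C : Finset Q)).card = lam :=
    fun x x' h => (card_filter_coe 𝓑 fun C => x ∈ C ∧ x' ∈ C).trans (hD.pair_blocks x x' h)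
  refine
    { inv := fun g x C h => Finset.smul_mem_smul_finset h
      card_eq := hcard
      deg := fun x => by convert hdeg x
      deg' := fun C => by convert hdeg' C
      pair := fun x x' h => by convert hpair x x' h
      pair' := fun C C' h => by
        refine dual_pair (fun (x : Q) (C : 𝓑) => x ∈ (C : Finset Q)) k lam hcard ?_ ?_ ?_
          (by omega) hlk C C' h
        · intro x; convert hdeg x
        · intro C; convert hdeg' C
        · intro x x' h; convert hpair x x' h
      flag := fun x C x' C' h h' => by
        obtain ⟨g, hg, h1, h2⟩ := hflag C C.2 C' C'.2 x h x' h'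
        exact ⟨⟨g, hg⟩, h1, Subtype.ext h2⟩
      faith := fun g h => Subtype.ext (Equiv.ext h)
      faith' := fun g h => by
        apply Subtype.ext
        apply Equiv.ext
        intro x
        by_contra hx
        -- the `k` blocks through `x` would all contain `g x` as well
        have h1 := hpair x (g • x) (fun h' => hx h'.symm)
        have h2 := hdeg x
        have h3 : (Finset.univ.filter fun C : 𝓑 => x ∈ (C : Finset Q)) ⊆
            Finset.univ.filter fun C : 𝓑 => x ∈ (C : Finset Q) ∧ g • x ∈ (C : Finset Q) := by
          intro C hC
          have hC := (Finset.mem_filter.1 hC).2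
          refine Finset.mem_filter.2 ⟨Finset.mem_univ _, hC, ?_⟩
          have h4 : g • (C : Finset Q) = C := congrArg Subtype.val (h C)
          rw [← h4]
          exact Finset.smul_mem_smul_finset hC
        have h4 := Finset.card_le_card h3
        omega
      two_lt := hk
      k_lt := by omega
      l_gt := hlam
      eqn := by rw [hvQ]; exact heq }

/-- Two permutation representations with the same kernel have isomorphic images. -/
theorem range_equiv {H K L : Type*} [Group H] [Group K] [Group L] (f : H →* K) (g : H →* L)
    (h : f.ker = g.ker) : Nonempty (f.range ≃* g.range) :=
  ⟨(QuotientGroup.quotientKerEquivRange f).symm.trans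
    ((QuotientGroup.quotientMulEquivOfEq h).trans (QuotientGroup.quotientKerEquivRange g))⟩

end Design

/-- **Theorem 1.1 (dihedral case).** For a symmetric design with `λ > 1` and a
flag-transitive automorphism group `G`, the conditions (a) `G_x ≅ D_{2n}`,
(b) `G_B ≅ D_{2n}`, (c) `G_x^{D(x)} ≅ D_{2n}`, (d) `G_B^B ≅ D_{2n}`, and
(e) the block set is generated by a faithful suborbit `Δ` of a point stabilizer
isomorphic to `D_{2n}`, are all equivalent; and if they hold, then `G_x` and `G_B` are
conjugate in `G`, both local actions are faithful, and `G` is imprimitive on points and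
on blocks. -/
theorem stmt_0 (𝓑 : Finset (Finset P)) (v k lam n : ℕ)
    (hD : IsDesign 𝓑 v k lam) (hsym : 𝓑.card = v) (hlam : 1 < lam)
    (G : Subgroup (Equiv.Perm P)) (hAut : IsAutGroup G 𝓑)
    (hflag : IsFlagTransitive G 𝓑) (hn : 3 ≤ n)
    (x : P) (B : Finset P) (hB : B ∈ 𝓑) :
    List.TFAE [
      -- (a) G_x ≅ D_{2n}
      Nonempty (MulAction.stabilizer G x ≃* DihedralGroup n),
      -- (b) G_B ≅ D_{2n}
      Nonempty (MulAction.stabilizer G B ≃* DihedralGroup n),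
      -- (c) the permutation group induced by G_x on the set D(x) of blocks
      -- through x is isomorphic to D_{2n}
      ∃ φ : MulAction.stabilizer G x →* Equiv.Perm (𝓑.filter fun C => x ∈ C),
        (∀ (h : MulAction.stabilizer G x) (C : (𝓑.filter fun C => x ∈ C)),
          (φ h C : Finset P) = h • (C : Finset P)) ∧
        Nonempty (φ.range ≃* DihedralGroup n),
      -- (d) the permutation group induced by G_B on B is isomorphic to D_{2n}
      ∃ φ : MulAction.stabilizer G B →* Equiv.Perm B,
        (∀ (h : MulAction.stabilizer G B) (a : B), (φ h a : P) = h • (a : P)) ∧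
        Nonempty (φ.range ≃* DihedralGroup n),
      -- (e) the block set is generated by a faithful suborbit
      ∃ (y : P) (Δ : Finset P),
        (∃ z : P, (Δ : Set P) = MulAction.orbit (MulAction.stabilizer G y) z) ∧
        (∀ g ∈ MulAction.stabilizer G y, (∀ a ∈ Δ, g • a = a) → g = 1) ∧
        (𝓑 : Set (Finset P)) = Set.range (fun g : G => g • Δ) ∧
        Nonempty (MulAction.stabilizer G y ≃* DihedralGroup n)] ∧
    (Nonempty (MulAction.stabilizer G x ≃* DihedralGroup n) →
      -- G_x and G_B are conjugate in G
      (∃ g : G, MulAction.stabilizer G B =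
          (MulAction.stabilizer G x).map (MulAut.conj g).toMonoidHom) ∧
      -- G_x acts faithfully on D(x)
      (∀ g ∈ MulAction.stabilizer G x,
        (∀ C ∈ (𝓑.filter fun C => x ∈ C), g • C = C) → g = 1) ∧
      -- G_B acts faithfully on B
      (∀ g ∈ MulAction.stabilizer G B, (∀ a ∈ B, g • a = a) → g = 1) ∧
      -- G is imprimitive on points
      (MulAction.IsPretransitive G P ∧ ¬ IsPrimitiveAction G P) ∧
      -- G is imprimitive on blocks
      (∃ ψ : G →* Equiv.Perm 𝓑,
        (∀ (g : G) (C : 𝓑), (ψ g C : Finset P) = g • (C : Finset P)) ∧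
        MulAction.IsPretransitive ψ.range 𝓑 ∧ ¬ IsPrimitiveAction ψ.range 𝓑)) := by
  classical
  let _ : MulAction G 𝓑 := blockAct hAut
  have S : SymAct G P 𝓑 (fun x C => x ∈ (C : Finset P)) k lam := symAct hD hsym hlam hAut hflag
  let Y : 𝓑 := ⟨B, hB⟩
  have hst : MulAction.stabilizer G Y = MulAction.stabilizer G B := by
    ext g
    rw [MulAction.mem_stabilizer_iff, MulAction.mem_stabilizer_iff]
    exact Subtype.ext_iff
  have hab : Nonempty (MulAction.stabilizer G x ≃* DihedralGroup n) ↔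
      Nonempty (MulAction.stabilizer G B ≃* DihedralGroup n) := by
    rw [← hst]
    exact ⟨fun ⟨e⟩ => S.equiv_dual hn e Y, fun ⟨e⟩ => S.dual.equiv_dual hn e x⟩
  have hac := S.local_iff hn x
  have hbd : Nonempty (MulAction.stabilizer G B ≃* DihedralGroup n) ↔
      Nonempty ((S.dual.locRep Y).range ≃* DihedralGroup n) := by
    rw [← hst]
    exact S.dual.local_iff hn Y
  refine ⟨?_, ?_⟩
  · tfae_have 1 ↔ 2 := hab
    tfae_have 1 → 3 := by
      intro h
      obtain ⟨e⟩ := hac.1 h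
      let ε : {C : 𝓑 // x ∈ (C : Finset P)} ≃ (𝓑.filter fun C => x ∈ C) :=
        { toFun := fun C => ⟨C.1.1, Finset.mem_filter.2 ⟨C.1.2, C.2⟩⟩
          invFun := fun C => ⟨⟨C.1, (Finset.mem_filter.1 C.2).1⟩, (Finset.mem_filter.1 C.2).2⟩
          left_inv := fun _ => rfl
          right_inv := fun _ => rfl }
      refine ⟨ε.permCongrHom.toMonoidHom.comp (S.locRep x), fun h C => rfl, ?_⟩
      obtain ⟨e'⟩ := range_equiv (ε.permCongrHom.toMonoidHom.comp (S.locRep x)) (S.locRep x) (by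
        ext g
        simp [MonoidHom.mem_ker])
      exact ⟨e'.trans e⟩
    tfae_have 3 → 1 := by
      rintro ⟨φ, hφ, ⟨e⟩⟩
      apply hac.2
      obtain ⟨e'⟩ := range_equiv (S.locRep x) φ (by
        ext g
        rw [MonoidHom.mem_ker, MonoidHom.mem_ker]
        constructor
        · intro h
          ext C : 2
          rw [hφ]
          have hC := Finset.mem_filter.1 C.2
          exact congrArg (fun p => ((p ⟨⟨C.1, hC.1⟩, hC.2⟩ : {C : 𝓑 // x ∈ (C : Finset P)}).1.1)) h
        · intro h
          ext C : 3
          have := hφ g ⟨C.1.1, Finset.mem_filter.2 ⟨C.1.2, C.2⟩⟩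
          rw [h] at this
          exact this.symm)
      exact ⟨e'.trans e⟩
    tfae_have 2 → 4 := by
      intro h
      obtain ⟨e⟩ := hbd.1 h
      refine ⟨(S.dual.locRep Y).comp (MulEquiv.subgroupCongr hst.symm).toMonoidHom,
        fun h a => rfl, ?_⟩
      have : ((S.dual.locRep Y).comp (MulEquiv.subgroupCongr hst.symm).toMonoidHom).range =
          (S.dual.locRep Y).range :=
        by
        rw [MonoidHom.range_comp, MonoidHom.range_eq_top.2 (MulEquiv.subgroupCongr hst.symm).surjective,
          MonoidHom.range_eq_map]
      rw [this]
      exact ⟨e⟩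
    tfae_have 4 → 2 := by
      rintro ⟨φ, hφ, ⟨e⟩⟩
      apply hbd.2
      obtain ⟨e'⟩ := range_equiv (S.dual.locRep Y)
        (φ.comp (MulEquiv.subgroupCongr hst).toMonoidHom) (by
        ext g
        rw [MonoidHom.mem_ker, MonoidHom.mem_ker]
        constructor
        · intro h
          ext a : 2
          rw [MonoidHom.comp_apply, hφ]
          exact congrArg (fun p => ((p a : {a : P // a ∈ (Y : Finset P)}) : P)) h
        · intro h
          ext a : 2
          have := hφ (MulEquiv.subgroupCongr hst g) a
          rw [MonoidHom.comp_apply] at h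
          erw [h] at this
          exact this.symm)
      have : (φ.comp (MulEquiv.subgroupCongr hst).toMonoidHom).range = φ.range :=
        by
        rw [MonoidHom.range_comp, MonoidHom.range_eq_top.2 (MulEquiv.subgroupCongr hst).surjective,
          MonoidHom.range_eq_map]
      rw [this] at e'
      exact ⟨e'.trans e⟩
    tfae_have 1 → 5 := by
      rintro ⟨e⟩
      obtain ⟨y, hy⟩ := S.stab_eq hn e Y
      obtain ⟨e'⟩ := S.equiv_dual hn e Y
      have hB0 : 0 < B.card := by
        have h1 := hD.blocks_card B hB
        have h2 := hD.two_lt_k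
        omega
      obtain ⟨z, hz⟩ := Finset.card_pos.1 hB0
      refine ⟨y, B, ⟨z, ?_⟩, ?_, ?_, S.equiv_all e y⟩
      · ext w
        rw [MulAction.mem_orbit_iff]
        constructor
        · intro hw
          obtain ⟨g, h1, h2⟩ := S.flag z Y w Y hz hw
          exact ⟨⟨g, by rw [← hy]; exact h2⟩, h1⟩
        · rintro ⟨⟨g, hg⟩, rfl⟩
          rw [← hy] at hg
          have := S.inv g z Y hz
          rwa [MulAction.mem_stabilizer_iff.1 hg] at this
      · intro g hg h
        rw [← hy] at hg
        exact S.dual.kernel_trivial (S.dual.HF_all' hn e') Y g hg h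
      · ext C
        constructor
        · intro hC
          obtain ⟨g, hg⟩ := S.dual.trans Y ⟨C, hC⟩
          exact ⟨g, congrArg Subtype.val hg⟩
        · rintro ⟨g, rfl⟩
          exact hAut g g.2 B hB
    tfae_have 5 → 1 := by
      rintro ⟨y, Δ, -, -, -, ⟨e⟩⟩
      exact S.equiv_all e x
    tfae_finish
  · rintro ⟨e⟩
    obtain ⟨e'⟩ := S.equiv_dual hn e Y
    refine ⟨?_, ?_, ?_, ⟨⟨S.trans⟩, fun h => S.not_prim hn e h.2⟩, ?_⟩
    · rw [← hst]
      exact S.stab_conj hn e Y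
    · intro g hg h
      refine S.kernel_trivial (S.HF_all' hn e) x g hg fun C hC => Subtype.ext ?_
      exact h C (Finset.mem_filter.2 ⟨C.2, hC⟩)
    · intro g hg h
      rw [← hst] at hg
      exact S.dual.kernel_trivial (S.dual.HF_all' hn e') Y g hg h
    · refine ⟨MulAction.toPermHom G 𝓑, fun g C => rfl, ⟨fun C C' => ?_⟩, fun h => ?_⟩
      · obtain ⟨g, hg⟩ := S.dual.trans C C'
        exact ⟨⟨_, g, rfl⟩, hg⟩
      · refine S.dual.not_prim hn e' fun D hD => h.2 D ?_
        rintro ⟨_, g, rfl⟩ ⟨_, g', rfl⟩ hne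
        exact hD hne
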